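/- For every η₁ > 0 there exist an integer n₀ = n₀(η₁) and a real η₂ = η₂(η₁) > 0 such that the following holds: every oriented graph G on n ≥ n₀ vertices with minimum semidegree δ⁰(G) ≥ (1/2 − η₂)n contains at least (1/2 − η₁)n pairwise edge-disjoint Hamilton cycles. -/

import Mathlib

/-- The outdegree of a vertex `x` in the digraph with adjacency relation `G`. -/
noncomputable def outDeg {V : Type*} (G : V → V → Prop) (x : V) : ℕ :=
  Nat.card {y : V // G x y}

/-- The indegree of a vertex `x` in the digraph with adjacency relation `G`. -/
noncomputable def inDeg {V : Type*} (G : V → V → Prop) (x : V) : ℕ :=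
  Nat.card {y : V // G y x}

/-- An oriented graph: no loops and no 2-cycles. -/
def IsOriented {V : Type*} (G : V → V → Prop) : Prop :=
  ∀ x y : V, G x y → ¬ G y x

/-- `f` is a Hamilton cycle of the digraph `G`. -/
def IsHamCycle {V : Type*} [Fintype V] (G : V → V → Prop)
    (f : ZMod (Fintype.card V) → V) : Prop :=
  Function.Bijective f ∧ ∀ i, G (f i) (f (i + 1))

open scoped Finset

/-!
Label the vertices at random by cells. The labels assign to each of many groups a core, i.e. a
set of vertices on which the graph is nearly a regular tournament, and reserve edges inside the core
and between it and the other vertices, disjointly for different groups. Most of the remaining edges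
are distributed to the groups, and those of a group along which the level in `ZMod s` increases by a
fixed `e ≠ 0` form an almost regular digraph outside the core. König's theorem splits this digraph
into matchings in the bipartite sense. As `s` is prime, the levels along a component of such a
matching run through all of `ZMod s`, so breaking it at level `e` leaves a linear forest with few
paths.

The forests are completed to Hamilton cycles one after another. The paths outside the core are
extended into it. Inside the core, independent sets are small because the neighbours of any vertex
nearly exhaust it, so by the Gallai–Milgram theorem few paths cover the vertices, and these are
linked up through a matching chosen beforehand. The vertices of this matching which remain unused
are absorbed into the edges of a second matching. The reserved edges last until the end: a group has
few forests in comparison with the size of its core, and a vertex outside the core needs a reserved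
edge only for those few forests in which it is an end or a start of a path.
-/

section PathSystems

variable {V : Type*} {D : V → V → Prop}

/-- A nonempty sequence of vertices following the edges of the digraph `D`. Distinctness of the
vertices is always stated separately, for all the paths of a system at once. -/
def IsPath (D : V → V → Prop) (l : List V) : Prop := l ≠ [] ∧ l.IsChain D

/-- The vertices of a system of paths, each given by its first vertex and the rest. -/
def pathVerts (L : List (V × List V)) : List V := L.flatMap fun p => p.1 :: p.2

/-- A system of disjoint paths in the digraph `D`, each given by its first vertex and the rest. -/
structure IsPathSystem (D : V → V → Prop) (L : List (V × List V)) : Prop where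
  isChain : ∀ p ∈ L, (p.1 :: p.2).IsChain D
  nodup : (pathVerts L).Nodup

theorem pathVerts_cons (x : V) (t : List V) (L : List (V × List V)) :
    pathVerts ((x, t) :: L) = x :: (t ++ pathVerts L) := rfl

theorem pathVerts_map_singleton (l : List V) : pathVerts (l.map fun x => (x, [])) = l := by
  induction l with
  | nil => rfl
  | cons x l ih => rw [List.map_cons, pathVerts_cons, ih, List.nil_append]

theorem pathVerts_perm {L L' : List (V × List V)} (h : L.Perm L') :
    (pathVerts L).Perm (pathVerts L') := h.flatMap_right _

theorem map_fst_sublist_pathVerts (L : List (V × List V)) :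
    (L.map Prod.fst).Sublist (pathVerts L) := by
  induction L with
  | nil => exact .slnil
  | cons p L ih => exact (ih.trans (List.sublist_append_right _ _)).cons_cons _

theorem exists_perm_cons_of_mem_map_fst {L : List (V × List V)} {v : V}
    (h : v ∈ L.map Prod.fst) : ∃ t L₀, L.Perm ((v, t) :: L₀) := by
  classical
  obtain ⟨⟨_, t⟩, hp, rfl⟩ := List.mem_map.1 h
  exact ⟨t, _, List.perm_cons_erase hp⟩

theorem exists_rel_of_mem_tail_of_isChain {x y : V} {l : List V} (h : (x :: l).IsChain D)
    (hy : y ∈ l) : ∃ z ∈ x :: l, D z y := by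
  induction l generalizing x with
  | nil => simp at hy
  | cons a l ih =>
    rw [List.isChain_cons_cons] at h
    rcases List.mem_cons.1 hy with rfl | hy
    · exact ⟨x, List.mem_cons_self, h.1⟩
    · obtain ⟨z, hz, hzy⟩ := ih h.2 hy
      exact ⟨z, List.mem_cons_of_mem _ hz, hzy⟩

namespace IsPathSystem

variable {L L' : List (V × List V)} {v w : V} {l : List V}

theorem nodup_map_fst (h : IsPathSystem D L) : (L.map Prod.fst).Nodup :=
  h.nodup.sublist (map_fst_sublist_pathVerts L)

theorem perm (h : IsPathSystem D L) (hL : L.Perm L') : IsPathSystem D L' where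
  isChain p hp := h.isChain p (hL.mem_iff.2 hp)
  nodup := (pathVerts_perm hL).nodup_iff.1 h.nodup

theorem cons_singleton (h : IsPathSystem D L) (hv : v ∉ pathVerts L) :
    IsPathSystem D ((v, []) :: L) where
  isChain := List.forall_mem_cons.2 ⟨List.isChain_singleton _, h.isChain⟩
  nodup := List.nodup_cons.2 ⟨hv, h.nodup⟩

theorem prepend (h : IsPathSystem D ((w, l) :: L)) (hv : v ∉ pathVerts ((w, l) :: L))
    (hvw : D v w) : IsPathSystem D ((v, w :: l) :: L) where
  isChain :=
    have hc := List.forall_mem_cons.1 h.isChain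
    List.forall_mem_cons.2 ⟨List.isChain_cons_cons.2 ⟨hvw, hc.1⟩, hc.2⟩
  nodup := List.nodup_cons.2 ⟨hv, h.nodup⟩

theorem behead (h : IsPathSystem D ((v, w :: l) :: L)) :
    D v w ∧ v ∉ pathVerts ((w, l) :: L) ∧ IsPathSystem D ((w, l) :: L) := by
  have hc := List.forall_mem_cons.1 h.isChain
  have hvw := List.isChain_cons_cons.1 hc.1
  have hn := List.nodup_cons.1 h.nodup
  exact ⟨hvw.1, hn.1, List.forall_mem_cons.2 ⟨hvw.2, hc.2⟩, hn.2⟩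

theorem merge (h : IsPathSystem D ((v, []) :: (w, l) :: L)) (hvw : D v w) :
    IsPathSystem D ((v, w :: l) :: L) :=
  have hn := List.nodup_cons.1 h.nodup
  prepend ⟨(List.forall_mem_cons.1 h.isChain).2, hn.2⟩ hn.1 hvw

end IsPathSystem

/-- The inductive statement of the Gallai–Milgram theorem: the path system `L` can be replaced by
one on the same vertices, starting in vertices where paths of `L` start, which has exactly as many
paths as some independent set has elements. -/
def HasIndependentRefinement (D : V → V → Prop) (L : List (V × List V)) : Prop :=
  ∃ L', IsPathSystem D L' ∧ (pathVerts L').Perm (pathVerts L) ∧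
    L'.map Prod.fst ⊆ L.map Prod.fst ∧
    ∃ I : Finset V, (∀ x ∈ I, x ∈ pathVerts L) ∧ #I = L'.length ∧
      (I : Set V).Pairwise fun x y => ¬ D x y

namespace HasIndependentRefinement

variable {L L' : List (V × List V)} {v v₁ v₂ : V} {l l₂ : List V}

theorem mono (h : HasIndependentRefinement D L') (hV : (pathVerts L').Perm (pathVerts L))
    (hfst : L'.map Prod.fst ⊆ L.map Prod.fst) : HasIndependentRefinement D L := by
  obtain ⟨P, hP, hPV, hPfst, I, hIV, hI⟩ := h
  exact ⟨P, hP, hPV.trans hV, fun x hx => hfst (hPfst hx), I, fun x hx => hV.mem_iff.1 (hIV x hx),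
    hI⟩

theorem of_pairwise_fst (hL : IsPathSystem D L)
    (hind : {x | x ∈ L.map Prod.fst}.Pairwise fun x y => ¬ D x y) :
    HasIndependentRefinement D L := by
  classical
  refine ⟨L, hL, .refl _, fun _ h => h, (L.map Prod.fst).toFinset, fun x hx => ?_, ?_, ?_⟩
  · exact (map_fst_sublist_pathVerts L).subset (List.mem_toFinset.1 hx)
  · rw [List.toFinset_card_of_nodup hL.nodup_map_fst, List.length_map]
  · simpa only [List.coe_toFinset] using hind

/-- The main step of the induction: a refinement of the system in which the first vertex `v₁` of
a path is deleted either has a path to which `v₁` can be prepended, or is so short that adding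
`v₁` as a path of its own still decreases the number of paths. -/
theorem of_behead (hL : IsPathSystem D ((v₁, v :: l) :: (v₂, l₂) :: L)) (hD : D v₁ v₂)
    (hbehead : HasIndependentRefinement D ((v, l) :: (v₂, l₂) :: L))
    (hshort : ∀ L', IsPathSystem D L' →
      (pathVerts L').Perm (pathVerts ((v₁, v :: l) :: (v₂, l₂) :: L)) →
      L'.length < ((v₁, v :: l) :: (v₂, l₂) :: L).length → HasIndependentRefinement D L') :
    HasIndependentRefinement D ((v₁, v :: l) :: (v₂, l₂) :: L) := by
  obtain ⟨hv, hv₁, -⟩ := hL.behead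
  obtain ⟨L', hL', hV, hfst, I, hIV, hIcard, hI⟩ := hbehead
  have hv₁' : v₁ ∉ pathVerts L' := fun h => hv₁ (hV.mem_iff.1 h)
  simp only [List.map_cons] at hfst
  have prepend : ∀ w, D v₁ w → w ∈ L'.map Prod.fst →
      (∀ x ∈ L'.map Prod.fst, x ≠ w → x = v₂ ∨ x ∈ L.map Prod.fst) →
      HasIndependentRefinement D ((v₁, v :: l) :: (v₂, l₂) :: L) := by
    intro w hw hwL hne
    obtain ⟨t, L₁, hp⟩ := exists_perm_cons_of_mem_map_fst hwL
    have hsys := hL'.perm hp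
    refine ⟨(v₁, w :: t) :: L₁,
      hsys.prepend (fun h => hv₁' ((pathVerts_perm hp).mem_iff.2 h)) hw,
      .cons _ ((pathVerts_perm hp).symm.trans hV), ?_, I,
      fun x hx => List.mem_cons_of_mem _ (hIV x hx), hIcard.trans hp.length_eq, hI⟩
    refine List.cons_subset.2 ⟨List.mem_cons_self, fun x hx => List.mem_cons_of_mem _ ?_⟩
    refine List.mem_cons.2 (hne x ((hp.map _).mem_iff.2 (List.mem_cons_of_mem _ hx)) ?_)
    rintro rfl
    exact (List.nodup_cons.1 hsys.nodup_map_fst).1 hx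
  by_cases hvL : v ∈ L'.map Prod.fst
  · exact prepend v hv hvL fun x hx hxv =>
      List.mem_cons.1 ((List.mem_cons.1 (hfst hx)).resolve_left hxv)
  have hfst₂ : L'.map Prod.fst ⊆ v₂ :: L.map Prod.fst := fun x hx =>
    (List.mem_cons.1 (hfst hx)).resolve_left fun h => hvL (h ▸ hx)
  by_cases hv₂L : v₂ ∈ L'.map Prod.fst
  · exact prepend v₂ hD hv₂L fun x hx _ => List.mem_cons.1 (hfst₂ hx)
  have hfst₀ : L'.map Prod.fst ⊆ L.map Prod.fst := fun x hx =>
    (List.mem_cons.1 (hfst₂ hx)).resolve_left fun h => hv₂L (h ▸ hx)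
  have hle := (List.subperm_of_subset hL'.nodup_map_fst hfst₀).length_le
  simp only [List.length_map] at hle
  have hV' := hV.cons v₁
  refine (hshort ((v₁, []) :: L') (hL'.cons_singleton hv₁') hV' ?_).mono hV' ?_
  · simp only [List.length_cons]; omega
  · exact List.cons_subset_cons _ fun x hx => List.mem_cons_of_mem _ (hfst₀ hx)

end HasIndependentRefinement

theorem exists_perm_of_not_pairwise_fst {L : List (V × List V)}
    (h : ¬ {x | x ∈ L.map Prod.fst}.Pairwise fun x y => ¬ D x y) :
    ∃ v₁ l₁ v₂ l₂ L₀, L.Perm ((v₁, l₁) :: (v₂, l₂) :: L₀) ∧ D v₁ v₂ := by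
  simp only [Set.Pairwise, Set.mem_ofPred_eq] at h
  push Not at h
  obtain ⟨v₁, h₁, v₂, h₂, hne, hD⟩ := h
  obtain ⟨l₁, L₁, hL₁⟩ := exists_perm_cons_of_mem_map_fst h₁
  have hv₂ : v₂ ∈ L₁.map Prod.fst :=
    (List.mem_cons.1 ((hL₁.map Prod.fst).mem_iff.1 h₂)).resolve_left hne.symm
  obtain ⟨l₂, L₀, hL₀⟩ := exists_perm_cons_of_mem_map_fst hv₂
  exact ⟨v₁, l₁, v₂, l₂, L₀, hL₁.trans (hL₀.cons _), hD⟩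

theorem IsPathSystem.hasIndependentRefinement {L : List (V × List V)} (hL : IsPathSystem D L) :
    HasIndependentRefinement D L := by
  induction hn : (pathVerts L).length + L.length using Nat.strong_induction_on generalizing L with
  | _ n ih =>
    by_cases hind : {x | x ∈ L.map Prod.fst}.Pairwise fun x y => ¬ D x y
    · exact .of_pairwise_fst hL hind
    obtain ⟨v₁, l₁, v₂, l₂, L₀, hperm, hD⟩ := exists_perm_of_not_pairwise_fst hind
    have hV := pathVerts_perm hperm
    have hsys := hL.perm hperm
    have hlen : (pathVerts L).length + L.length = _ :=
      congrArg₂ (· + ·) hV.length_eq hperm.length_eq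
    refine .mono ?_ hV.symm (hperm.map Prod.fst).symm.subset
    cases l₁ with
    | nil =>
      refine (ih _ ?_ (hsys.merge hD) rfl).mono (.refl _) (by simp)
      simp only [pathVerts_cons, List.length_cons, List.length_append] at hlen ⊢
      omega
    | cons v l =>
      refine .of_behead hsys hD (ih _ ?_ hsys.behead.2.2 rfl) fun L' hL' hV' hlt =>
        ih _ ?_ hL' rfl
      · simp only [pathVerts_cons, List.length_cons, List.length_append] at hlen ⊢
        omega
      · rw [hV'.length_eq]
        omega

theorem exists_path_cover_of_card_independent_le (D : V → V → Prop) (R : Finset V) (α : ℕ)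
    (hα : ∀ I ⊆ R, (I : Set V).Pairwise (fun x y => ¬ D x y) → #I ≤ α) :
    ∃ L : List (List V), (∀ l ∈ L, IsPath D l) ∧ L.flatten.Perm R.toList ∧ L.length ≤ α := by
  have hV := pathVerts_map_singleton R.toList
  have hsys : IsPathSystem D (R.toList.map fun x => (x, [])) :=
    ⟨by simp, hV.symm ▸ R.nodup_toList⟩
  obtain ⟨L, hL, hLV, -, I, hIV, hIcard, hI⟩ := hsys.hasIndependentRefinement
  rw [hV] at hLV hIV
  refine ⟨L.map fun p => p.1 :: p.2, ?_, ?_, ?_⟩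
  · exact List.forall_mem_map.2 fun p hp => ⟨List.cons_ne_nil _ _, hL.isChain p hp⟩
  · rwa [pathVerts, List.flatMap_def] at hLV
  · rw [List.length_map, ← hIcard]
    exact hα I (fun x hx => Finset.mem_toList.1 (hIV x hx)) hI

end PathSystems

section LinearForests

variable {V : Type*}

/-- A set of edges forming disjoint paths, encoded as a partial successor map. A cycle is excluded
by a function that increases along the edges. -/
structure IsLinearForest (M : V → Option V) : Prop where
  inj : ∀ v v' w, M v = some w → M v' = some w → v = v'
  acyclic : ∃ ρ : V → ℕ, ∀ v w, M v = some w → ρ v < ρ w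

open Classical in
/-- `L` lists the components of the restriction to `T` of the linear forest `M`. -/
structure IsForestDecomposition (M : V → Option V) (T : Finset V) (L : List (V × List V)) :
    Prop where
  sys : IsPathSystem (fun v w => M v = some w) L
  perm : (pathVerts L).Perm T.toList
  last : ∀ p ∈ L, ∀ x ∈ (p.1 :: p.2).getLast?, M x = none
  first : ∀ p ∈ L, ∀ v ∈ T, M v ≠ some p.1
  length : L.length = #{v ∈ T | M v = none}

namespace IsForestDecomposition

variable {M : V → Option V} {T : Finset V} {L : List (V × List V)} {a w : V}

theorem notMem_pathVerts (h : IsForestDecomposition M T L) (ha : a ∉ T) : a ∉ pathVerts L :=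
  fun hL => ha (Finset.mem_toList.1 (h.perm.mem_iff.1 hL))

theorem mem_map_fst (h : IsForestDecomposition M T L) (hM : IsLinearForest M) (ha : a ∉ T)
    (hw : w ∈ T) (haw : M a = some w) : w ∈ L.map Prod.fst := by
  obtain ⟨⟨x, t⟩, hp, hwp⟩ := List.mem_flatMap.1 (h.perm.mem_iff.2 (Finset.mem_toList.2 hw))
  rcases List.mem_cons.1 hwp with rfl | hwt
  · exact List.mem_map_of_mem hp
  · obtain ⟨v, hv, hvw⟩ := exists_rel_of_mem_tail_of_isChain (h.sys.isChain _ hp) hwt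
    rw [← hM.inj _ _ _ haw hvw] at hv
    exact absurd (List.mem_flatMap.2 ⟨_, hp, hv⟩) (h.notMem_pathVerts ha)

open Classical in
theorem insert_of_none (h : IsForestDecomposition M T L) (ha : a ∉ T)
    (hno : ∀ v ∈ insert a T, M v ≠ some a) (hMa : M a = none) :
    IsForestDecomposition M (insert a T) ((a, []) :: L) where
  sys := h.sys.cons_singleton (h.notMem_pathVerts ha)
  perm := (h.perm.cons a).trans (Finset.toList_insert ha).symm
  last := List.forall_mem_cons.2 ⟨by simpa using hMa, h.last⟩
  first := by
    refine List.forall_mem_cons.2 ⟨hno, fun p hp => ?_⟩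
    exact (Finset.forall_mem_insert _ _ _).2 ⟨by simp [hMa], h.first p hp⟩
  length := by
    rw [Finset.filter_insert, if_pos hMa, Finset.card_insert_of_notMem (by simp [ha]), ← h.length,
      List.length_cons]

open Classical in
theorem exists_insert_of_some (h : IsForestDecomposition M T L) (hM : IsLinearForest M)
    (ha : a ∉ T) (hno : ∀ v ∈ insert a T, M v ≠ some a) (hw : w ∈ T) (haw : M a = some w) :
    ∃ L', IsForestDecomposition M (insert a T) L' := by
  obtain ⟨t, L₀, hL⟩ := exists_perm_cons_of_mem_map_fst (h.mem_map_fst hM ha hw haw)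
  have hall {P : V × List V → Prop} (hP : ∀ p ∈ L, P p) : P (w, t) ∧ ∀ p ∈ L₀, P p :=
    List.forall_mem_cons.1 fun p hp => hP p (hL.mem_iff.2 hp)
  have hV := pathVerts_perm hL
  have hsys := h.sys.perm hL
  refine ⟨(a, w :: t) :: L₀, ?_, ?_, ?_, ?_, ?_⟩
  · exact hsys.prepend (fun hx => h.notMem_pathVerts ha (hV.mem_iff.2 hx)) haw
  · exact ((hV.symm.trans h.perm).cons a).trans (Finset.toList_insert ha).symm
  · refine List.forall_mem_cons.2 ⟨?_, (hall h.last).2⟩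
    rw [List.getLast?_cons_cons]
    exact (hall h.last).1
  · refine List.forall_mem_cons.2 ⟨hno, fun p hp => ?_⟩
    refine (Finset.forall_mem_insert _ _ _).2 ⟨?_, (hall h.first).2 p hp⟩
    rw [haw, ne_eq, Option.some_inj]
    rintro rfl
    exact (List.nodup_cons.1 hsys.nodup_map_fst).1 (List.mem_map.2 ⟨p, hp, rfl⟩)
  · rw [Finset.filter_insert, if_neg (by simp [haw]), ← h.length, hL.length_eq]
    rfl

end IsForestDecomposition

theorem IsLinearForest.exists_isForestDecomposition {M : V → Option V} (hM : IsLinearForest M)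
    (T : Finset V) (hT : ∀ v ∈ T, ∀ w, M v = some w → w ∈ T) :
    ∃ L, IsForestDecomposition M T L := by
  classical
  obtain ⟨ρ, hρ⟩ := hM.acyclic
  induction T using Finset.induction_on_min_value ρ with
  | empty => exact ⟨[], ⟨by simp, by simp [pathVerts]⟩, by simp [pathVerts], by simp, by simp,
      by simp⟩
  | insert a s ha hmin ih =>
    have hnot_to : ∀ v ∈ insert a s, M v ≠ some a := by
      refine (Finset.forall_mem_insert _ _ _).2 ⟨fun h => lt_irrefl _ (hρ _ _ h), fun v hv h => ?_⟩
      exact (hmin v hv).not_gt (hρ v a h)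
    have hs : ∀ v ∈ insert a s, ∀ w, M v = some w → w ∈ s := fun v hv w hw =>
      Finset.mem_of_mem_insert_of_ne (hT v hv w hw) fun h => hnot_to v hv (h ▸ hw)
    obtain ⟨L, hL⟩ := ih fun v hv => hs v (Finset.mem_insert_of_mem hv)
    cases hMa : M a with
    | none => exact ⟨_, hL.insert_of_none ha hnot_to hMa⟩
    | some w =>
      exact hL.exists_insert_of_some hM ha hnot_to (hs a (Finset.mem_insert_self _ _) w hMa) hMa

end LinearForests

section Linking

variable {β : Type*} {S : β → β → Prop} {A B : β → Prop}

/-- The sequence `b` may follow the sequence `a` in a path of the digraph `S`. -/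
def LinksTo (S : β → β → Prop) (a b : List β) : Prop :=
  ∀ x ∈ a.getLast?, ∀ y ∈ b.head?, S x y

/-- The sequence `l` is nonempty and its first element satisfies `A`. -/
def HeadIn (A : β → Prop) (l : List β) : Prop := ∃ x ∈ l.head?, A x

/-- The sequence `l` is nonempty and its last element satisfies `B`. -/
def LastIn (B : β → Prop) (l : List β) : Prop := ∃ x ∈ l.getLast?, B x

/-- A path of the digraph `S` which starts in `A` and ends in `B`. -/
structure IsPathFromTo (S : β → β → Prop) (A B : β → Prop) (l : List β) : Prop where
  isChain : l.IsChain S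
  head : HeadIn A l
  last : LastIn B l

/-- A path of the digraph `S` whose last element is followed by the first one. -/
def IsClosedPath (S : β → β → Prop) (l : List β) : Prop := IsPath S l ∧ LinksTo S l l

theorem isPathFromTo_singleton {b : β} : IsPathFromTo S A B [b] ↔ A b ∧ B b := by
  refine ⟨fun h => ?_, fun h => ⟨List.isChain_singleton b, ⟨b, rfl, h.1⟩, ⟨b, rfl, h.2⟩⟩⟩
  obtain ⟨-, ⟨x, hx, hA⟩, ⟨y, hy, hB⟩⟩ := h
  cases hx
  cases hy
  exact ⟨hA, hB⟩

theorem IsPathFromTo.isPath {l : List β} (h : IsPathFromTo S A B l) : IsPath S l := by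
  obtain ⟨x, hx, -⟩ := h.head
  exact ⟨List.ne_nil_of_mem (List.mem_of_head? hx), h.isChain⟩

theorem IsPath.isPathFromTo {l : List β} (h : IsPath S l) (hA : ∀ x ∈ l.head?, A x)
    (hB : ∀ x ∈ l.getLast?, B x) : IsPathFromTo S A B l :=
  ⟨h.2, ⟨_, List.head_mem_head? h.1, hA _ (List.head_mem_head? h.1)⟩,
    ⟨_, List.getLast_mem_getLast? h.1, hB _ (List.getLast_mem_getLast? h.1)⟩⟩

theorem IsPathFromTo.append {A' B' : β → Prop} {l l' : List β} (h : IsPathFromTo S A B l)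
    (h' : IsPathFromTo S A' B' l') (hl : LinksTo S l l') : IsPathFromTo S A B' (l ++ l') := by
  obtain ⟨x, hx, hxA⟩ := h.head
  obtain ⟨y, hy, hyB⟩ := h'.last
  exact ⟨List.isChain_append.2 ⟨h.isChain, h'.isChain, hl⟩,
    ⟨x, List.mem_head?_append_of_mem_head? hx, hxA⟩,
    ⟨y, List.mem_getLast?_append_of_mem_getLast? hy, hyB⟩⟩

open Classical in
/-- Any element satisfying `B` is joined to any element satisfying `A` through at least `K` members
of `F`. -/
def IsConnector (S : β → β → Prop) (A B : β → Prop) (K : ℕ) (F : List β) : Prop :=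
  ∀ b b', B b → A b' → K ≤ F.countP fun f => S b f ∧ S f b'

theorem IsConnector.exists_fresh {K : ℕ} {F Ys l l' : List β} (hF : IsConnector S A B K F)
    (hFn : F.Nodup) (hYs : Ys.Subperm F) (hK : Ys.length < K) (hl : LastIn B l)
    (hl' : HeadIn A l') :
    ∃ f, (f :: Ys).Subperm F ∧ LinksTo S l [f] ∧ LinksTo S [f] l' := by
  classical
  obtain ⟨b, hb, hbB⟩ := hl
  obtain ⟨b', hb', hbA⟩ := hl'
  have hfresh : ∃ f ∈ F, f ∉ Ys ∧ S b f ∧ S f b' := by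
    by_contra! hno
    refine absurd (hF b b' hbB hbA) (not_le.2 (lt_of_le_of_lt ?_ hK))
    rw [List.countP_eq_length_filter]
    refine (List.subperm_of_subset (hFn.filter _) fun f hf => ?_).length_le
    rw [List.mem_filter, decide_eq_true_iff] at hf
    by_contra hfY
    exact hno f hf.1 hfY hf.2.1 hf.2.2
  obtain ⟨f, hfF, hfY, hbf, hfb⟩ := hfresh
  refine ⟨f, List.cons_subperm_of_not_mem_of_mem hfY hfF hYs, ?_, ?_⟩
  · intro x hx y hy
    cases Option.mem_unique hx hb
    cases hy
    exact hbf
  · intro x hx y hy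
    cases hx
    cases Option.mem_unique hy hb'
    exact hfb

theorem IsConnector.exists_link {K : ℕ} {F : List β} (hF : IsConnector S A B K F) (hFn : F.Nodup)
    {L : List (List β)} (hL0 : L ≠ []) (hLK : L.length ≤ K)
    (hL : ∀ l ∈ L, IsPathFromTo S A B l) :
    ∃ P Ys, IsPathFromTo S A B P ∧ Ys.Subperm F ∧ Ys.length + 1 = L.length ∧
      P.Perm (L.flatten ++ Ys) := by
  induction L with
  | nil => exact absurd rfl hL0
  | cons l L ih =>
    rw [List.forall_mem_cons] at hL
    rw [List.length_cons] at hLK ⊢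
    rcases eq_or_ne L [] with rfl | hne
    · exact ⟨l, [], hL.1, List.nil_subperm, by simp, by simp⟩
    obtain ⟨P, Ys, hP, hYs, hlen, hperm⟩ := ih hne (by omega) hL.2
    obtain ⟨f, hfYs, hlf, hfP⟩ := hF.exists_fresh hFn hYs (by omega) hL.1.last hP.head
    refine ⟨l ++ ([f] ++ P), f :: Ys, ?_, hfYs, by rw [List.length_cons, hlen], ?_⟩
    · have hf : IsPathFromTo S (fun _ => True) (fun _ => True) [f] :=
        isPathFromTo_singleton.2 ⟨trivial, trivial⟩
      exact hL.1.append (hf.append hP hfP) hlf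
    · rw [List.flatten_cons, List.append_assoc]
      exact (((hperm.cons f).trans List.perm_middle.symm).append_left l)

theorem IsConnector.exists_cyclic_link {K : ℕ} {F : List β} (hF : IsConnector S A B K F)
    (hFn : F.Nodup) {L : List (List β)} (hL0 : L ≠ []) (hLK : L.length ≤ K)
    (hL : ∀ l ∈ L, IsPathFromTo S A B l) :
    ∃ P Ys, IsClosedPath S P ∧ Ys.Subperm F ∧ P.Perm (L.flatten ++ Ys) := by
  obtain ⟨P, Ys, hP, hYs, hlen, hperm⟩ := hF.exists_link hFn hL0 hLK hL
  obtain ⟨f, hfYs, hPf, hfP⟩ := hF.exists_fresh hFn hYs (by omega) hP.last hP.head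
  refine ⟨f :: P, f :: Ys, ⟨⟨List.cons_ne_nil _ _, ?_⟩, ?_⟩, hfYs,
    (hperm.cons f).trans List.perm_middle.symm⟩
  · exact List.isChain_cons.2 ⟨hfP f rfl, hP.isChain⟩
  · intro x hx y hy
    rw [List.getLast?_cons_of_ne_nil hP.isPath.1] at hx
    exact hPf x hx y hy

end Linking

section Matchings

variable {V τ : Type*} {E : V → V → Prop} {U W : Finset V} {F : List (V × V)}

/-- The vertices covered by a list of pairs. -/
def pairVerts (F : List (V × V)) : List V := F.flatMap fun p => [p.1, p.2]

/-- A list of disjoint edges of `E` inside the vertex set `W`. -/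
structure IsMatchingIn (E : V → V → Prop) (W : Finset V) (F : List (V × V)) : Prop where
  nodup : (pairVerts F).Nodup
  mem : ∀ v ∈ pairVerts F, v ∈ W
  adj : ∀ p ∈ F, E p.1 p.2

theorem pairVerts_cons (p : V × V) (F : List (V × V)) :
    pairVerts (p :: F) = p.1 :: p.2 :: pairVerts F := rfl

theorem length_pairVerts (F : List (V × V)) : (pairVerts F).length = 2 * F.length := by
  induction F with
  | nil => rfl
  | cons p F ih =>
    rw [pairVerts_cons, List.length_cons, List.length_cons, List.length_cons, ih]
    ring

theorem isMatchingIn_nil : IsMatchingIn E W [] := ⟨List.nodup_nil, by simp [pairVerts], by simp⟩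

open Classical in
theorem IsMatchingIn.cons (hE : ∀ x, ¬ E x x) (hF : IsMatchingIn E W F) {p : V × V}
    (h₁ : p.1 ∈ W \ (pairVerts F).toFinset) (h₂ : p.2 ∈ W \ (pairVerts F).toFinset)
    (hp : E p.1 p.2) : IsMatchingIn E W (p :: F) := by
  rw [Finset.mem_sdiff, List.mem_toFinset] at h₁ h₂
  have hne : p.1 ≠ p.2 := fun h => hE p.2 (h ▸ hp)
  refine ⟨?_, ?_, List.forall_mem_cons.2 ⟨hp, hF.adj⟩⟩
  · rw [pairVerts_cons]
    exact List.nodup_cons.2 ⟨by simp [hne, h₁.2], List.nodup_cons.2 ⟨h₂.2, hF.nodup⟩⟩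
  · rw [pairVerts_cons, List.forall_mem_cons, List.forall_mem_cons]
    exact ⟨h₁.1, h₂.1, hF.mem⟩

open Classical in
theorem exists_sum_mul_ite_le {α : Type*} {T : Finset τ} {Γ : τ → α → Prop} {w : τ → ℝ}
    (hw : ∀ t ∈ T, 0 ≤ w t) {P : Finset α} (hP : P.Nonempty)
    (h : ∀ t ∈ T, #P ≤ 50 * #{p ∈ P | Γ t p}) :
    ∃ p ∈ P, ∑ t ∈ T, w t * (if Γ t p then 1 / 2 else 1) ≤ 99 / 100 * ∑ t ∈ T, w t := by
  refine Finset.exists_le_of_sum_le (g := fun _ => 99 / 100 * ∑ t ∈ T, w t) hP ?_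
  rw [Finset.sum_comm, Finset.sum_const, nsmul_eq_mul, ← mul_assoc, Finset.mul_sum]
  refine Finset.sum_le_sum fun t ht => ?_
  rw [← Finset.mul_sum, mul_comm]
  refine mul_le_mul_of_nonneg_right ?_ (hw t ht)
  have hite : ∀ p, (if Γ t p then (1 / 2 : ℝ) else 1) = 1 - 1 / 2 * (if Γ t p then 1 else 0) := by
    intro p
    split_ifs <;> norm_num
  simp only [hite]
  rw [Finset.sum_sub_distrib, ← Finset.mul_sum, Finset.sum_boole, Finset.sum_const, nsmul_eq_mul]
  have : (#P : ℝ) ≤ 50 * #{p ∈ P | Γ t p} := by exact_mod_cast h t ht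
  linarith

theorem le_two_hundred_mul_of_pow_le {m c : ℕ} {a : ℝ} (ha : a * (995 / 1000) ^ m < 1)
    (h : (1 / 2 : ℝ) ^ c ≤ a * (99 / 100) ^ m) : m ≤ 200 * c := by
  by_contra! hlt
  have hhalf : (198 / 199 : ℝ) ^ 200 ≤ 1 / 2 := by norm_num
  have hpow : (198 / 199 : ℝ) ^ m ≤ (1 / 2) ^ c := calc
    (198 / 199 : ℝ) ^ m ≤ (198 / 199) ^ (200 * c) :=
      pow_le_pow_of_le_one (by norm_num) (by norm_num) hlt.le
    _ = ((198 / 199) ^ 200) ^ c := pow_mul _ _ _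
    _ ≤ (1 / 2) ^ c := by gcongr
  have hsplit : (99 / 100 : ℝ) ^ m = (995 / 1000) ^ m * (198 / 199) ^ m := by
    rw [← mul_pow]
    norm_num
  have hpos : (0 : ℝ) < (198 / 199) ^ m := by positivity
  rw [hsplit] at h
  nlinarith

open Classical in
theorem exists_cons_sum_half_pow_le {T : Finset τ} (Γ : τ → V × V → Prop) (hE : ∀ x, ¬ E x x)
    (hF : IsMatchingIn E W F) (hU : U.Nonempty) (hT : T.Nonempty)
    (hW : W \ (pairVerts F).toFinset ⊆ U)
    (h : ∀ t ∈ T, #U ^ 2 ≤ 50 * #{p ∈ (W \ (pairVerts F).toFinset) ×ˢ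
      (W \ (pairVerts F).toFinset) | E p.1 p.2 ∧ Γ t p}) :
    ∃ p, IsMatchingIn E W (p :: F) ∧ ∑ t ∈ T, (1 / 2 : ℝ) ^ (p :: F).countP (Γ t ·) ≤
      99 / 100 * ∑ t ∈ T, (1 / 2 : ℝ) ^ F.countP (Γ t ·) := by
  set W' := W \ (pairVerts F).toFinset
  set P := {p ∈ W' ×ˢ W' | E p.1 p.2}
  have hPU : #P ≤ #U ^ 2 := by
    rw [sq, ← Finset.card_product]
    exact Finset.card_le_card
      ((Finset.filter_subset _ _).trans (Finset.product_subset_product hW hW))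
  have hcount : ∀ t ∈ T, #U ^ 2 ≤ 50 * #{p ∈ P | Γ t p} := fun t ht => by
    rw [Finset.filter_filter]
    exact h t ht
  have hPne : P.Nonempty := by
    obtain ⟨t, ht⟩ := hT
    have hUpos : 0 < #U ^ 2 := pow_pos (Finset.card_pos.2 hU) _
    have hpass : {p ∈ P | Γ t p}.Nonempty :=
      Finset.card_pos.1 (Nat.pos_of_mul_pos_left (hUpos.trans_le (hcount t ht)))
    exact hpass.mono (Finset.filter_subset _ _)
  obtain ⟨p, hp, hle⟩ := exists_sum_mul_ite_le (w := fun t => (1 / 2 : ℝ) ^ F.countP (Γ t ·))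
    (fun _ _ => by positivity) hPne fun t ht => hPU.trans (hcount t ht)
  rw [Finset.mem_filter, Finset.mem_product] at hp
  refine ⟨p, hF.cons hE hp.1.1 hp.1.2 hp.2, le_of_eq_of_le (Finset.sum_congr rfl fun t _ => ?_) hle⟩
  by_cases hΓ : Γ t p <;> simp [hΓ, pow_succ]

open Classical in
/-- Each edge is chosen so that the total weight `∑ t, 2⁻¹ ^ #(chosen edges passing t)` drops by a
constant factor. -/
theorem exists_isMatchingIn_passing {X : Finset V} {T : Finset τ} {Γ : τ → V × V → Prop} {m : ℕ}
    (hE : ∀ x, ¬ E x x) (hU : U.Nonempty) (hT : (#T : ℝ) * (995 / 1000) ^ m < 1)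
    (h : ∀ X', #X' ≤ #X + 2 * m → ∀ t ∈ T,
      #U ^ 2 ≤ 50 * #{p ∈ (U \ X') ×ˢ (U \ X') | E p.1 p.2 ∧ Γ t p}) :
    ∃ F, IsMatchingIn E (U \ X) F ∧ F.length ≤ m ∧ ∀ t ∈ T, m ≤ 200 * F.countP (Γ t ·) := by
  rcases T.eq_empty_or_nonempty with rfl | hTne
  · exact ⟨[], isMatchingIn_nil, by simp, by simp⟩
  have greedy : ∀ k ≤ m, ∃ F, IsMatchingIn E (U \ X) F ∧ F.length = k ∧
      ∑ t ∈ T, (1 / 2 : ℝ) ^ F.countP (Γ t ·) ≤ #T * (99 / 100) ^ k := by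
    intro k
    induction k with
    | zero => exact fun _ => ⟨[], isMatchingIn_nil, rfl, by simp⟩
    | succ k ih =>
      intro hk
      obtain ⟨F, hF, hFk, hsum⟩ := ih (by omega)
      have hcard := Finset.card_union_le X (pairVerts F).toFinset
      have hFcard := (List.toFinset_card_le (pairVerts F)).trans_eq (length_pairVerts F)
      obtain ⟨p, hpF, hle⟩ := exists_cons_sum_half_pow_le Γ hE hF hU hTne
        (Finset.sdiff_subset.trans Finset.sdiff_subset) (by
          rw [sdiff_sdiff_left, Finset.sup_eq_union]
          exact h _ (by omega))
      refine ⟨p :: F, hpF, by rw [List.length_cons, hFk], hle.trans ?_⟩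
      rw [pow_succ]
      linarith
  obtain ⟨F, hF, hFm, hsum⟩ := greedy m le_rfl
  refine ⟨F, hF, hFm.le, fun t ht => le_two_hundred_mul_of_pow_le hT (le_trans ?_ hsum)⟩
  exact Finset.single_le_sum (f := fun t => (1 / 2 : ℝ) ^ F.countP (Γ t ·))
    (fun _ _ => by positivity) ht

end Matchings

section NearTournaments

variable {V : Type*} {U : Finset V}

theorem card_mul_le_two_mul_sum_self {f : V → V → ℝ} (hf : ∀ x y, f x y + f y x ≤ 1) {d : ℝ}
    (hout : ∀ x ∈ U, (#U : ℝ) ≤ 2 * ∑ y ∈ U, f x y + d)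
    (hin : ∀ x ∈ U, (#U : ℝ) ≤ 2 * ∑ y ∈ U, f y x + d) {I : Finset V} (hI : I ⊆ U) :
    #I * (#I - d) ≤ 2 * ∑ x ∈ I, ∑ y ∈ I, f x y := by
  classical
  have key : ∀ x ∈ I, (#I : ℝ) - d ≤ ∑ y ∈ I, (f x y + f y x) := by
    intro x hx
    have hrest : ∑ y ∈ U \ I, (f x y + f y x) ≤ #(U \ I) • (1 : ℝ) :=
      Finset.sum_le_card_nsmul _ _ _ fun y _ => hf x y
    have hsum := Finset.sum_sdiff (f := fun y => f x y + f y x) hI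
    have hcard : (#(U \ I) : ℝ) + #I = #U := by
      exact_mod_cast Finset.card_sdiff_add_card_eq_card hI
    rw [Finset.sum_add_distrib (s := U)] at hsum
    rw [nsmul_eq_mul, mul_one] at hrest
    linarith [hout x (hI hx), hin x (hI hx)]
  have hsum := Finset.card_nsmul_le_sum _ _ _ key
  simp only [nsmul_eq_mul, Finset.sum_add_distrib] at hsum
  rw [Finset.sum_comm (f := fun x y => f y x)] at hsum
  linarith

theorem card_mul_le_two_mul_sum_of_disjoint {f : V → V → ℝ} (hf₀ : ∀ x y, 0 ≤ f x y)
    (hf : ∀ x y, f x y + f y x ≤ 1) {d : ℝ} (hout : ∀ x ∈ U, (#U : ℝ) ≤ 2 * ∑ y ∈ U, f x y + d)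
    {P T : Finset V} (hP : P ⊆ U) (hT : T ⊆ U) (hPT : Disjoint P T) :
    #P * (#P + 2 * #T - #U - d) ≤ 2 * ∑ x ∈ P, ∑ y ∈ T, f x y := by
  classical
  have hunion : P ∪ T ⊆ U := Finset.union_subset hP hT
  have key : ∀ x ∈ P, (2 * #P + 2 * #T - #U - d : ℝ) ≤ 2 * (∑ y ∈ P, f x y + ∑ y ∈ T, f x y) := by
    intro x hx
    have hrest : ∑ y ∈ U \ (P ∪ T), f x y ≤ #(U \ (P ∪ T)) • (1 : ℝ) :=
      Finset.sum_le_card_nsmul _ _ _ fun y _ => by linarith [hf x y, hf₀ y x]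
    have hsum := Finset.sum_sdiff (f := fun y => f x y) hunion
    have hcard : (#(U \ (P ∪ T)) : ℝ) + (#P + #T) = #U := by
      have := Finset.card_sdiff_add_card_eq_card hunion
      rw [Finset.card_union_of_disjoint hPT] at this
      exact_mod_cast this
    rw [Finset.sum_union hPT] at hsum
    rw [nsmul_eq_mul, mul_one] at hrest
    linarith [hout x (hP hx)]
  have hsum := Finset.card_nsmul_le_sum _ _ _ key
  rw [← Finset.mul_sum, Finset.sum_add_distrib, nsmul_eq_mul] at hsum
  have hself : ∑ x ∈ P, ∑ y ∈ P, (f x y + f y x) ≤ #P • (#P • (1 : ℝ)) :=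
    Finset.sum_le_card_nsmul _ _ _ fun x _ => Finset.sum_le_card_nsmul _ _ _ fun y _ => hf x y
  simp only [nsmul_eq_mul, mul_one, Finset.sum_add_distrib] at hself
  rw [Finset.sum_comm (f := fun x y => f y x)] at hself
  linarith

theorem sq_card_le_fifty_mul_sum {f : V → V → ℝ} (hf₀ : ∀ x y, 0 ≤ f x y)
    (hf : ∀ x y, f x y + f y x ≤ 1) {d : ℝ} (hd : 50 * d ≤ #U)
    (hout : ∀ x ∈ U, (#U : ℝ) ≤ 2 * ∑ y ∈ U, f x y + d)
    (hin : ∀ x ∈ U, (#U : ℝ) ≤ 2 * ∑ y ∈ U, f y x + d) {S T : Finset V} (hS : S ⊆ U) (hT : T ⊆ U)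
    (hSc : 49 * (#U : ℝ) ≤ 100 * #S) (hTc : 49 * (#U : ℝ) ≤ 100 * #T) :
    (#U : ℝ) ^ 2 ≤ 50 * ∑ x ∈ S, ∑ y ∈ T, f x y := by
  classical
  have mono : ∀ S' ⊆ S, ∀ T' ⊆ T, ∑ x ∈ S', ∑ y ∈ T', f x y ≤ ∑ x ∈ S, ∑ y ∈ T, f x y :=
    fun S' hS' T' hT' => (Finset.sum_le_sum fun x _ =>
      Finset.sum_le_sum_of_subset_of_nonneg hT' fun _ _ _ => hf₀ _ _).trans
      (Finset.sum_le_sum_of_subset_of_nonneg hS' fun _ _ _ => Finset.sum_nonneg fun _ _ => hf₀ _ _)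
  rcases le_or_gt (#U / 4 : ℝ) #(S ∩ T) with hI | hI
  · have hself := card_mul_le_two_mul_sum_self hf hout hin (Finset.inter_subset_left.trans hS :
      S ∩ T ⊆ U)
    have := mono (S ∩ T) Finset.inter_subset_left (S ∩ T) Finset.inter_subset_right
    nlinarith
  · have hdisj := card_mul_le_two_mul_sum_of_disjoint hf₀ hf hout (Finset.sdiff_subset.trans hS)
      hT (Finset.sdiff_disjoint : Disjoint (S \ T) T)
    have := mono _ (Finset.sdiff_subset : S \ T ⊆ S) _ subset_rfl
    have hcard : (#(S \ T) : ℝ) + #(S ∩ T) = #S := by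
      exact_mod_cast Finset.card_sdiff_add_card_inter S T
    nlinarith

open Classical in
/-- In the digraph `E`, each vertex of `U` is joined to nearly half of `U` in either direction. -/
structure IsAlmostRegularOn (E : V → V → Prop) (U : Finset V) (d : ℕ) : Prop where
  out : ∀ u ∈ U, #U ≤ 2 * #{y ∈ U | E u y} + d
  into : ∀ u ∈ U, #U ≤ 2 * #{y ∈ U | E y u} + d

variable {E : V → V → Prop} {d : ℕ}

theorem IsOriented.irrefl (hE : IsOriented E) (x : V) : ¬ E x x := fun h => hE x x h h

open Classical in
theorem IsAlmostRegularOn.sq_card_le (hreg : IsAlmostRegularOn E U d) (hE : IsOriented E)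
    (hd : 50 * d ≤ #U) {S T : Finset V} (hS : S ⊆ U) (hT : T ⊆ U) (hSc : 49 * #U ≤ 100 * #S)
    (hTc : 49 * #U ≤ 100 * #T) : #U ^ 2 ≤ 50 * #{p ∈ S ×ˢ T | E p.1 p.2} := by
  have h := sq_card_le_fifty_mul_sum (f := fun x y => if E x y then (1 : ℝ) else 0) (U := U)
    (d := d) (fun x y => by split_ifs <;> norm_num)
    (fun x y => by
      have := hE x y
      split_ifs <;> first | (exfalso; tauto) | norm_num)
    (by exact_mod_cast hd)
    (fun x hx => by rw [Finset.sum_boole]; exact_mod_cast hreg.out x hx)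
    (fun x hx => by rw [Finset.sum_boole]; exact_mod_cast hreg.into x hx) hS hT
    (by exact_mod_cast hSc) (by exact_mod_cast hTc)
  rw [← Finset.sum_product', Finset.sum_boole] at h
  exact_mod_cast h

open Classical in
theorem IsAlmostRegularOn.card_le_of_independent (hreg : IsAlmostRegularOn E U d)
    (hE : IsOriented E) {I : Finset V} (hI : I ⊆ U)
    (h : (I : Set V).Pairwise fun x y => ¬ E x y) : #I ≤ d := by
  rcases I.eq_empty_or_nonempty with rfl | ⟨x, hx⟩
  · exact Nat.zero_le d
  set N := {y ∈ U | E x y} ∪ {y ∈ U | E y x}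
  have hN : #N = #{y ∈ U | E x y} + #{y ∈ U | E y x} :=
    Finset.card_union_of_disjoint (Finset.disjoint_filter.2 fun y _ => hE x y)
  have hIN : Disjoint I N := by
    refine Finset.disjoint_left.2 fun y hy hyN => ?_
    simp only [N, Finset.mem_union, Finset.mem_filter] at hyN
    rcases eq_or_ne x y with rfl | hne
    · exact hE.irrefl x (by tauto)
    · exact hyN.elim (fun hxy => h hx hy hne hxy.2) fun hyx => h hy hx hne.symm hyx.2
  have hcard := Finset.card_le_card (Finset.union_subset hI
    (Finset.union_subset (Finset.filter_subset _ _) (Finset.filter_subset _ _) : N ⊆ U))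
  rw [Finset.card_union_of_disjoint hIN, hN] at hcard
  have := hreg.out x (hI hx)
  have := hreg.into x (hI hx)
  omega

open Classical in
theorem IsAlmostRegularOn.exists_matching {τ : Type*} (hreg : IsAlmostRegularOn E U d)
    (hE : IsOriented E) (hU : U.Nonempty) (hd : 200 * d ≤ #U) {X : Finset V} {m : ℕ}
    (hX : 500 * (#X + 2 * m) ≤ #U) {T : Finset τ} (hT : (#T : ℝ) * (995 / 1000) ^ m < 1)
    {a b : τ → V → Prop} (ha : ∀ t ∈ T, #U ≤ 2 * #{y ∈ U | a t y} + d)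
    (hb : ∀ t ∈ T, #U ≤ 2 * #{y ∈ U | b t y} + d) :
    ∃ F, IsMatchingIn E (U \ X) F ∧ F.length ≤ m ∧
      ∀ t ∈ T, m ≤ 200 * F.countP fun p => a t p.1 ∧ b t p.2 := by
  suffices h : ∀ X', #X' ≤ #X + 2 * m → ∀ t ∈ T,
      #U ^ 2 ≤ 50 * #{p ∈ (U \ X') ×ˢ (U \ X') | E p.1 p.2 ∧ a t p.1 ∧ b t p.2} by
    convert exists_isMatchingIn_passing hE.irrefl hU hT (Γ := fun t p => a t p.1 ∧ b t p.2)
      fun X' hX' t ht => ?_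
    convert h X' hX' t ht
  intro X' hX' t ht
  have hacard := Finset.le_card_sdiff X' {y ∈ U | a t y}
  have hbcard := Finset.le_card_sdiff X' {y ∈ U | b t y}
  have := ha t ht
  have := hb t ht
  refine (hreg.sq_card_le hE (by omega) (Finset.sdiff_subset.trans (Finset.filter_subset _ _))
    (Finset.sdiff_subset.trans (Finset.filter_subset _ _)) (S := {y ∈ U | a t y} \ X')
    (T := {y ∈ U | b t y} \ X') (by omega) (by omega)).trans
    (Nat.mul_le_mul_left _ (Finset.card_le_card fun p hp => ?_))
  simp only [Finset.mem_filter, Finset.mem_product, Finset.mem_sdiff] at hp ⊢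
  tauto

end NearTournaments

section Absorption

variable {V : Type*} {E : V → V → Prop} {U W : Finset V} {F : List (V × V)}

/-- The edges of `F` as paths of length one. -/
def pairPaths (F : List (V × V)) : List (List V) := F.map fun p => [p.1, p.2]

/-- A cyclic sequence of paths of `E`, each followed by an edge to the next one. -/
structure IsCyclicPathList (E : V → V → Prop) (B : List (List V)) : Prop where
  isPath : ∀ b ∈ B, IsPath E b
  isClosedPath : IsClosedPath (LinksTo E) B

/-- The list `B` contains `k` paths of length one whose edge can be subdivided by `v`. -/
def HasAbsorbers (E : V → V → Prop) (B : List (List V)) (k : ℕ) (v : V) : Prop :=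
  ∃ H : Finset (V × V), k ≤ #H ∧ ∀ p ∈ H, [p.1, p.2] ∈ B ∧ E p.1 v ∧ E v p.2

theorem flatten_pairPaths (F : List (V × V)) : (pairPaths F).flatten = pairVerts F := rfl

theorem IsMatchingIn.isPath (hF : IsMatchingIn E W F) : ∀ b ∈ pairPaths F, IsPath E b := by
  intro b hb
  obtain ⟨p, hp, rfl⟩ := List.mem_map.1 hb
  exact ⟨List.cons_ne_nil _ _, List.isChain_pair.2 (hF.adj p hp)⟩

theorem IsMatchingIn.nodup_pairPaths (hF : IsMatchingIn E W F) : (pairPaths F).Nodup := by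
  have hdisj := (List.nodup_flatten.1 (flatten_pairPaths F ▸ hF.nodup)).2
  refine hdisj.imp_of_mem fun {a b} ha _ hab h => ?_
  subst h
  exact (hF.isPath a ha).1 (List.eq_nil_iff_forall_not_mem.2 fun x hx => hab hx hx)

theorem subperm_flatten {L L' : List (List V)} (h : L.Subperm L') :
    L.flatten.Subperm L'.flatten := by
  obtain ⟨l, hl, hlL'⟩ := h
  exact ⟨l.flatten, hl.flatten, hlL'.flatten⟩

theorem HasAbsorbers.mono {B B' : List (List V)} {k k' : ℕ} {v : V} (h : HasAbsorbers E B k v)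
    (hk : k' ≤ k) (hB : B ⊆ B') : HasAbsorbers E B' k' v := by
  obtain ⟨H, hHk, hH⟩ := h
  exact ⟨H, hk.trans hHk, fun p hp => ⟨hB (hH p hp).1, (hH p hp).2⟩⟩

theorem IsCyclicPathList.replace {P Q : List (List V)} {a a' : List V}
    (h : IsCyclicPathList E (P ++ a :: Q)) (ha' : IsPath E a') (hh : a'.head? = a.head?)
    (hl : a'.getLast? = a.getLast?) : IsCyclicPathList E (P ++ a' :: Q) := by
  obtain ⟨hpath, ⟨-, hchain⟩, hclosed⟩ := h
  refine ⟨fun b hb => ?_, ⟨by simp, ?_⟩, ?_⟩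
  · have := hpath b
    rw [List.mem_append, List.mem_cons] at hb this
    rcases hb with hb | rfl | hb
    · exact this (Or.inl hb)
    · exact ha'
    · exact this (Or.inr (Or.inr hb))
  · rw [List.isChain_append, List.isChain_cons] at hchain ⊢
    simpa [LinksTo, hh, hl] using hchain
  · rcases P with _ | ⟨p, P⟩ <;> rcases Q.eq_nil_or_concat with rfl | ⟨Q', q, rfl⟩ <;>
      simp_all [LinksTo, List.getLast?_append, List.getLast?_cons]

/-- After one absorption, at most one absorber is lost for each of the remaining vertices. -/
theorem IsCyclicPathList.exists_absorb_one {B : List (List V)} (hB : IsCyclicPathList E B) {v : V}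
    (hv : HasAbsorbers E B 1 v) : ∃ B', IsCyclicPathList E B' ∧ B'.flatten.Perm (v :: B.flatten) ∧
      ∀ k w, HasAbsorbers E B (k + 1) w → HasAbsorbers E B' k w := by
  classical
  obtain ⟨H, hHc, hH⟩ := hv
  obtain ⟨p, hp⟩ := Finset.card_pos.1 hHc
  obtain ⟨hpB, hpv, hvp⟩ := hH p hp
  obtain ⟨P, Q, rfl⟩ := List.append_of_mem hpB
  refine ⟨P ++ [p.1, v, p.2] :: Q, hB.replace ⟨by simp, by simp [hpv, hvp]⟩ rfl rfl, ?_, ?_⟩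
  · rw [List.perm_iff_count]
    intro x
    simp only [List.flatten_append, List.flatten_cons, List.count_append, List.count_cons,
      List.count_nil]
    omega
  · rintro k w ⟨H, hHk, hH⟩
    refine ⟨H.erase p, ?_, fun q hq => ⟨?_, (hH q (Finset.mem_of_mem_erase hq)).2⟩⟩
    · have := Finset.pred_card_le_card_erase (s := H) (a := p)
      omega
    · have hmem := (hH q (Finset.mem_of_mem_erase hq)).1
      have hne : [q.1, q.2] ≠ [p.1, p.2] := fun h => by
        simp only [List.cons.injEq, and_true] at h
        exact Finset.ne_of_mem_erase hq (Prod.ext h.1 h.2)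
      simp only [List.mem_append, List.mem_cons, hne, false_or] at hmem ⊢
      tauto

theorem IsCyclicPathList.exists_absorb (Z : List V) {B : List (List V)}
    (hB : IsCyclicPathList E B) (hZ : ∀ v ∈ Z, HasAbsorbers E B Z.length v) :
    ∃ B', IsCyclicPathList E B' ∧ B'.flatten.Perm (Z ++ B.flatten) := by
  induction Z generalizing B with
  | nil => exact ⟨B, hB, .refl _⟩
  | cons v Z ih =>
    rw [List.forall_mem_cons, List.length_cons] at hZ
    obtain ⟨B₁, hB₁, hperm₁, habs⟩ := hB.exists_absorb_one (hZ.1.mono (by omega) fun _ h => h)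
    obtain ⟨B', hB', hperm⟩ := ih hB₁ fun w hw => habs _ _ (hZ.2 w hw)
    exact ⟨B', hB', hperm.trans ((hperm₁.append_left Z).trans List.perm_middle)⟩

theorem IsCyclicPathList.isClosedPath_flatten {B : List (List V)} (hB : IsCyclicPathList E B) :
    IsClosedPath E B.flatten := by
  obtain ⟨hpath, ⟨hne, hchain⟩, hclosed⟩ := hB
  have hnil : [] ∉ B := fun h => (hpath _ h).1 rfl
  have hhead := hpath _ (List.head_mem hne)
  have hlast := hpath _ (List.getLast_mem hne)
  refine ⟨⟨?_, (List.isChain_flatten hnil).2 ⟨fun b hb => (hpath b hb).2, hchain⟩⟩, ?_⟩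
  · exact List.flatten_ne_nil_iff.2 ⟨_, List.head_mem hne, hhead.1⟩
  · intro x hx y hy
    refine hclosed _ (List.getLast_mem_getLast? hne) _ (List.head_mem_head? hne) x ?_ y ?_
    · rwa [← List.dropLast_append_getLast hne, List.flatten_append, List.flatten_singleton,
        List.getLast?_append_of_ne_nil _ hlast.1] at hx
    · rwa [← List.cons_head_tail hne, List.flatten_cons,
        List.head?_append_of_ne_nil _ hhead.1] at hy

end Absorption

section HamiltonCycles

variable {V : Type*} {E : V → V → Prop} {U : Finset V} {d : ℕ}

open Classical in
theorem exists_extension_both_ends {c : ℕ} {l Ys : List V} (hYs : Ys.Nodup)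
    (hc : Ys.length + 2 ≤ c) (hl : IsPathFromTo E (fun x => c ≤ #{u ∈ U | E u x})
      (fun x => c ≤ #{u ∈ U | E x u}) l) :
    ∃ u ∈ U, ∃ u' ∈ U, (u' :: u :: Ys).Nodup ∧
      IsPathFromTo E (· ∈ U) (· ∈ U) ([u] ++ l ++ [u']) := by
  have exists_fresh : ∀ (q : V → Prop) (Zs : List V), c ≤ #{u ∈ U | q u} → Zs.length < c →
      ∃ u ∈ U, q u ∧ u ∉ Zs := by
    intro q Zs hq hZs
    obtain ⟨u, hu, huZ⟩ := Finset.exists_mem_notMem_of_card_lt_card (s := Zs.toFinset)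
      ((List.toFinset_card_le Zs).trans_lt (hZs.trans_le hq))
    rw [Finset.mem_filter] at hu
    exact ⟨u, hu.1, hu.2, fun h => huZ (List.mem_toFinset.2 h)⟩
  obtain ⟨x, hx, hxc⟩ := hl.head
  obtain ⟨y, hy, hyc⟩ := hl.last
  obtain ⟨u, huU, hux, huY⟩ := exists_fresh (E · x) Ys hxc (by omega)
  obtain ⟨u', hu'U, hyu', hu'Y⟩ := exists_fresh (E y ·) (u :: Ys) hyc (by
    rw [List.length_cons]
    omega)
  have hu : IsPathFromTo E (· ∈ U) (· ∈ U) [u] := isPathFromTo_singleton.2 ⟨huU, huU⟩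
  have hu' : IsPathFromTo E (· ∈ U) (· ∈ U) [u'] := isPathFromTo_singleton.2 ⟨hu'U, hu'U⟩
  refine ⟨u, huU, u', hu'U, List.nodup_cons.2 ⟨hu'Y, List.nodup_cons.2 ⟨huY, hYs⟩⟩,
    (hu.append hl ?_).append hu' ?_⟩
  · intro v hv w hw
    cases hv
    cases Option.mem_unique hw hx
    exact hux
  · intro v hv w hw
    rw [List.getLast?_append_of_ne_nil _ hl.isPath.1] at hv
    cases hw
    cases Option.mem_unique hv hy
    exact hyu'

open Classical in
theorem exists_extension {c : ℕ} {L : List (List V)} (hc : 2 * L.length ≤ c)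
    (hL : ∀ l ∈ L, IsPathFromTo E (fun x => c ≤ #{u ∈ U | E u x})
      (fun x => c ≤ #{u ∈ U | E x u}) l) :
    ∃ (L' : List (List V)) (Ys : List V), (∀ l ∈ L', IsPathFromTo E (· ∈ U) (· ∈ U) l) ∧
      L'.length = L.length ∧ L'.flatten.Perm (L.flatten ++ Ys) ∧ Ys.Nodup ∧ (∀ y ∈ Ys, y ∈ U) ∧
      Ys.length = 2 * L.length := by
  induction L with
  | nil => exact ⟨[], [], by simp⟩
  | cons l L ih =>
    rw [List.forall_mem_cons] at hL
    rw [List.length_cons] at hc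
    obtain ⟨L', Ys, hL', hlen, hperm, hnodup, hYU, hYs⟩ := ih (by omega) hL.2
    obtain ⟨u, huU, u', hu'U, hnodup', hl⟩ := exists_extension_both_ends hnodup (by omega) hL.1
    refine ⟨([u] ++ l ++ [u']) :: L', u' :: u :: Ys, List.forall_mem_cons.2 ⟨hl, hL'⟩,
      by rw [List.length_cons, List.length_cons, hlen], ?_, hnodup',
      List.forall_mem_cons.2 ⟨hu'U, List.forall_mem_cons.2 ⟨huU, hYU⟩⟩, ?_⟩
    · rw [List.perm_iff_count] at hperm ⊢
      intro x
      have := hperm x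
      simp only [List.flatten_cons, List.count_append, List.count_cons, List.count_nil] at this ⊢
      omega
    · simp only [List.length_cons, hYs]
      ring

open Classical in
theorem isConnector_pairPaths {F : List (V × V)} {K : ℕ}
    (hF : ∀ u ∈ U, ∀ w ∈ U, K ≤ F.countP fun p => E u p.1 ∧ E p.2 w) :
    IsConnector (LinksTo E) (HeadIn (· ∈ U)) (LastIn (· ∈ U)) K (pairPaths F) := by
  rintro b b' ⟨u, hub, hu⟩ ⟨w, hwb', hw⟩
  refine (hF u hu w hw).trans ?_
  rw [pairPaths, List.countP_map]
  refine List.countP_mono_left fun p _ hp => ?_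
  rw [decide_eq_true_iff] at hp
  rw [Function.comp_apply, decide_eq_true_iff]
  refine ⟨fun x hx y hy => ?_, fun x hx y hy => ?_⟩
  · cases Option.mem_unique hx hub
    cases hy
    exact hp.1
  · cases hx
    cases Option.mem_unique hy hwb'
    exact hp.2

open Classical in
theorem IsAlmostRegularOn.exists_connecting_matching (hreg : IsAlmostRegularOn E U d)
    (hE : IsOriented E) (hU : U.Nonempty) (hd : 200 * d ≤ #U) {X : Finset V} {m K : ℕ}
    (hX : 500 * (#X + 2 * m) ≤ #U) (hK : 200 * K ≤ m) (hm : (#U : ℝ) ^ 2 * (995 / 1000) ^ m < 1) :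
    ∃ F, IsMatchingIn E (U \ X) F ∧ F.length ≤ m ∧
      IsConnector (LinksTo E) (HeadIn (· ∈ U)) (LastIn (· ∈ U)) K (pairPaths F) := by
  obtain ⟨F, hF, hFm, hcount⟩ := hreg.exists_matching hE hU hd hX (T := U ×ˢ U)
    (by rwa [Finset.card_product, Nat.cast_mul, ← sq]) (a := fun t y => E t.1 y)
    (b := fun t y => E y t.2) (fun t ht => hreg.out _ (Finset.mem_product.1 ht).1)
    (fun t ht => hreg.into _ (Finset.mem_product.1 ht).2)
  refine ⟨F, hF, hFm, isConnector_pairPaths fun u hu w hw => ?_⟩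
  exact Nat.le_of_mul_le_mul_left (hK.trans (hcount (u, w) (Finset.mk_mem_product hu hw)))
    (by norm_num)

open Classical in
theorem IsAlmostRegularOn.exists_absorbing_matching (hreg : IsAlmostRegularOn E U d)
    (hE : IsOriented E) (hU : U.Nonempty) (hd : 200 * d ≤ #U) {X : Finset V} {m k : ℕ}
    (hX : 500 * (#X + 2 * m) ≤ #U) (hk : 200 * k ≤ m) (hm : (#U : ℝ) * (995 / 1000) ^ m < 1) :
    ∃ F, IsMatchingIn E (U \ X) F ∧ F.length ≤ m ∧ ∀ v ∈ U, HasAbsorbers E (pairPaths F) k v := by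
  obtain ⟨F, hF, hFm, hcount⟩ := hreg.exists_matching hE hU hd hX hm (a := fun v y => E y v)
    (b := fun v y => E v y) hreg.into hreg.out
  refine ⟨F, hF, hFm, fun v hv => ⟨(F.filter fun p => E p.1 v ∧ E v p.2).toFinset, ?_,
    fun p hp => ?_⟩⟩
  · rw [List.toFinset_card_of_nodup (hF.nodup_pairPaths.of_map.filter _),
      ← List.countP_eq_length_filter]
    exact Nat.le_of_mul_le_mul_left (hk.trans (hcount v hv)) (by norm_num)
  · rw [List.mem_toFinset, List.mem_filter, decide_eq_true_iff] at hp
    exact ⟨List.mem_map_of_mem hp.1, hp.2⟩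

theorem nodup_of_subperm {l l' : List V} (h : l.Subperm l') (hl' : l'.Nodup) : l.Nodup := by
  obtain ⟨k, hk, hkl'⟩ := h
  exact hk.nodup_iff.1 (hl'.sublist hkl')

theorem flatten_map_singleton {β : Type*} (L : List β) : (L.map fun b => [b]).flatten = L := by
  rw [← List.flatMap_def, List.flatMap_singleton']

theorem isPathFromTo_singleton_of_forall_mem {b : List V} (hb : IsPath E b) (hbU : ∀ v ∈ b, v ∈ U) :
    IsPathFromTo (LinksTo E) (HeadIn (· ∈ U)) (LastIn (· ∈ U)) [b] := by
  have := hb.isPathFromTo (fun x hx => hbU x (List.mem_of_head? hx))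
    fun x hx => hbU x (List.mem_of_getLast? hx)
  exact isPathFromTo_singleton.2 ⟨this.head, this.last⟩

theorem IsMatchingIn.isPathFromTo_singleton {W : Finset V} {F : List (V × V)}
    (hF : IsMatchingIn E W F) (hW : W ⊆ U) : ∀ C ∈ (pairPaths F).map fun b => [b],
    IsPathFromTo (LinksTo E) (HeadIn (· ∈ U)) (LastIn (· ∈ U)) C := by
  intro C hC
  obtain ⟨b, hb, rfl⟩ := List.mem_map.1 hC
  refine isPathFromTo_singleton_of_forall_mem (hF.isPath b hb) fun v hv => hW (hF.mem v ?_)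
  exact List.mem_flatten.2 ⟨b, hb, hv⟩

/-- A sequence of disjoint paths inside `W`, each followed by an edge to the next one, which begins
and ends in `U` and provides `k` absorbers for every vertex of `U`. -/
structure IsAbsorbingPath (E : V → V → Prop) (U W : Finset V) (k : ℕ) (P : List (List V)) :
    Prop where
  isPathFromTo : IsPathFromTo (LinksTo E) (HeadIn (· ∈ U)) (LastIn (· ∈ U)) P
  isPath : ∀ b ∈ P, IsPath E b
  nodup : P.flatten.Nodup
  mem : ∀ v ∈ P.flatten, v ∈ W
  absorbs : ∀ v ∈ U, HasAbsorbers E P k v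

open Classical in
theorem IsAlmostRegularOn.exists_isAbsorbingPath (hreg : IsAlmostRegularOn E U d)
    (hE : IsOriented E) (hU : U.Nonempty) (hd : 200 * d ≤ #U) {X : Finset V} {m : ℕ}
    (hX : 500 * (#X + 2 * (80400 * m)) ≤ #U) (hm : (#U : ℝ) ^ 2 * (995 / 1000) ^ m < 1) :
    ∃ P, IsAbsorbingPath E U (U \ X) (2 * m) P ∧ P.flatten.length ≤ 2 * (80400 * m) := by
  have hU1 : (1 : ℝ) ≤ #U := by exact_mod_cast Finset.card_pos.2 hU
  have hm0 : m ≠ 0 := by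
    rintro rfl
    nlinarith
  have hpow : ∀ k, m ≤ k → (#U : ℝ) ^ 2 * (995 / 1000) ^ k < 1 := fun k hk =>
    (mul_le_mul_of_nonneg_left (pow_le_pow_of_le_one (by norm_num) (by norm_num) hk)
      (by positivity)).trans_lt hm
  obtain ⟨F, hF, hFm, hconn⟩ := hreg.exists_connecting_matching hE hU hd (X := X)
    (m := 80000 * m) (K := 400 * m) (by omega) (by omega) (hpow _ (by omega))
  have hFcard := (List.toFinset_card_le (pairVerts F)).trans_eq (length_pairVerts F)
  have hXF := Finset.card_union_le X (pairVerts F).toFinset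
  obtain ⟨F', hF', hF'm, habs⟩ := hreg.exists_absorbing_matching hE hU hd
    (X := X ∪ (pairVerts F).toFinset) (m := 400 * m) (k := 2 * m) (by omega) (by omega)
    (lt_of_le_of_lt (by gcongr; exact le_self_pow₀ hU1 two_ne_zero) (hpow _ (by omega)))
  have hF'ne : (pairPaths F').map (fun b => [b]) ≠ [] := by
    obtain ⟨u, hu⟩ := hU
    obtain ⟨H, hHk, hH⟩ := habs u hu
    obtain ⟨p, hp⟩ := Finset.card_pos.1 (lt_of_lt_of_le (by omega) hHk)
    exact List.ne_nil_of_mem (List.mem_map_of_mem (hH p hp).1)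
  obtain ⟨P, Ys, hP, hYs, -, hperm⟩ := hconn.exists_link hF.nodup_pairPaths hF'ne
    (by simpa [pairPaths] using hF'm) (hF'.isPathFromTo_singleton Finset.sdiff_subset)
  rw [flatten_map_singleton] at hperm
  have hsub : P.flatten.Subperm (pairVerts F' ++ pairVerts F) := by
    refine hperm.flatten.subperm.trans ?_
    rw [List.flatten_append, flatten_pairPaths, List.subperm_append_left]
    exact subperm_flatten hYs
  have hdisj : ∀ v ∈ pairVerts F', v ∈ U \ X ∧ v ∉ pairVerts F := fun v hv => by
    simpa [and_assoc] using hF'.mem v hv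
  refine ⟨P, ⟨hP, fun b hb => ?_, nodup_of_subperm hsub ?_, fun v hv => ?_, fun v hv => ?_⟩, ?_⟩
  · exact (List.mem_append.1 (hperm.subset hb)).elim (hF'.isPath b)
      fun hb => hF.isPath b (hYs.subset hb)
  · exact List.nodup_append'.2 ⟨hF'.nodup, hF.nodup, fun v hv => (hdisj v hv).2⟩
  · exact (List.mem_append.1 (hsub.subset hv)).elim (fun hv => (hdisj v hv).1) (hF.mem v)
  · exact (habs v hv).mono le_rfl fun b hb => hperm.symm.subset (List.mem_append_left _ hb)
  · have := hsub.length_le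
    rw [List.length_append, length_pairVerts, length_pairVerts] at this
    omega

end HamiltonCycles

section CyclicExtension

variable {V : Type*} {E : V → V → Prop} {U : Finset V} {d : ℕ}

/-- Nonempty sequences of paths, each followed by an edge to the next one, which begin and end in
`U`; all these paths are disjoint and they cover the complement of `U`. -/
structure IsOuterCover (E : V → V → Prop) (U : Finset V) (𝓛 : List (List (List V))) : Prop where
  ne_nil : 𝓛 ≠ []
  isPathFromTo : ∀ C ∈ 𝓛, IsPathFromTo (LinksTo E) (HeadIn (· ∈ U)) (LastIn (· ∈ U)) C
  isPath : ∀ b ∈ 𝓛.flatten, IsPath E b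
  nodup : 𝓛.flatten.flatten.Nodup
  cover : ∀ v ∉ U, v ∈ 𝓛.flatten.flatten

open Classical in
theorem IsOuterCover.nodup_append {𝓛 : List (List (List V))} (h : IsOuterCover E U 𝓛) {l : List V}
    (hl : l.Nodup) (hdisj : ∀ v ∈ l, v ∉ 𝓛.flatten.flatten) :
    (𝓛.flatten.flatten ++ {v ∈ U | v ∉ 𝓛.flatten.flatten ∧ v ∉ l}.toList ++ l).Nodup := by
  rw [List.nodup_append', List.nodup_append']
  refine ⟨⟨h.nodup, Finset.nodup_toList _, fun v hv hvR => ?_⟩, hl, fun v hv hvl => ?_⟩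
  · exact (Finset.mem_filter.1 (Finset.mem_toList.1 hvR)).2.1 hv
  · refine (List.mem_append.1 hv).elim (hdisj v hvl) fun hvR => ?_
    exact (Finset.mem_filter.1 (Finset.mem_toList.1 hvR)).2.2 hvl

open Classical in
theorem IsOuterCover.mem_append {𝓛 : List (List (List V))} (h : IsOuterCover E U 𝓛) {l : List V}
    (v : V) : v ∈ 𝓛.flatten.flatten ++ {v ∈ U | v ∉ 𝓛.flatten.flatten ∧ v ∉ l}.toList ++ l := by
  rw [List.mem_append, List.mem_append, Finset.mem_toList, Finset.mem_filter]
  have := h.cover v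
  tauto

open Classical in
/-- The list `Z` of vertices which remain outside the cyclic sequence `B` consists of the unused
vertices of a connecting matching, so it lies in `U` and it is short enough to be absorbed. -/
theorem IsAlmostRegularOn.exists_isCyclicPathList_extending (hreg : IsAlmostRegularOn E U d)
    (hE : IsOriented E) (hU : U.Nonempty) {m : ℕ} {𝓛 : List (List (List V))}
    (h𝓛 : IsOuterCover E U 𝓛)
    (hX : 500 * (#{v ∈ U | v ∈ 𝓛.flatten.flatten} + 2 * m) ≤ #U)
    (hm : 200 * (𝓛.length + d) ≤ m) (hN : (#U : ℝ) ^ 2 * (995 / 1000) ^ m < 1) :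
    ∃ B Z, IsCyclicPathList E B ∧ 𝓛.flatten ⊆ B ∧ Z.length ≤ 2 * m ∧ (∀ v ∈ Z, v ∈ U) ∧
      (Z ++ B.flatten).Nodup ∧ ∀ v, v ∈ Z ++ B.flatten := by
  obtain ⟨F, hF, hFm, hconn⟩ := hreg.exists_connecting_matching hE hU (by omega) hX hm hN
  set R := {v ∈ U | v ∉ 𝓛.flatten.flatten ∧ v ∉ pairVerts F}
  obtain ⟨C, hC, hCperm, hCd⟩ := exists_path_cover_of_card_independent_le E R d
    fun I hI h => hreg.card_le_of_independent hE (hI.trans (Finset.filter_subset _ _)) h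
  have hCpath : ∀ D ∈ C.map fun b => [b],
      IsPathFromTo (LinksTo E) (HeadIn (· ∈ U)) (LastIn (· ∈ U)) D := by
    rw [List.forall_mem_map]
    refine fun b hb => isPathFromTo_singleton_of_forall_mem (hC b hb) fun v hv => ?_
    exact Finset.mem_of_mem_filter v
      (Finset.mem_toList.1 (hCperm.subset (List.mem_flatten.2 ⟨b, hb, hv⟩)))
  obtain ⟨B, Ys, hB, hYs, hBperm⟩ := hconn.exists_cyclic_link hF.nodup_pairPaths
    (L := 𝓛 ++ C.map fun b => [b]) (by simp [h𝓛.ne_nil]) (by simpa using hCd)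
    (List.forall_mem_append.2 ⟨h𝓛.isPathFromTo, hCpath⟩)
  rw [List.flatten_append, flatten_map_singleton] at hBperm
  obtain ⟨Y, hY, hYF⟩ := subperm_flatten hYs
  obtain ⟨Z, hZ⟩ := hYF.exists_perm_append
  have hFZ : (Z ++ Ys.flatten).Perm (pairVerts F) :=
    (List.perm_append_comm.trans (hY.symm.append_right Z)).trans hZ.symm
  have hperm : (Z ++ B.flatten).Perm (𝓛.flatten.flatten ++ R.toList ++ pairVerts F) := by
    have h1 := hBperm.flatten
    rw [List.flatten_append, List.flatten_append] at h1
    have h2 := (h1.trans ((hCperm.append_left _).append_right _)).append_left Z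
    refine h2.trans (List.perm_append_comm.trans ?_)
    rw [List.append_assoc]
    exact (List.perm_append_comm.trans hFZ).append_left _
  have hmemF : ∀ v ∈ pairVerts F, v ∈ U ∧ v ∉ 𝓛.flatten.flatten := fun v hv => by
    have := hF.mem v hv
    simp only [Finset.mem_sdiff, Finset.mem_filter, not_and] at this
    exact ⟨this.1, this.2 this.1⟩
  refine ⟨B, Z, ⟨fun b hb => ?_, hB⟩, fun b hb => ?_, ?_, fun v hv => ?_, ?_, fun v => ?_⟩
  · rcases List.mem_append.1 (hBperm.subset hb) with hb | hb
    · exact (List.mem_append.1 hb).elim (h𝓛.isPath b) (hC b)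
    · exact hF.isPath b (hYs.subset hb)
  · exact hBperm.symm.subset (List.mem_append_left _ (List.mem_append_left _ hb))
  · have := hFZ.length_eq
    rw [List.length_append, length_pairVerts] at this
    omega
  · exact (hmemF v (hFZ.subset (List.mem_append_left _ hv))).1
  · exact hperm.nodup_iff.2 (h𝓛.nodup_append hF.nodup fun v hv => (hmemF v hv).2)
  · exact hperm.mem_iff.2 (h𝓛.mem_append v)

open Classical in
theorem IsAlmostRegularOn.exists_isOuterCover [Fintype V] (hreg : IsAlmostRegularOn E U d)
    (hE : IsOriented E) (hU : U.Nonempty) (hd : 200 * d ≤ #U) {c m : ℕ} {L : List (List V)}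
    (hL : ∀ l ∈ L, IsPathFromTo E (fun x => c ≤ #{u ∈ U | E u x}) (fun x => c ≤ #{u ∈ U | E x u}) l)
    (hLperm : L.flatten.Perm Uᶜ.toList) (hc : 2 * L.length ≤ c)
    (hX : 500 * (2 * L.length + 2 * (80400 * m)) ≤ #U)
    (hN : (#U : ℝ) ^ 2 * (995 / 1000) ^ m < 1) :
    ∃ 𝓛, IsOuterCover E U 𝓛 ∧ 𝓛.length = 1 + L.length ∧
      #{v ∈ U | v ∈ 𝓛.flatten.flatten} ≤ 2 * L.length + 2 * (80400 * m) ∧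
      ∀ v ∈ U, HasAbsorbers E 𝓛.flatten (2 * m) v := by
  obtain ⟨L', Ys, hL', hlen, hperm, hYnodup, hYU, hYlen⟩ := exists_extension hc hL
  have hYcard := List.toFinset_card_le Ys
  obtain ⟨P, hP, hPlen⟩ := hreg.exists_isAbsorbingPath hE hU hd (X := Ys.toFinset) (by omega) hN
  have hPmem : ∀ v ∈ P.flatten, v ∈ U ∧ v ∉ Ys := by simpa using hP.mem
  have hL'mem : ∀ v, v ∈ L'.flatten ↔ v ∉ U ∨ v ∈ Ys := fun v => by
    rw [hperm.mem_iff, List.mem_append, hLperm.mem_iff, Finset.mem_toList, Finset.mem_compl]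
  have hflat : (P :: L'.map fun b => [b]).flatten = P ++ L' := by
    rw [List.flatten_cons, flatten_map_singleton]
  have hcard : #{v ∈ U | v ∈ P.flatten ++ L'.flatten} ≤ Ys.length + P.flatten.length := by
    rw [add_comm, ← List.length_append]
    refine (Finset.card_le_card fun v hv => ?_).trans (List.toFinset_card_le (P.flatten ++ Ys))
    rw [Finset.mem_filter, List.mem_append, hL'mem] at hv
    rw [List.mem_toFinset, List.mem_append]
    tauto
  refine ⟨P :: L'.map fun b => [b], ⟨List.cons_ne_nil _ _, ?_, ?_, ?_, ?_⟩, ?_, ?_, ?_⟩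
  · exact List.forall_mem_cons.2 ⟨hP.isPathFromTo, List.forall_mem_map.2 fun b hb =>
      isPathFromTo_singleton.2 ⟨(hL' b hb).head, (hL' b hb).last⟩⟩
  · rw [hflat]
    exact List.forall_mem_append.2 ⟨hP.isPath, fun b hb => (hL' b hb).isPath⟩
  · rw [hflat, List.flatten_append, List.nodup_append', hperm.nodup_iff, List.nodup_append',
      hLperm.nodup_iff]
    refine ⟨hP.nodup, ⟨Finset.nodup_toList _, hYnodup, fun v hv hvY => ?_⟩, fun v hv hvL => ?_⟩
    · rw [hLperm.mem_iff, Finset.mem_toList, Finset.mem_compl] at hv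
      exact hv (hYU v hvY)
    · exact ((hL'mem v).1 hvL).elim (absurd (hPmem v hv).1) (hPmem v hv).2
  · rw [hflat, List.flatten_append]
    exact fun v hv => List.mem_append_right _ ((hL'mem v).2 (Or.inl hv))
  · rw [List.length_cons, List.length_map, hlen, add_comm]
  · rw [hflat, List.flatten_append]
    omega
  · rw [hflat]
    exact fun v hv => (hP.absorbs v hv).mono le_rfl (List.subset_append_left _ _)

open Classical in
theorem IsAlmostRegularOn.exists_isClosedPath [Fintype V] (hreg : IsAlmostRegularOn E U d)
    (hE : IsOriented E) (hU : U.Nonempty) {c m : ℕ} {L : List (List V)}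
    (hL : ∀ l ∈ L, IsPathFromTo E (fun x => c ≤ #{u ∈ U | E u x}) (fun x => c ≤ #{u ∈ U | E x u}) l)
    (hLperm : L.flatten.Perm Uᶜ.toList) (hc : 2 * L.length ≤ c)
    (hm : 200 * (1 + L.length + d) ≤ m) (hmU : 10 ^ 9 * m ≤ #U)
    (hN : (#U : ℝ) ^ 2 * (995 / 1000) ^ m < 1) :
    ∃ l : List V, l.Nodup ∧ (∀ v, v ∈ l) ∧ IsClosedPath E l := by
  obtain ⟨𝓛, h𝓛, hlen, hcard, habs⟩ := hreg.exists_isOuterCover hE hU (by omega) hL hLperm hc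
    (by omega) hN
  obtain ⟨B, Z, hB, hsub, hZlen, hZU, hnodup, hmem⟩ :=
    hreg.exists_isCyclicPathList_extending hE hU h𝓛 (by omega) (hlen ▸ hm) hN
  obtain ⟨B', hB', hperm⟩ := hB.exists_absorb Z fun v hv => (habs v (hZU v hv)).mono hZlen hsub
  exact ⟨B'.flatten, hperm.nodup_iff.2 hnodup, fun v => hperm.mem_iff.2 (hmem v),
    hB'.isClosedPath_flatten⟩

theorem IsClosedPath.exists_isHamCycle [Fintype V] {l : List V} (hl : IsClosedPath E l)
    (hnodup : l.Nodup) (hmem : ∀ v, v ∈ l) : ∃ f, IsHamCycle E f := by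
  classical
  obtain ⟨⟨hne, hchain⟩, hclosed⟩ := hl
  have hlen : l.length = Fintype.card V := by
    rw [← List.toFinset_card_of_nodup hnodup, (Finset.card_eq_iff_eq_univ _).2]
    simpa [Finset.eq_univ_iff_forall] using hmem
  unfold IsHamCycle
  rw [← hlen]
  have : NeZero l.length := ⟨(List.length_pos_iff.2 hne).ne'⟩
  refine ⟨fun i => l[i.val]'(ZMod.val_lt i), ?_, fun i => ?_⟩
  · rw [Fintype.bijective_iff_injective_and_card, ZMod.card]
    exact ⟨fun i j h => ZMod.val_injective _ (hnodup.getElem_inj_iff.1 h), hlen⟩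
  have hi := ZMod.val_lt i
  have hval : (i + 1).val = (i.val + 1) % l.length := by
    conv_lhs => rw [← ZMod.natCast_zmod_val i]
    rw [← Nat.cast_add_one, ZMod.val_natCast]
  rcases Nat.lt_or_ge (i.val + 1) l.length with h | h
  · simp only [hval, Nat.mod_eq_of_lt h]
    exact List.isChain_iff_getElem.1 hchain _ h
  · have hi1 : l.length - 1 = i.val := by omega
    simp only [hval, show i.val + 1 = l.length by omega, Nat.mod_self]
    refine hclosed _ ?_ _ ?_
    · rw [List.getLast?_eq_getElem?, hi1]
      exact List.getElem?_eq_getElem hi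
    · rw [List.head?_eq_getElem?]
      exact List.getElem?_eq_getElem (by omega)

open Classical in
theorem IsAlmostRegularOn.exists_isHamCycle [Fintype V] (hreg : IsAlmostRegularOn E U d)
    (hE : IsOriented E) (hU : U.Nonempty) {M : V → Option V} (hM : IsLinearForest M)
    (hMU : ∀ v w, M v = some w → w ∉ U) (hME : ∀ v w, M v = some w → E v w) {κ m : ℕ}
    (hκ : #{v ∈ Uᶜ | M v = none} ≤ κ)
    (hlast : ∀ v ∉ U, M v = none → 2 * κ ≤ #{u ∈ U | E v u})
    (hfirst : ∀ w ∉ U, (∀ v ∉ U, M v ≠ some w) → 2 * κ ≤ #{u ∈ U | E u w})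
    (hm : 200 * (1 + κ + d) ≤ m) (hmU : 10 ^ 9 * m ≤ #U)
    (hN : (#U : ℝ) ^ 2 * (995 / 1000) ^ m < 1) : ∃ f, IsHamCycle E f := by
  obtain ⟨L, hL⟩ := hM.exists_isForestDecomposition Uᶜ
    fun v _ w hvw => Finset.mem_compl.2 (hMU v w hvw)
  have hperm : (L.map fun p => p.1 :: p.2).flatten.Perm Uᶜ.toList := by
    rw [← List.flatMap_def]
    exact hL.perm
  have hmem : ∀ p ∈ L, ∀ x ∈ p.1 :: p.2, x ∉ U := fun p hp x hx => by
    have := hL.perm.subset (List.mem_flatMap.2 ⟨p, hp, hx⟩)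
    rwa [Finset.mem_toList, Finset.mem_compl] at this
  have hlen : L.length ≤ κ := hL.length.trans_le hκ
  have hpath : ∀ p ∈ L, IsPathFromTo E (fun x => 2 * κ ≤ #{u ∈ U | E u x})
      (fun x => 2 * κ ≤ #{u ∈ U | E x u}) (p.1 :: p.2) := fun p hp => by
    have h : IsPath E (p.1 :: p.2) := ⟨List.cons_ne_nil _ _, (hL.sys.isChain p hp).imp hME⟩
    refine h.isPathFromTo (fun x hx => ?_) fun x hx => ?_
    · cases hx
      exact hfirst p.1 (hmem p hp p.1 List.mem_cons_self) fun v hv =>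
        hL.first p hp v (Finset.mem_compl.2 hv)
    · exact hlast x (hmem p hp x (List.mem_of_getLast? hx)) (hL.last p hp x hx)
  obtain ⟨l, hnodup, hl, hclosed⟩ := hreg.exists_isClosedPath hE hU (c := 2 * κ)
    (L := L.map fun p => p.1 :: p.2) (List.forall_mem_map.2 hpath) hperm
    (by rw [List.length_map]; omega) (by rw [List.length_map]; omega) hmU hN
  exact hclosed.exists_isHamCycle hnodup hl

end CyclicExtension

section Partition

variable {V J ι : Type*} [Fintype J]

theorem sum_exp_centred_le [Nonempty J] [DecidableEq J] {h : ℝ} (hh : |h| ≤ 1) (j : J) :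
    ∑ x : J, Real.exp (h * ((if x = j then 1 else 0) - 1 / Fintype.card J)) ≤
      Fintype.card J * Real.exp (h ^ 2) := by
  have hg : (1 : ℝ) ≤ Fintype.card J := by exact_mod_cast Fintype.card_pos
  have hbound : ∀ x : J, |(if x = j then (1 : ℝ) else 0) - 1 / Fintype.card J| ≤ 1 := fun x => by
    have h1 : (1 : ℝ) / Fintype.card J ≤ 1 := (div_le_one (by linarith)).2 hg
    have h2 : (0 : ℝ) ≤ 1 / Fintype.card J := by positivity
    rw [abs_le]
    split_ifs <;> constructor <;> linarith
  have hterm : ∀ x : J, Real.exp (h * ((if x = j then 1 else 0) - 1 / Fintype.card J)) ≤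
      1 + h * ((if x = j then 1 else 0) - 1 / Fintype.card J) + h ^ 2 := fun x => by
    set y := (if x = j then (1 : ℝ) else 0) - 1 / Fintype.card J
    have hhy : |h * y| ≤ 1 := by
      rw [abs_mul]
      exact mul_le_one₀ hh (abs_nonneg _) (hbound x)
    have hexp := (abs_le.1 (Real.abs_exp_sub_one_sub_id_le hhy)).2
    have hy1 : y ^ 2 ≤ 1 := (sq_le_one_iff_abs_le_one y).2 (hbound x)
    nlinarith [sq_nonneg h]
  calc _ ≤ ∑ x : J, (1 + h * ((if x = j then 1 else 0) - 1 / Fintype.card J) + h ^ 2) :=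
        Finset.sum_le_sum fun x _ => hterm x
    _ = Fintype.card J * (h ^ 2 + 1) := by
      rw [Finset.sum_add_distrib, Finset.sum_add_distrib, ← Finset.mul_sum, Finset.sum_sub_distrib]
      simp only [Finset.sum_const, Finset.card_univ, nsmul_eq_mul, Finset.sum_ite_eq',
        Finset.mem_univ, if_true]
      field_simp
      ring
    _ ≤ _ := by
      gcongr
      exact Real.add_one_le_exp _

open Classical in
/-- The number of elements of `A` in the class `j` of the partition `χ`, minus its expectation for a
random partition. -/
noncomputable def deviation (χ : V → J) (A : Finset V) (j : J) : ℝ :=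
  #{v ∈ A | χ v = j} - #A / Fintype.card J

variable [Fintype V]

/-- An exponential moment of the deviation: the expectation over all partitions factorises over the
vertices. -/
theorem sum_exp_mul_deviation_le [DecidableEq V] [Nonempty J] {h : ℝ} (hh : |h| ≤ 1)
    (A : Finset V) (j : J) : ∑ χ : V → J, Real.exp (h * deviation χ A j) ≤
      (Fintype.card J * Real.exp (h ^ 2)) ^ Fintype.card V := by
  classical
  let φ : V → J → ℝ := fun v x =>
    if v ∈ A then Real.exp (h * ((if x = j then 1 else 0) - 1 / Fintype.card J)) else 1
  have hφ : ∀ χ : V → J, Real.exp (h * deviation χ A j) = ∏ v, φ v (χ v) := fun χ => by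
    rw [Finset.prod_ite_mem, Finset.univ_inter, ← Real.exp_sum, ← Finset.mul_sum,
      Finset.sum_sub_distrib, Finset.sum_boole, Finset.sum_const, nsmul_eq_mul, mul_one_div,
      deviation]
  rw [Finset.sum_congr rfl fun χ _ => hφ χ, ← Fintype.piFinset_univ, ← Finset.prod_univ_sum,
    ← Finset.card_univ (α := V), ← Finset.prod_const]
  refine Finset.prod_le_prod (fun v _ => Finset.sum_nonneg fun x _ => ?_) fun v _ => ?_
  · simp only [φ]
    split_ifs <;> positivity
  · by_cases hv : v ∈ A
    · simpa only [φ, hv, if_true] using sum_exp_centred_le hh j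
    · simp only [φ, hv, if_false, Finset.sum_const, Finset.card_univ, nsmul_eq_mul]
      gcongr
      exact Real.one_le_exp (sq_nonneg h)

theorem sum_exp_mul_abs_deviation_le [DecidableEq V] [Nonempty J] {h : ℝ} (hh0 : 0 ≤ h)
    (hh1 : h ≤ 1) (A : Finset V) (j : J) : ∑ χ : V → J, Real.exp (h * |deviation χ A j|) ≤
      2 * (Fintype.card J * Real.exp (h ^ 2)) ^ Fintype.card V := by
  have habs : |h| ≤ 1 := by rwa [abs_of_nonneg hh0]
  calc _ ≤ ∑ χ : V → J, (Real.exp (h * deviation χ A j) + Real.exp (-h * deviation χ A j)) := by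
        refine Finset.sum_le_sum fun χ _ => ?_
        rw [neg_mul, ← abs_of_nonneg hh0, ← abs_mul, abs_of_nonneg hh0]
        exact Real.exp_abs_le _
    _ ≤ _ := by
      rw [Finset.sum_add_distrib, two_mul]
      refine add_le_add (sum_exp_mul_deviation_le habs A j) ?_
      rw [← neg_sq h]
      exact sum_exp_mul_deviation_le (by rwa [abs_neg]) A j

theorem exists_even_partition [Nonempty J] [Fintype ι] (A : ι → Finset V) {ε : ℝ}
    (hε : 0 < ε) (hε1 : ε ≤ 1)
    (hn : 2 * Fintype.card ι * Fintype.card J < Real.exp (ε ^ 2 / 4 * Fintype.card V)) :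
    ∃ χ : V → J, ∀ t j, |deviation χ (A t) j| ≤ ε * Fintype.card V := by
  classical
  obtain ⟨χ, -, hχ⟩ : ∃ χ ∈ (Finset.univ : Finset (V → J)),
      ∑ tj : ι × J, Real.exp (ε / 2 * |deviation χ (A tj.1) tj.2|) <
        Real.exp (ε ^ 2 / 2 * Fintype.card V) := by
    refine Finset.exists_lt_of_sum_lt ?_
    calc _ = ∑ tj : ι × J, ∑ χ : V → J, Real.exp (ε / 2 * |deviation χ (A tj.1) tj.2|) :=
          Finset.sum_comm
      _ ≤ ∑ _tj : ι × J, 2 * (Fintype.card J * Real.exp ((ε / 2) ^ 2)) ^ Fintype.card V :=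
          Finset.sum_le_sum fun tj _ => sum_exp_mul_abs_deviation_le (half_pos hε).le
            (by linarith) _ _
      _ = 2 * Fintype.card ι * Fintype.card J *
          (Fintype.card J ^ Fintype.card V * Real.exp (ε ^ 2 / 4 * Fintype.card V)) := by
          rw [Finset.sum_const, Finset.card_univ, Fintype.card_prod, nsmul_eq_mul, mul_pow,
            ← Real.exp_nat_mul]
          push_cast
          ring_nf
      _ < Real.exp (ε ^ 2 / 4 * Fintype.card V) *
          (Fintype.card J ^ Fintype.card V * Real.exp (ε ^ 2 / 4 * Fintype.card V)) := by
            have := Fintype.card_pos (α := J)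
            gcongr
      _ = ∑ _χ : V → J, Real.exp (ε ^ 2 / 2 * Fintype.card V) := by
          rw [Finset.sum_const, Finset.card_univ, Fintype.card_fun, nsmul_eq_mul, mul_left_comm,
            ← Real.exp_add]
          push_cast
          ring_nf
  refine ⟨χ, fun t j => ?_⟩
  have hterm := (Finset.single_le_sum (f := fun tj : ι × J =>
    Real.exp (ε / 2 * |deviation χ (A tj.1) tj.2|)) (fun _ _ => Real.exp_nonneg _)
    (Finset.mem_univ (t, j))).trans_lt hχ
  have hlt := Real.exp_lt_exp.1 hterm
  nlinarith

end Partition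

section EdgeColouring

variable {X : Type*} [Fintype X]

theorem exists_perm_pos_of_sum_eq {A : X → X → ℕ} {k : ℕ} (hk : 0 < k)
    (hrow : ∀ a, ∑ b, A a b = k) (hcol : ∀ b, ∑ a, A a b = k) :
    ∃ σ : Equiv.Perm X, ∀ a, 0 < A a (σ a) := by
  classical
  have hk' : (k : ℚ) ≠ 0 := by exact_mod_cast hk.ne'
  have hstoch : Matrix.of (fun a b => (A a b : ℚ) / k) ∈ doublyStochastic ℚ X := by
    rw [mem_doublyStochastic_iff_sum]
    refine ⟨fun a b => by simp only [Matrix.of_apply]; positivity, fun a => ?_, fun b => ?_⟩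
    · simp only [Matrix.of_apply]
      rw [← Finset.sum_div, div_eq_one_iff_eq hk', ← hrow a, Nat.cast_sum]
    · simp only [Matrix.of_apply]
      rw [← Finset.sum_div, div_eq_one_iff_eq hk', ← hcol b, Nat.cast_sum]
  obtain ⟨w, hw0, hw1, hw⟩ := exists_eq_sum_perm_of_mem_doublyStochastic hstoch
  obtain ⟨σ, -, hσ⟩ := Finset.exists_lt_of_sum_lt (s := Finset.univ) (f := fun _ => (0 : ℚ))
    (g := w) (by simp [hw1])
  refine ⟨σ, fun a => Nat.pos_of_ne_zero fun h0 => ?_⟩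
  have hentry := congrFun (congrFun hw a) (σ a)
  simp only [Equiv.Perm.permMatrix, Matrix.sum_apply, Matrix.smul_apply, PEquiv.toMatrix_apply,
    Equiv.toPEquiv_apply, Option.mem_def, Option.some.injEq, smul_eq_mul, mul_ite, mul_one,
    mul_zero, Matrix.of_apply, h0, Nat.cast_zero, zero_div] at hentry
  have hle := Finset.single_le_sum (f := fun τ : Equiv.Perm X => if τ a = σ a then w τ else 0)
    (fun τ _ => ite_nonneg (hw0 τ) le_rfl) (Finset.mem_univ σ)
  rw [hentry, if_pos rfl] at hle
  exact hσ.not_ge hle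

theorem exists_perms_of_sum_eq {A : X → X → ℕ} {k : ℕ} (hrow : ∀ a, ∑ b, A a b = k)
    (hcol : ∀ b, ∑ a, A a b = k) :
    ∃ σ : Fin k → Equiv.Perm X, ∀ a b, 0 < A a b → ∃ i, σ i a = b := by
  classical
  induction k generalizing A with
  | zero =>
    refine ⟨fun _ => 1, fun a b hab => absurd (hrow a) ?_⟩
    exact (Finset.sum_pos' (fun _ _ => Nat.zero_le _) ⟨b, Finset.mem_univ b, hab⟩).ne'
  | succ k ih =>
    obtain ⟨σ, hσ⟩ := exists_perm_pos_of_sum_eq k.succ_pos hrow hcol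
    have hadd : ∀ a b, A a b - (if σ a = b then 1 else 0) + (if σ a = b then 1 else 0) = A a b := by
      intro a b
      refine Nat.sub_add_cancel ?_
      split_ifs with h
      · exact h ▸ hσ a
      · exact Nat.zero_le _
    have hrow' : ∀ a, ∑ b, (A a b - if σ a = b then 1 else 0) = k := fun a => by
      have := hrow a
      rw [← Finset.sum_congr rfl fun b _ => hadd a b, Finset.sum_add_distrib] at this
      simpa using this
    have hcol' : ∀ b, ∑ a, (A a b - if σ a = b then 1 else 0) = k := fun b => by
      have := hcol b
      rw [← Finset.sum_congr rfl fun a _ => hadd a b, Finset.sum_add_distrib] at this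
      simpa [← Equiv.eq_symm_apply] using this
    obtain ⟨τ, hτ⟩ := ih hrow' hcol'
    refine ⟨Fin.cons σ τ, fun a b h => ?_⟩
    by_cases hab : σ a = b
    · exact ⟨0, hab⟩
    · obtain ⟨i, hi⟩ := hτ a b (by simpa [hab] using h)
      exact ⟨i.succ, hi⟩

/-- A colouring with `k` colours of the bipartite graph with edge relation `B` in which edges
sharing an endpoint on either side have different colours. -/
structure IsProperEdgeColouring (B : X → X → Prop) (k : ℕ) (c : X → X → ℕ) : Prop where
  lt : ∀ a b, B a b → c a b < k
  inj_right : ∀ a b b', B a b → B a b' → c a b = c a b' → b = b'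
  inj_left : ∀ a a' b, B a b → B a' b → c a b = c a' b → a = a'

open Classical in
theorem exists_isProperEdgeColouring {B : X → X → Prop} {k : ℕ}
    (hout : ∀ a, #{b | B a b} ≤ k) (hin : ∀ b, #{a | B a b} ≤ k) :
    ∃ c, IsProperEdgeColouring B k c := by
  -- Two copies of the bipartite graph, one of them reversed, with the missing degrees filled up by
  -- multiple edges between the copies of a vertex, form a regular bipartite multigraph.
  obtain ⟨σ, hσ⟩ := exists_perms_of_sum_eq (X := X ⊕ X) (k := k)
    (A := Sum.elim
      (fun a => Sum.elim (fun b => if B a b then 1 else 0)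
        (fun b => if a = b then k - #{b | B a b} else 0))
      (fun a => Sum.elim (fun b => if a = b then k - #{c | B c b} else 0)
        (fun b => if B b a then 1 else 0)))
    (by
      rintro (a | a)
      · simpa using Nat.add_sub_cancel' (hout a)
      · simpa using Nat.sub_add_cancel (hin a))
    (by
      rintro (a | a)
      · simpa using Nat.add_sub_cancel' (hin a)
      · simpa using Nat.sub_add_cancel (hout a))
  have hcolour : ∀ a b, ∃ i : ℕ, B a b → ∃ h : i < k, σ ⟨i, h⟩ (Sum.inl a) = Sum.inl b := by
    intro a b
    by_cases hab : B a b
    · obtain ⟨i, hi⟩ := hσ (Sum.inl a) (Sum.inl b) (by simp [hab])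
      exact ⟨i, fun _ => ⟨i.2, hi⟩⟩
    · exact ⟨0, fun h => absurd h hab⟩
  choose c hc using hcolour
  refine ⟨c, fun a b hab => (hc a b hab).1, fun a b b' h h' he => ?_, fun a a' b h h' he => ?_⟩
  · obtain ⟨_, hσb⟩ := hc a b h
    obtain ⟨_, hσb'⟩ := hc a b' h'
    simp only [he] at hσb
    exact Sum.inl_injective (hσb.symm.trans hσb')
  · obtain ⟨_, hσa⟩ := hc a b h
    obtain ⟨_, hσa'⟩ := hc a' b h'
    simp only [he] at hσa
    exact Sum.inl_injective ((σ _).injective (hσa.trans hσa'.symm))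

end EdgeColouring

section Packing

variable {V ι Λ : Type*}

/-- The edge from `x` to `y` is an edge of the cyclic sequence `f`. -/
def CycleEdge {n : ℕ} (f : ZMod n → V) (x y : V) : Prop := ∃ i, f i = x ∧ f (i + 1) = y

/-- The edges of the matching `M`, together with the edges of `C` which start in vertices not
matched by `M`. -/
def Completion (M : V → Option V) (C : V → V → Prop) (v w : V) : Prop :=
  M v = some w ∨ M v = none ∧ C v w

/-- No edge occurs twice among the matchings `M j` and the digraphs `C l`. -/
structure AreEdgeDisjoint (M : ι → V → Option V) (C : Λ → V → V → Prop) : Prop where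
  matching : ∀ j j' v w, M j v = some w → M j' v = some w → j = j'
  mixed : ∀ j l v w, M j v = some w → ¬ C l v w
  digraph : ∀ l l' v w, C l v w → C l' v w → l = l'

variable [Fintype V] {E : V → V → Prop} {f : ZMod (Fintype.card V) → V} {x x' y y' : V}

/-- For `j` in `S`, the sequences `f j` are edge-disjoint Hamilton cycles of the digraphs `E j`. -/
structure IsHamPacking (E : ι → V → V → Prop) (S : Finset ι)
    (f : ι → ZMod (Fintype.card V) → V) : Prop where
  isHamCycle : ∀ j ∈ S, IsHamCycle (E j) (f j)
  disjoint : ∀ j ∈ S, ∀ j' ∈ S, j ≠ j' → ∀ x y, CycleEdge (f j) x y → ¬ CycleEdge (f j') x y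

theorem IsHamCycle.edge (hf : IsHamCycle E f) (h : CycleEdge f x y) : E x y := by
  obtain ⟨i, rfl, rfl⟩ := h
  exact hf.2 i

theorem IsHamCycle.succ_unique (hf : IsHamCycle E f) (h : CycleEdge f x y)
    (h' : CycleEdge f x y') : y = y' := by
  obtain ⟨i, rfl, rfl⟩ := h
  obtain ⟨j, hj, rfl⟩ := h'
  rw [hf.1.1 hj]

theorem IsHamCycle.pred_unique (hf : IsHamCycle E f) (h : CycleEdge f x y)
    (h' : CycleEdge f x' y) : x = x' := by
  obtain ⟨i, rfl, rfl⟩ := h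
  obtain ⟨j, rfl, hj⟩ := h'
  rw [add_right_cancel (hf.1.1 hj)]

theorem IsHamCycle.exists_succ (hf : IsHamCycle E f) (x : V) : ∃ y, CycleEdge f x y := by
  obtain ⟨i, rfl⟩ := hf.1.2 x
  exact ⟨_, i, rfl, rfl⟩

theorem IsHamCycle.mono {E' : V → V → Prop} (hf : IsHamCycle E f) (h : ∀ x y, E x y → E' x y) :
    IsHamCycle E' f :=
  ⟨hf.1, fun i => h _ _ (hf.2 i)⟩

theorem IsHamCycle.matching_eq_some {M : V → Option V} {C : V → V → Prop}
    (hf : IsHamCycle (Completion M C) f) (hx : M x = some y) : CycleEdge f x y := by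
  obtain ⟨w, hw⟩ := hf.exists_succ x
  rcases hf.edge hw with h | ⟨h, -⟩
  · rwa [← Option.some.inj (h.symm.trans hx)]
  · cases h.symm.trans hx

theorem IsHamPacking.insert [DecidableEq ι] {E : ι → V → V → Prop} {S : Finset ι}
    {f : ι → ZMod (Fintype.card V) → V} (hf : IsHamPacking E S f) {j : ι} (hj : j ∉ S)
    {g : ZMod (Fintype.card V) → V} (hg : IsHamCycle (E j) g)
    (hgf : ∀ j' ∈ S, ∀ x y, CycleEdge g x y → ¬ CycleEdge (f j') x y) :
    IsHamPacking E (insert j S) (Function.update f j g) := by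
  have hold : ∀ j' ∈ S, Function.update f j g j' = f j' := fun j' hj' =>
    Function.update_of_ne (ne_of_mem_of_not_mem hj' hj) g f
  constructor
  · rw [Finset.forall_mem_insert, Function.update_self]
    exact ⟨hg, fun j' hj' => hold j' hj' ▸ hf.isHamCycle j' hj'⟩
  · intro a ha b hb hab x y
    rcases Finset.mem_insert.1 ha with rfl | ha' <;> rcases Finset.mem_insert.1 hb with rfl | hb'
    · exact absurd rfl hab
    · rw [Function.update_self, hold b hb']
      exact hgf b hb' x y
    · rw [Function.update_self, hold a ha']
      exact fun h h' => hgf a ha' x y h' h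
    · rw [hold a ha', hold b hb']
      exact hf.disjoint a ha' b hb' hab x y

section

variable {ℓ : ι → Λ} {M : ι → V → Option V} {C : Λ → V → V → Prop} {S : Finset ι}
  {f : ι → ZMod (Fintype.card V) → V} {l : Λ} {F : V → V → Prop}

theorem AreEdgeDisjoint.eq_of_cycleEdge (hMC : AreEdgeDisjoint M C)
    (hf : IsHamPacking (fun j => Completion (M j) (C (ℓ j))) S f) {j : ι} (hj : j ∈ S)
    (hxy : CycleEdge (f j) x y) (hC : C l x y) : ℓ j = l ∧ M j x = none := by
  rcases (hf.isHamCycle j hj).edge hxy with h | ⟨h, h'⟩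
  · exact absurd hC (hMC.mixed _ _ _ _ h)
  · exact ⟨hMC.digraph _ _ _ _ h' hC, h⟩

open Classical in
theorem AreEdgeDisjoint.card_used_out_le [Fintype ι] (hMC : AreEdgeDisjoint M C)
    (hf : IsHamPacking (fun j => Completion (M j) (C (ℓ j))) S f)
    (hF : ∀ v w, F v w → ∃ j ∈ S, CycleEdge (f j) v w) (v : V) :
    #{w | F v w ∧ C l v w} ≤ #{j | ℓ j = l ∧ M j v = none} := by
  refine Finset.card_le_card_of_forall_subsingleton (fun w j => j ∈ S ∧ CycleEdge (f j) v w)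
    (fun w hw => ?_) fun j _ w hw w' hw' =>
      (hf.isHamCycle j hw.2.1).succ_unique hw.2.2 hw'.2.2
  obtain ⟨-, hF', hC⟩ := Finset.mem_filter.1 hw
  obtain ⟨j, hj, hvw⟩ := hF v w hF'
  exact ⟨j, Finset.mem_filter.2 ⟨Finset.mem_univ j, hMC.eq_of_cycleEdge hf hj hvw hC⟩, hj, hvw⟩

open Classical in
theorem AreEdgeDisjoint.card_used_in_le [Fintype ι] (hMC : AreEdgeDisjoint M C)
    (hf : IsHamPacking (fun j => Completion (M j) (C (ℓ j))) S f)
    (hF : ∀ v w, F v w → ∃ j ∈ S, CycleEdge (f j) v w) (w : V) :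
    #{v | F v w ∧ C l v w} ≤ #{j | ℓ j = l ∧ ∀ v, M j v ≠ some w} := by
  refine Finset.card_le_card_of_forall_subsingleton (fun v j => j ∈ S ∧ CycleEdge (f j) v w)
    (fun v hv => ?_) fun j _ v hv v' hv' =>
      (hf.isHamCycle j hv.2.1).pred_unique hv.2.2 hv'.2.2
  obtain ⟨-, hF', hC⟩ := Finset.mem_filter.1 hv
  obtain ⟨j, hj, hvw⟩ := hF v w hF'
  obtain ⟨hℓ, hnone⟩ := hMC.eq_of_cycleEdge hf hj hvw hC
  refine ⟨j, Finset.mem_filter.2 ⟨Finset.mem_univ j, hℓ, fun v' hv' => ?_⟩, hj, hvw⟩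
  have hcyc := hf.isHamCycle j hj
  rw [hcyc.pred_unique (hcyc.matching_eq_some hv') hvw, hnone] at hv'
  cases hv'

end

open Classical in
/-- The digraph `F` stands for the edges used by earlier cycles. An earlier cycle uses an edge of
`C (ℓ j)` out of `v` only if its own matching leaves `v` unmatched. -/
theorem AreEdgeDisjoint.exists_isHamPacking [Fintype ι] {ℓ : ι → Λ} {M : ι → V → Option V}
    {C : Λ → V → V → Prop} (hMC : AreEdgeDisjoint M C)
    (hex : ∀ j (F : V → V → Prop),
      (∀ v, #{w | F v w ∧ C (ℓ j) v w} ≤ #{j' | ℓ j' = ℓ j ∧ M j' v = none}) →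
      (∀ w, #{v | F v w ∧ C (ℓ j) v w} ≤ #{j' | ℓ j' = ℓ j ∧ ∀ v, M j' v ≠ some w}) →
      ∃ f, IsHamCycle (Completion (M j) fun v w => C (ℓ j) v w ∧ ¬ F v w) f) :
    ∃ f, IsHamPacking (fun j => Completion (M j) (C (ℓ j))) Finset.univ f := by
  suffices h : ∀ S, ∃ f, IsHamPacking (fun j => Completion (M j) (C (ℓ j))) S f from h _
  intro S
  induction S using Finset.induction_on with
  | empty =>
    choose f _ using fun j => hex j (fun _ _ => False) (by simp) (by simp)
    exact ⟨f, by simp, by simp⟩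
  | insert j S hj ih =>
    obtain ⟨f, hf⟩ := ih
    obtain ⟨g, hg⟩ := hex j (fun v w => ∃ j' ∈ S, CycleEdge (f j') v w)
      (hMC.card_used_out_le hf fun _ _ => id) (hMC.card_used_in_le hf fun _ _ => id)
    have hg' : IsHamCycle (Completion (M j) (C (ℓ j))) g :=
      hg.mono fun x y h => h.imp_right fun h => ⟨h.1, h.2.1⟩
    refine ⟨Function.update f j g, hf.insert hj hg' ?_⟩
    intro j' hj' x y hxy hxy'
    rcases hg.edge hxy with h | ⟨-, -, h⟩
    · rcases (hf.isHamCycle j' hj').edge hxy' with h' | ⟨-, h'⟩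
      · exact hj (hMC.matching _ _ _ _ h h' ▸ hj')
      · exact hMC.mixed _ _ _ _ h h'
    · exact h ⟨j', hj', hxy'⟩

end Packing

section BrokenMatchings

theorem val_lt_val_add_one {s : ℕ} [NeZero s] {t : ZMod s} (ht : t ≠ -1) :
    t.val < (t + 1).val := by
  have hcast : t + 1 = ((t.val + 1 : ℕ) : ZMod s) := by
    rw [Nat.cast_add, ZMod.natCast_zmod_val, Nat.cast_one]
  have hs : t.val + 1 ≠ s := fun h => ht (eq_neg_of_add_eq_zero_left (by
    rw [hcast, h, ZMod.natCast_self]))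
  have hlt := ZMod.val_lt t
  rw [hcast, ZMod.val_natCast, Nat.mod_eq_of_lt (by omega)]
  exact Nat.lt_succ_self _

variable {V : Type*}

open Classical in
/-- The matching formed by the edges of colour `k` under `c` which start in a vertex satisfying
`q`. -/
noncomputable def colourClass (B : V → V → Prop) (c : V → V → ℕ) (q : V → Prop) (k : ℕ) (v : V) :
    Option V :=
  if h : ∃ w, B v w ∧ c v w = k ∧ q v then some h.choose else none

theorem IsProperEdgeColouring.colourClass_eq_some_iff {B : V → V → Prop} {c : V → V → ℕ}
    {q : V → Prop} {k Δ : ℕ} (hc : IsProperEdgeColouring B Δ c) {v w : V} :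
    colourClass B c q k v = some w ↔ B v w ∧ c v w = k ∧ q v := by
  unfold colourClass
  split_ifs with h
  · obtain ⟨hB, hk, -⟩ := h.choose_spec
    rw [Option.some_inj]
    exact ⟨fun h' => h' ▸ h.choose_spec,
      fun h' => hc.inj_right v _ _ hB h'.1 (hk.trans h'.2.1.symm)⟩
  · simpa using fun hB hk hq => h ⟨w, hB, hk, hq⟩

/-- Disjoint linear forests in the digraph `B`. -/
structure IsForestFamily {ι : Type*} (B : V → V → Prop) (M : ι → V → Option V) : Prop where
  adj : ∀ k v w, M k v = some w → B v w
  disjoint : ∀ k k' v w, M k v = some w → M k' v = some w → k = k'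
  isLinearForest : ∀ k, IsLinearForest (M k)

/-- Following the edges of a matching, the labels run through `e + e`, `e + e + e`, …, and the path
stops when the label `e` is reached. -/
theorem IsProperEdgeColouring.isForestFamily {s : ℕ} [Fact s.Prime] {z : V → ZMod s} {e : ZMod s}
    (he : e ≠ 0) {B : V → V → Prop} (hB : ∀ v w, B v w → z w = z v + e) {Δ : ℕ} {c : V → V → ℕ}
    (hc : IsProperEdgeColouring B Δ c) :
    IsForestFamily B fun k : Fin Δ => colourClass B c (fun v => z v ≠ e) k where
  adj k v w h := (hc.colourClass_eq_some_iff.1 h).1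
  disjoint k k' v w h h' := Fin.ext <|
    (hc.colourClass_eq_some_iff.1 h).2.1.symm.trans (hc.colourClass_eq_some_iff.1 h').2.1
  isLinearForest k := by
    refine ⟨fun v v' w h h' => ?_, fun v => ((z v - (e + e)) * e⁻¹).val, fun v w h => ?_⟩
    · rw [hc.colourClass_eq_some_iff] at h h'
      exact hc.inj_left v v' w h.1 h'.1 (h.2.1.trans h'.2.1.symm)
    · obtain ⟨hvw, -, hz⟩ := hc.colourClass_eq_some_iff.1 h
      have hstep : (z w - (e + e)) * e⁻¹ = (z v - (e + e)) * e⁻¹ + 1 := by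
        rw [hB v w hvw]
        field_simp
        ring
      simp only [hstep]
      refine val_lt_val_add_one fun hneg => hz ?_
      rw [← div_eq_mul_inv, div_eq_iff he] at hneg
      linear_combination hneg

theorem card_missing_colours_le {δ Δ : ℕ} {S : Finset V} {φ : V → ℕ} {T : Finset (Fin Δ)}
    (hφ : ∀ w ∈ S, φ w < Δ) (hinj : Set.InjOn φ S) (hT : ∀ w ∈ S, ∀ k ∈ T, φ w ≠ k)
    (hδ : δ ≤ #S) : #T ≤ Δ - δ := by
  have hdisj : Disjoint (S.image φ) (T.image Fin.val) := by
    rw [Finset.disjoint_left, Finset.forall_mem_image]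
    intro w hw hwT
    obtain ⟨k, hk, hkw⟩ := Finset.mem_image.1 hwT
    exact hT w hw k hk hkw.symm
  have hsub : S.image φ ∪ T.image Fin.val ⊆ Finset.range Δ := by
    refine Finset.union_subset ?_ ?_ <;> rw [Finset.image_subset_iff] <;> intro a ha <;>
      rw [Finset.mem_range]
    · exact hφ a ha
    · exact a.2
  have hcard := Finset.card_le_card hsub
  rw [Finset.card_union_of_disjoint hdisj, Finset.card_range, Finset.card_image_of_injOn hinj,
    Finset.card_image_of_injective _ Fin.val_injective] at hcard
  omega

open Classical in
/-- All degrees of vertices of `W` in the digraph `B` lie between `δ` and `Δ`, and the edges of `B`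
lie inside `W`. -/
structure HasDegreesBetween [Fintype V] (B : V → V → Prop) (W : Finset V) (δ Δ : ℕ) : Prop where
  mem : ∀ v w, B v w → v ∈ W ∧ w ∈ W
  le_out : ∀ v ∈ W, δ ≤ #{w | B v w}
  out_le : ∀ v ∈ W, #{w | B v w} ≤ Δ
  le_into : ∀ w ∈ W, δ ≤ #{v | B v w}
  into_le : ∀ w ∈ W, #{v | B v w} ≤ Δ

variable [Fintype V] {B : V → V → Prop} {W : Finset V} {δ Δ : ℕ}

theorem HasDegreesBetween.exists_isProperEdgeColouring (hB : HasDegreesBetween B W δ Δ) :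
    ∃ c, IsProperEdgeColouring B Δ c := by
  classical
  refine _root_.exists_isProperEdgeColouring (fun v => ?_) fun w => ?_
  · by_cases hv : v ∈ W
    · exact hB.out_le v hv
    · rw [Finset.filter_false_of_mem fun w _ h => hv (hB.mem v w h).1]
      exact Nat.zero_le _
  · by_cases hw : w ∈ W
    · exact hB.into_le w hw
    · rw [Finset.filter_false_of_mem fun v _ h => hw (hB.mem v w h).2]
      exact Nat.zero_le _

open Classical in
theorem HasDegreesBetween.exists_isForestFamily (hB : HasDegreesBetween B W δ Δ) {s : ℕ}
    [Fact s.Prime] {z : V → ZMod s} {e : ZMod s} (he : e ≠ 0) (hz : ∀ v w, B v w → z w = z v + e) :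
    ∃ M : Fin Δ → V → Option V, IsForestFamily B M ∧
      (∀ v ∈ W, z v ≠ e → #{k | M k v = none} ≤ Δ - δ) ∧
      ∀ w ∈ W, z w ≠ e + e → #{k | ∀ v, M k v ≠ some w} ≤ Δ - δ := by
  obtain ⟨c, hc⟩ := hB.exists_isProperEdgeColouring
  refine ⟨_, hc.isForestFamily he hz, fun v hv hve => ?_, fun w hw hwe => ?_⟩
  · refine card_missing_colours_le (S := {w | B v w}) (φ := c v) (fun w hw => ?_)
      (fun w hw w' hw' => ?_) (fun w hw k hk hkw => ?_) (hB.le_out v hv)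
    · exact hc.lt v w (Finset.mem_filter.1 hw).2
    · exact hc.inj_right v w w' (Finset.mem_filter.1 hw).2 (Finset.mem_filter.1 hw').2
    · have := (hc.colourClass_eq_some_iff (q := fun v => z v ≠ e)).2
        ⟨(Finset.mem_filter.1 hw).2, hkw, hve⟩
      cases (Finset.mem_filter.1 hk).2.symm.trans this
  · refine card_missing_colours_le (S := {v | B v w}) (φ := fun v => c v w) (fun v hv => ?_)
      (fun v hv v' hv' => ?_) (fun v hv k hk hkv => ?_) (hB.le_into w hw)
    · exact hc.lt v w (Finset.mem_filter.1 hv).2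
    · exact hc.inj_left v v' w (Finset.mem_filter.1 hv).2 (Finset.mem_filter.1 hv').2
    · have hvw := (Finset.mem_filter.1 hv).2
      refine (Finset.mem_filter.1 hk).2 v
        (hc.colourClass_eq_some_iff.2 ⟨hvw, hkv, fun hve => hwe ?_⟩)
      rw [hz v w hvw, hve]

theorem card_le_card_few_bad_add {α : Type*} {Δ D s n : ℕ} {W : Finset α} {P : Fin Δ → α → Prop}
    [∀ k, DecidablePred (P k)] (hn : 0 < n) (hW : #W ≤ n) (hP : ∀ v ∈ W, #{k | P k v} ≤ D) :
    Δ ≤ #{k | s * #{v ∈ W | P k v} ≤ n} + s * D := by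
  have hsum : ∑ k, #{v ∈ W | P k v} ≤ n * D := by
    have h := Finset.sum_le_card_nsmul W (fun v => #{k | P k v}) D hP
    rw [Finset.sum_congr rfl fun _ _ => Finset.card_filter _ _, Finset.sum_comm] at h
    rw [Finset.sum_congr rfl fun _ _ => Finset.card_filter _ _]
    exact h.trans (Nat.mul_le_mul_right _ hW)
  have hmany : #{k | ¬ s * #{v ∈ W | P k v} ≤ n} * n ≤ s * D * n := by
    calc _ ≤ ∑ k with ¬ s * #{v ∈ W | P k v} ≤ n, s * #{v ∈ W | P k v} :=
          Finset.card_nsmul_le_sum _ _ _ fun k hk => (not_le.1 (Finset.mem_filter.1 hk).2).le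
      _ ≤ s * ∑ k, #{v ∈ W | P k v} := by
          rw [Finset.mul_sum]
          exact Finset.sum_le_sum_of_subset (Finset.subset_univ _)
      _ ≤ s * D * n := by
          rw [mul_right_comm, mul_assoc]
          exact Nat.mul_le_mul_left s hsum
  have hsplit := Finset.card_filter_add_card_filter_not (s := (Finset.univ : Finset (Fin Δ)))
    fun k => s * #{v ∈ W | P k v} ≤ n
  rw [Finset.card_univ, Fintype.card_fin] at hsplit
  have := Nat.le_of_mul_le_mul_right hmany hn
  omega

end BrokenMatchings

section GroupedPacking

section Completion

theorem Completion.adj {V : Type*} {G C : V → V → Prop} {M : V → Option V}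
    (hMG : ∀ v w, M v = some w → G v w) (hCG : ∀ v w, C v w → G v w)
    {v w : V} (h : Completion M C v w) : G v w :=
  h.elim (hMG v w) fun h => hCG v w h.2

variable {V : Type*} [Fintype V] {G C F : V → V → Prop} {M : V → Option V} {U : Finset V}
  {d T P κ m : ℕ}

open Classical in
theorem card_filter_le_card_filter_add {p q r : V → Prop} {S : Finset V} {a : ℕ}
    (h : ∀ y ∈ S, p y → ¬ q y → r y) (ha : #{y | q y ∧ p y} ≤ a) :
    #{y ∈ S | p y} ≤ #{y ∈ S | r y} + a := by
  refine (Finset.card_le_card (t := {y ∈ S | r y} ∪ ({y | q y ∧ p y} : Finset V))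
    fun y hy => ?_).trans ((Finset.card_union_le _ _).trans (Nat.add_le_add_left ha _))
  simp only [Finset.mem_filter, Finset.mem_union, Finset.mem_univ, true_and] at hy ⊢
  by_cases hq : q y
  · exact Or.inr ⟨hq, hy.2⟩
  · exact Or.inl ⟨hy.1, h y hy.1 hy.2 hq⟩

open Classical in
theorem IsAlmostRegularOn.completion (hC : IsAlmostRegularOn C U d) (hM : ∀ v ∈ U, M v = none)
    (hout : ∀ v ∈ U, #{w | F v w ∧ C v w} ≤ T) (hin : ∀ w ∈ U, #{v | F v w ∧ C v w} ≤ T) :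
    IsAlmostRegularOn (Completion M fun v w => C v w ∧ ¬ F v w) U (d + 2 * T) where
  out u hu := by
    have h := card_filter_le_card_filter_add (S := U) (p := C u) (q := F u)
      (r := Completion M (fun v w => C v w ∧ ¬ F v w) u)
      (fun y _ hCy hFy => Or.inr ⟨hM u hu, hCy, hFy⟩) (hout u hu)
    have := hC.out u hu
    omega
  into u hu := by
    have h := card_filter_le_card_filter_add (S := U) (p := fun y => C y u) (q := fun y => F y u)
      (r := fun y => Completion M (fun v w => C v w ∧ ¬ F v w) y u)
      (fun y hy hCy hFy => Or.inr ⟨hM y hy, hCy, hFy⟩) (hin u hu)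
    have := hC.into u hu
    omega

open Classical in
theorem IsLinearForest.exists_isHamCycle_completion (hM : IsLinearForest M) (hG : IsOriented G)
    (hCG : ∀ v w, C v w → G v w) (hMG : ∀ v w, M v = some w → G v w)
    (hMU : ∀ v w, M v = some w → v ∉ U ∧ w ∉ U) (hC : IsAlmostRegularOn C U d)
    (hκ : #{v ∈ Uᶜ | M v = none} ≤ κ)
    (hend : ∀ v ∉ U, 2 * κ + P ≤ #{u ∈ U | C v u})
    (hstart : ∀ w ∉ U, 2 * κ + P ≤ #{u ∈ U | C u w})
    (hFout : ∀ v ∈ U, #{w | F v w ∧ C v w} ≤ T) (hFin : ∀ w ∈ U, #{v | F v w ∧ C v w} ≤ T)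
    (hFend : ∀ v ∉ U, M v = none → #{w | F v w ∧ C v w} ≤ P)
    (hFstart : ∀ w ∉ U, (∀ v, M v ≠ some w) → #{v | F v w ∧ C v w} ≤ P)
    (hm : 200 * (1 + κ + (d + 2 * T)) ≤ m) (hmU : 10 ^ 9 * m ≤ #U)
    (hN : (#U : ℝ) ^ 2 * (995 / 1000) ^ m < 1) :
    ∃ f, IsHamCycle (Completion M fun v w => C v w ∧ ¬ F v w) f := by
  have hMnone (v) (hv : v ∈ U) : M v = none :=
    Option.eq_none_iff_forall_ne_some.2 fun w h => (hMU v w h).1 hv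
  have hadj {x y} : Completion M (fun v w => C v w ∧ ¬ F v w) x y → G x y :=
    Completion.adj hMG fun v w h => hCG v w h.1
  refine (hC.completion hMnone hFout hFin).exists_isHamCycle
    (fun x y h h' => hG x y (hadj h) (hadj h')) (Finset.card_pos.1 (by omega)) hM
    (fun v w h => (hMU v w h).2) (fun v w h => Or.inl h) hκ (fun v hv h => ?_)
    (fun w hw h => ?_) hm hmU hN
  · have hsplit := card_filter_le_card_filter_add (S := U) (p := C v) (q := F v)
      (r := Completion M (fun v w => C v w ∧ ¬ F v w) v)
      (fun y _ hCy hFy => Or.inr ⟨h, hCy, hFy⟩) (hFend v hv h)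
    have := hend v hv
    omega
  · have hsplit := card_filter_le_card_filter_add (S := U) (p := fun y => C y w)
      (q := fun y => F y w) (r := fun y => Completion M (fun v w => C v w ∧ ¬ F v w) y w)
      (fun y hy hCy hFy => Or.inr ⟨hMnone y hy, hCy, hFy⟩)
      (hFstart w hw fun v hv => h v (hMU v w hv).1 hv)
    have := hstart w hw
    omega

end Completion

section Counting

theorem card_le_sum_card_of_fst_eq {Λ K ι : Type*} [Fintype ι] [Fintype K] {good : Λ × ι × K → Prop}
    {Q : ι → K → Prop} [∀ e, DecidablePred (Q e)] {A : Finset {j // good j}} {l : Λ}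
    (hA : ∀ j ∈ A, j.1.1 = l ∧ Q j.1.2.1 j.1.2.2) : #A ≤ ∑ e, #{k | Q e k} := by
  rw [← Finset.card_sigma]
  refine Finset.card_le_card_of_injOn (fun j => ⟨j.1.2.1, j.1.2.2⟩) (fun j hj => ?_) ?_
  · simpa using (hA j hj).2
  · intro j hj j' hj' h
    simp only [Sigma.mk.injEq] at h
    have hl := (hA j hj).1.trans (hA j' hj').1.symm
    exact Subtype.ext (Prod.ext hl (Prod.ext h.1 (eq_of_heq h.2)))

theorem sum_le_of_subsingleton_exceptions {ι : Type*} [Fintype ι] {φ : ι → ℕ} {p : ι → Prop}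
    {Δ D : ℕ} (hp : ∀ e e', p e → p e' → e = e') (hΔ : ∀ e, φ e ≤ Δ) (hD : ∀ e, ¬ p e → φ e ≤ D) :
    ∑ e, φ e ≤ Δ + Fintype.card ι * D := by
  classical
  calc ∑ e, φ e ≤ ∑ e, ((if p e then Δ else 0) + D) := by
        refine Finset.sum_le_sum fun e _ => ?_
        split_ifs with h
        · exact (hΔ e).trans (Nat.le_add_right _ _)
        · exact (hD e h).trans (Nat.le_add_left _ _)
    _ = #{e | p e} * Δ + Fintype.card ι * D := by
        rw [Finset.sum_add_distrib, Finset.sum_const, Finset.card_univ, smul_eq_mul,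
          ← Finset.sum_filter, Finset.sum_const, smul_eq_mul]
    _ ≤ Δ + Fintype.card ι * D := by
        have hone : #{e | p e} ≤ 1 := Finset.card_le_one.2 fun e he e' he' =>
          hp e e' (Finset.mem_filter.1 he).2 (Finset.mem_filter.1 he').2
        exact Nat.add_le_add_right ((Nat.mul_le_mul_right Δ hone).trans (one_mul Δ).le) _

/-- The nonzero amounts by which a label in `ZMod s` can change along an edge. -/
abbrev Shift (s : ℕ) := {e : ZMod s // e ≠ 0}

theorem card_shift (s : ℕ) [NeZero s] : Fintype.card (Shift s) = s - 1 := by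
  rw [Fintype.card_subtype_compl, Fintype.card_subtype_eq, ZMod.card]

end Counting

section Array

variable {V Λ : Type*} [Fintype V] {s : ℕ} {z : V → ZMod s} {U : Λ → Finset V}
  {B : Λ → V → V → Prop} {Δ D : ℕ} {M : Λ → Shift s → Fin Δ → V → Option V}

open Classical in
/-- For every group `l` and every nonzero `e`, disjoint linear forests `M l e k` in the digraph of
those edges of `B l` along which the label `z` increases by `e`. Away from the exceptional labels
`e` and `e + e`, no vertex is an end or a start of more than `D` of the `M l e k`. -/
structure IsForestArray (z : V → ZMod s) (U : Λ → Finset V) (B : Λ → V → V → Prop) (D : ℕ)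
    (M : Λ → Shift s → Fin Δ → V → Option V) : Prop where
  isForestFamily : ∀ l (e : Shift s), IsForestFamily (fun v w => B l v w ∧ z w = z v + e) (M l e)
  card_ends_le : ∀ l (e : Shift s), ∀ v ∉ U l, z v ≠ e → #{k | M l e k v = none} ≤ D
  card_starts_le : ∀ l (e : Shift s), ∀ w ∉ U l, z w ≠ e + e → #{k | ∀ v, M l e k v ≠ some w} ≤ D

open Classical in
theorem exists_isForestArray [Fact s.Prime] {δ : ℕ}
    (hB : ∀ l, ∀ e ≠ 0, HasDegreesBetween (fun v w => B l v w ∧ z w = z v + e) (U l)ᶜ δ Δ) :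
    ∃ M : Λ → Shift s → Fin Δ → V → Option V, IsForestArray z U B (Δ - δ) M := by
  choose M hM hend hstart using fun l (e : Shift s) =>
    (hB l e e.2).exists_isForestFamily e.2 fun v w h => h.2
  exact ⟨M, hM, fun l e v hv => hend l e v (Finset.mem_compl.2 hv),
    fun l e w hw => hstart l e w (Finset.mem_compl.2 hw)⟩

theorem IsForestArray.eq_of_eq_some (hM : IsForestArray z U B D M)
    (hB : ∀ l l' v w, B l v w → B l' v w → l = l') {l l' : Λ} {e e' : Shift s}
    {k k' : Fin Δ} {v w : V} (h : M l e k v = some w) (h' : M l' e' k' v = some w) :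
    (l, e, k) = (l', e', k') := by
  have hvw := (hM.isForestFamily l e).adj k v w h
  have hvw' := (hM.isForestFamily l' e').adj k' v w h'
  obtain rfl : l = l' := hB _ _ _ _ hvw.1 hvw'.1
  obtain rfl : e = e' := Subtype.ext (add_left_cancel (hvw.2.symm.trans hvw'.2))
  obtain rfl : k = k' := (hM.isForestFamily l e).disjoint _ _ _ _ h h'
  rfl

open Classical in
theorem IsForestArray.sum_card_ends_le [NeZero s] (hM : IsForestArray z U B D M) {l : Λ} {v : V}
    (hv : v ∉ U l) : ∑ e, #{k | M l e k v = none} ≤ Δ + (s - 1) * D := by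
  rw [← card_shift s]
  exact sum_le_of_subsingleton_exceptions (p := fun e : Shift s => z v = e)
    (fun e e' h h' => Subtype.ext (h.symm.trans h')) (fun e => card_finset_fin_le _)
    fun e he => hM.card_ends_le l e v hv he

open Classical in
theorem IsForestArray.sum_card_starts_le [Fact s.Prime] (hs : s ≠ 2)
    (hM : IsForestArray z U B D M) {l : Λ} {w : V} (hw : w ∉ U l) :
    ∑ e, #{k | ∀ v, M l e k v ≠ some w} ≤ Δ + (s - 1) * D := by
  rw [← card_shift s]
  refine sum_le_of_subsingleton_exceptions (p := fun e : Shift s => z w = e + e)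
    (fun e e' h h' => ?_) (fun e => card_finset_fin_le _) fun e he => hM.card_starts_le l e w hw he
  have htwo : (2 : ZMod s) ≠ 0 := Ring.two_ne_zero (by rwa [ZMod.ringChar_zmod_n])
  refine Subtype.ext (mul_left_cancel₀ htwo ?_)
  rw [two_mul, two_mul, ← h, h']

open Classical in
/-- The index of a linear forest which has few ends outside `U l`, apart from those of label `e`. -/
def IsGoodIndex (z : V → ZMod s) (U : Λ → Finset V)
    (M : Λ → Shift s → Fin Δ → V → Option V)
    (j : Λ × Shift s × Fin Δ) : Prop :=
  s * #{v ∈ {v ∈ (U j.1)ᶜ | z v ≠ j.2.1} | M j.1 j.2.1 j.2.2 v = none} ≤ Fintype.card V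

open Classical in
theorem IsForestArray.le_card_isGoodIndex [NeZero s] [Fintype Λ] [Nonempty V]
    (hM : IsForestArray z U B D M) :
    Fintype.card Λ * ((s - 1) * (Δ - s * D)) ≤ Fintype.card {j // IsGoodIndex z U M j} := by
  have hle (l : Λ) (e : Shift s) : Δ - s * D ≤ #{k | IsGoodIndex z U M (l, e, k)} := by
    have hfew := card_le_card_few_bad_add (s := s) (D := D) (P := fun k v => M l e k v = none)
      Fintype.card_pos (Finset.card_le_univ {v ∈ (U l)ᶜ | z v ≠ e}) fun v hv =>
        hM.card_ends_le l e v (Finset.mem_compl.1 (Finset.mem_filter.1 hv).1)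
          (Finset.mem_filter.1 hv).2
    refine Nat.sub_le_iff_le_add.2 (hfew.trans_eq ?_)
    congr!
  rw [Fintype.card_subtype, Finset.card_filter, Fintype.sum_prod_type, ← card_shift s,
    ← smul_eq_mul, ← smul_eq_mul, ← Finset.card_univ, ← Finset.card_univ, ← Finset.sum_const,
    ← Finset.sum_const]
  refine Finset.sum_le_sum fun l _ => ?_
  rw [Fintype.sum_prod_type]
  refine Finset.sum_le_sum fun e _ => ?_
  rw [← Finset.card_filter]
  exact hle l e

open Classical in
theorem IsGoodIndex.card_ends_le [NeZero s] {κ : ℕ} {l : Λ} {e : Shift s} {k : Fin Δ}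
    (h : IsGoodIndex z U M (l, e, k)) (hz : s * #{v | z v = e} ≤ 2 * Fintype.card V)
    (hκ : 3 * Fintype.card V ≤ s * κ) : #{v ∈ (U l)ᶜ | M l e k v = none} ≤ κ := by
  have hsplit : #{v ∈ (U l)ᶜ | M l e k v = none} ≤
      #{v ∈ {v ∈ (U l)ᶜ | z v ≠ e} | M l e k v = none} + #{v | z v = e} := by
    refine (Finset.card_le_card fun v hv => ?_).trans (Finset.card_union_le _ _)
    simp only [Finset.mem_filter, Finset.mem_union, Finset.mem_univ, true_and] at hv ⊢
    tauto
  change s * #{v ∈ {v ∈ (U l)ᶜ | z v ≠ e} | M l e k v = none} ≤ _ at h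
  refine Nat.le_of_mul_le_mul_left ((Nat.mul_le_mul_left s hsplit).trans ?_) (NeZero.pos s)
  rw [mul_add]
  omega

end Array

section Frame

variable {V Λ : Type*} [Fintype V] {s : ℕ} {G : V → V → Prop} {z : V → ZMod s} {U : Λ → Finset V}
  {B C : Λ → V → V → Prop} {δ Δ d κ m : ℕ}

open Classical in
/-- Edge-disjoint subdigraphs `B l` and `C l` of `G`. The edges of `B l` avoid `U l` and are to be
decomposed into linear forests; these are completed to Hamilton cycles by edges of `C l`, which is
almost regular on `U l` and well connected to all other vertices. -/
structure IsPackingFrame (G : V → V → Prop) (z : V → ZMod s) (U : Λ → Finset V)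
    (B C : Λ → V → V → Prop) (δ Δ d κ : ℕ) : Prop where
  adj_of_forest : ∀ l v w, B l v w → G v w
  adj_of_connecting : ∀ l v w, C l v w → G v w
  eq_of_forest : ∀ l l' v w, B l v w → B l' v w → l = l'
  eq_of_connecting : ∀ l l' v w, C l v w → C l' v w → l = l'
  not_connecting : ∀ l l' v w, B l v w → ¬ C l' v w
  degrees : ∀ l, ∀ e ≠ 0, HasDegreesBetween (fun v w => B l v w ∧ z w = z v + e) (U l)ᶜ δ Δ
  regular : ∀ l, IsAlmostRegularOn (C l) (U l) d
  le_out : ∀ l, ∀ v ∉ U l, 2 * κ + (Δ + s * (Δ - δ)) ≤ #{u ∈ U l | C l v u}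
  le_into : ∀ l, ∀ w ∉ U l, 2 * κ + (Δ + s * (Δ - δ)) ≤ #{u ∈ U l | C l u w}

variable {M : Λ → Shift s → Fin Δ → V → Option V}

open Classical in
theorem IsPackingFrame.exists_isHamCycle_completion [Fact s.Prime] [Fintype Λ] (hs : s ≠ 2)
    (hfr : IsPackingFrame G z U B C δ Δ d κ) (hG : IsOriented G)
    (hM : IsForestArray z U B (Δ - δ) M)
    (hz : ∀ e, s * #{v | z v = e} ≤ 2 * Fintype.card V) (hκ : 3 * Fintype.card V ≤ s * κ)
    (hm : 200 * (1 + κ + (d + 2 * (s * Δ))) ≤ m) {l : Λ} (hmU : 10 ^ 9 * m ≤ #(U l))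
    (hN : (#(U l) : ℝ) ^ 2 * (995 / 1000) ^ m < 1) {e : Shift s} {k : Fin Δ}
    (hgood : IsGoodIndex z U M (l, e, k)) {F : V → V → Prop}
    (hFout : ∀ v, #{w | F v w ∧ C l v w} ≤ #{j : {j // IsGoodIndex z U M j} |
      j.1.1 = l ∧ M j.1.1 j.1.2.1 j.1.2.2 v = none})
    (hFin : ∀ w, #{v | F v w ∧ C l v w} ≤ #{j : {j // IsGoodIndex z U M j} |
      j.1.1 = l ∧ ∀ v, M j.1.1 j.1.2.1 j.1.2.2 v ≠ some w}) :
    ∃ f, IsHamCycle (Completion (M l e k) fun v w => C l v w ∧ ¬ F v w) f := by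
  have hforest := hM.isForestFamily l e
  have hmem (v w) (h : M l e k v = some w) : v ∉ U l ∧ w ∉ U l := by
    simpa using (hfr.degrees l e e.2).mem v w (hforest.adj k v w h)
  have hends : Δ + (s - 1) * (Δ - δ) ≤ Δ + s * (Δ - δ) :=
    Nat.add_le_add_left (Nat.mul_le_mul_right _ (Nat.sub_le _ _)) _
  have htotal (A : Finset {j // IsGoodIndex z U M j}) (hA : ∀ j ∈ A, j.1.1 = l) : #A ≤ s * Δ := by
    refine (card_le_sum_card_of_fst_eq (l := l) (Q := fun _ _ => True)
      fun j hj => ⟨hA j hj, trivial⟩).trans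
      ((Finset.sum_le_card_nsmul _ _ Δ fun e _ => card_finset_fin_le _).trans ?_)
    rw [Finset.card_univ, card_shift, smul_eq_mul]
    exact Nat.mul_le_mul_right _ (Nat.sub_le _ _)
  refine (hforest.isLinearForest k).exists_isHamCycle_completion hG (hfr.adj_of_connecting l)
    (fun v w h => hfr.adj_of_forest l v w (hforest.adj k v w h).1) hmem (hfr.regular l)
    (hgood.card_ends_le (hz e) hκ) (hfr.le_out l) (hfr.le_into l)
    (fun v _ => (hFout v).trans (htotal _ fun j hj => (Finset.mem_filter.1 hj).2.1))
    (fun w _ => (hFin w).trans (htotal _ fun j hj => (Finset.mem_filter.1 hj).2.1))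
    (fun v hv _ => ?_) (fun w hw _ => ?_) hm hmU hN
  · refine (hFout v).trans ((card_le_sum_card_of_fst_eq (l := l) (Q := fun e k => M l e k v = none)
      fun j hj => ?_).trans ((hM.sum_card_ends_le hv).trans hends))
    obtain ⟨rfl, h⟩ := (Finset.mem_filter.1 hj).2
    exact ⟨rfl, h⟩
  · refine (hFin w).trans ((card_le_sum_card_of_fst_eq (l := l)
      (Q := fun e k => ∀ v, M l e k v ≠ some w) fun j hj => ?_).trans
        ((hM.sum_card_starts_le hs hw).trans hends))
    obtain ⟨rfl, h⟩ := (Finset.mem_filter.1 hj).2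
    exact ⟨rfl, h⟩

theorem IsHamPacking.exists_fin {ι : Type*} [Fintype ι] {E : ι → V → V → Prop}
    {f : ι → ZMod (Fintype.card V) → V} (hf : IsHamPacking E Finset.univ f)
    (hE : ∀ j v w, E j v w → G v w) :
    ∃ f : Fin (Fintype.card ι) → ZMod (Fintype.card V) → V,
      IsHamPacking (fun _ => G) Finset.univ f := by
  have hinj := (Fintype.equivFin ι).symm.injective
  exact ⟨fun i => f ((Fintype.equivFin ι).symm i),
    fun _ _ => (hf.isHamCycle _ (Finset.mem_univ _)).mono (hE _),
    fun _ _ _ _ hne => hf.disjoint _ (Finset.mem_univ _) _ (Finset.mem_univ _) (hinj.ne hne)⟩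

open Classical in
theorem IsPackingFrame.exists_isHamPacking [Fact s.Prime] [Fintype Λ] [Nonempty V] (hs : s ≠ 2)
    (hfr : IsPackingFrame G z U B C δ Δ d κ) (hG : IsOriented G)
    (hz : ∀ e, s * #{v | z v = e} ≤ 2 * Fintype.card V) (hκ : 3 * Fintype.card V ≤ s * κ)
    (hm : 200 * (1 + κ + (d + 2 * (s * Δ))) ≤ m) (hmU : ∀ l, 10 ^ 9 * m ≤ #(U l))
    (hN : ∀ l, (#(U l) : ℝ) ^ 2 * (995 / 1000) ^ m < 1) :
    ∃ (N : ℕ) (f : Fin N → ZMod (Fintype.card V) → V),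
      Fintype.card Λ * ((s - 1) * (Δ - s * (Δ - δ))) ≤ N ∧
      IsHamPacking (fun _ => G) Finset.univ f := by
  obtain ⟨M, hM⟩ := exists_isForestArray hfr.degrees
  have hadj (l e k v w) (h : M l e k v = some w) : B l v w :=
    ((hM.isForestFamily l e).adj k v w h).1
  have hMC : AreEdgeDisjoint
      (fun j : {j // IsGoodIndex z U M j} => M j.1.1 j.1.2.1 j.1.2.2) C :=
    ⟨fun j j' v w h h' => Subtype.ext (hM.eq_of_eq_some hfr.eq_of_forest h h'),
      fun j l v w h => hfr.not_connecting _ _ _ _ (hadj _ _ _ _ _ h), hfr.eq_of_connecting⟩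
  obtain ⟨f, hf⟩ := hMC.exists_isHamPacking (ℓ := fun j => j.1.1) fun j F hFout hFin =>
    hfr.exists_isHamCycle_completion hs hG hM hz hκ hm (hmU j.1.1) (hN j.1.1) j.2 hFout hFin
  obtain ⟨f', hf'⟩ := hf.exists_fin (G := G) fun j v w h =>
    h.adj (fun v w h => hfr.adj_of_forest _ v w (hadj _ _ _ _ _ h)) (hfr.adj_of_connecting _)
  exact ⟨_, f', hM.le_card_isGoodIndex, hf'⟩

end Frame

end GroupedPacking

section Cells

/-- The functions `x` and `y` have the same value at `k₀` and nowhere else. -/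
def AgreeExactlyAt {K A : Type*} (x y : K → A) (k₀ : K) : Prop := ∀ k, x k = y k ↔ k = k₀

section Agreement

variable {K A : Type*} {x y : K → A} {k₀ k₁ : K}

theorem AgreeExactlyAt.eq (h : AgreeExactlyAt x y k₀) : x k₀ = y k₀ := (h k₀).2 rfl

theorem AgreeExactlyAt.symm (h : AgreeExactlyAt x y k₀) : AgreeExactlyAt y x k₀ :=
  fun k => eq_comm.trans (h k)

theorem AgreeExactlyAt.unique (h : AgreeExactlyAt x y k₀) (h' : AgreeExactlyAt x y k₁) :
    k₀ = k₁ := (h' k₀).1 h.eq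

theorem agreeExactlyAt_iff :
    AgreeExactlyAt x y k₀ ↔ x k₀ = y k₀ ∧ ∀ k ≠ k₀, x k ≠ y k :=
  ⟨fun h => ⟨h.eq, fun k hk h' => hk ((h k).1 h')⟩,
    fun h k => ⟨fun h' => by_contra fun hk => h.2 k hk h', fun hk => hk ▸ h.1⟩⟩

end Agreement

/-- The labels of the vertices. The first component decides, through the coordinates in which two
cells agree, what the edges between them are used for. The second component is the group which the
cell contributes to the sum determining the group of an edge, and the third one is the level. -/
abbrev Cell (r q s : ℕ) := (Fin 3 × ZMod r → ZMod q) × (ZMod r × ZMod q) × ZMod s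

variable {r q s : ℕ} {l l' : ZMod r × ZMod q} {a b : Cell r q s}

/-- The cells whose vertices make up the core of the group `l`, i.e. the almost regular
near-tournament through which the paths of that group are closed to Hamilton cycles. -/
def IsCore (l : ZMod r × ZMod q) (a : Cell r q s) : Prop := a.1 (0, l.1) = l.2

/-- The edges from the cell `a` to the cell `b` are reserved for the connections of the group `l`:
inside its core, into it, or out of it. -/
def CellLinked (l : ZMod r × ZMod q) (a b : Cell r q s) : Prop :=
  (IsCore l a ∧ IsCore l b ∧ AgreeExactlyAt a.1 b.1 (0, l.1)) ∨
  (¬ IsCore l a ∧ IsCore l b ∧ AgreeExactlyAt a.1 b.1 (1, l.1)) ∨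
  (IsCore l a ∧ ¬ IsCore l b ∧ AgreeExactlyAt a.1 b.1 (2, l.1))

/-- The edges from the cell `a` to the cell `b` are to be covered by the Hamilton cycles of the
group `l`. -/
def CellFree (l : ZMod r × ZMod q) (a b : Cell r q s) : Prop :=
  ¬ IsCore l a ∧ ¬ IsCore l b ∧ (∀ k, a.1 k ≠ b.1 k) ∧ a.2.1 + b.2.1 = l

theorem CellLinked.exists_agreeExactlyAt (h : CellLinked l a b) :
    ∃ i, AgreeExactlyAt a.1 b.1 (i, l.1) := by
  rcases h with ⟨-, -, h⟩ | ⟨-, -, h⟩ | ⟨-, -, h⟩ <;> exact ⟨_, h⟩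

theorem CellLinked.not_cellFree (h : CellLinked l a b) : ¬ CellFree l' a b := fun h' =>
  have ⟨_, hi⟩ := h.exists_agreeExactlyAt
  h'.2.2.1 _ hi.eq

theorem CellLinked.unique (h : CellLinked l a b) (h' : CellLinked l' a b) : l = l' := by
  have hfst : l.1 = l'.1 := by
    obtain ⟨i, hi⟩ := h.exists_agreeExactlyAt
    obtain ⟨i', hi'⟩ := h'.exists_agreeExactlyAt
    exact congrArg Prod.snd (hi.unique hi')
  refine Prod.ext hfst ?_
  simp only [CellLinked, IsCore, ← hfst] at h h'
  rcases h with ⟨ha, hb, -⟩ | ⟨-, hb, h⟩ | ⟨ha, -, h⟩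
  · rcases h' with ⟨ha', -, -⟩ | ⟨-, hb', -⟩ | ⟨ha', -, -⟩
    exacts [ha.symm.trans ha', hb.symm.trans hb', ha.symm.trans ha']
  · rcases h' with ⟨-, hb', -⟩ | ⟨-, hb', -⟩ | ⟨-, -, h'⟩
    exacts [hb.symm.trans hb', hb.symm.trans hb', by simpa using h.unique h']
  · rcases h' with ⟨ha', -, -⟩ | ⟨-, -, h'⟩ | ⟨ha', -, -⟩
    exacts [ha.symm.trans ha', by simpa using h.unique h', ha.symm.trans ha']

theorem prod_eq_mul_pow {K : Type*} [Fintype K] {f : K → ℕ} {a : ℕ} (k₀ : K)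
    (h : ∀ k, k ≠ k₀ → f k = a) : ∏ k, f k = f k₀ * a ^ (Fintype.card K - 1) := by
  classical
  rw [Fintype.prod_eq_mul_prod_compl k₀, Finset.prod_congr rfl fun k hk => h k (by simpa using hk),
    Finset.prod_const, Finset.card_compl, Finset.card_singleton]

theorem prod_eq_mul_mul_pow {K : Type*} [Fintype K] {f : K → ℕ} {a : ℕ} {k₀ k₁ : K}
    (hk : k₀ ≠ k₁) (h : ∀ k, k ≠ k₀ → k ≠ k₁ → f k = a) :
    ∏ k, f k = f k₀ * f k₁ * a ^ (Fintype.card K - 2) := by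
  classical
  rw [← Finset.prod_mul_prod_compl {k₀, k₁}, Finset.prod_pair hk,
    Finset.prod_congr rfl fun k hk => ?_, Finset.prod_const, Finset.card_compl,
    Finset.card_pair hk]
  simp only [Finset.mem_compl, Finset.mem_insert, Finset.mem_singleton, not_or] at hk
  exact h k hk.1 hk.2

variable [NeZero r] [NeZero q]

theorem card_coordinates : Fintype.card (Fin 3 × ZMod r) = 3 * r := by
  rw [Fintype.card_prod, Fintype.card_fin, ZMod.card]

theorem card_compl_singleton_zmod (c : ZMod q) : #{c}ᶜ = q - 1 := by
  rw [Finset.card_compl, ZMod.card, Finset.card_singleton]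

variable [NeZero s]

theorem card_labels : #(Finset.univ : Finset ((ZMod r × ZMod q) × ZMod s)) = r * q * s := by
  rw [Finset.card_univ, Fintype.card_prod, Fintype.card_prod, ZMod.card, ZMod.card, ZMod.card]

theorem card_cell : Fintype.card (Cell r q s) = q ^ (3 * r) * (r * q * s) := by
  rw [Fintype.card_prod, Fintype.card_fun, card_coordinates, ZMod.card, ← card_labels,
    Finset.card_univ]

theorem card_cell_box {P : Cell r q s → Prop} [DecidablePred P]
    (T : Fin 3 × ZMod r → Finset (ZMod q)) (S : Finset ((ZMod r × ZMod q) × ZMod s))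
    (hP : ∀ b, P b ↔ (∀ k, b.1 k ∈ T k) ∧ b.2 ∈ S) :
    #{b | P b} = (∏ k, #(T k)) * #S := by
  rw [← Fintype.card_piFinset, ← Finset.card_product]
  congr 1
  ext b
  simp only [Finset.mem_filter_univ, hP, Finset.mem_product, Fintype.mem_piFinset]

theorem card_cell_level (e : ZMod s) :
    #{b : Cell r q s | b.2.2 = e} = q ^ (3 * r) * (r * q) := by
  rw [card_cell_box (fun _ => Finset.univ) (Finset.univ ×ˢ {e}) fun b => ?_]
  · simp [ZMod.card]
  · simp only [Finset.mem_univ, implies_true, true_and, Finset.mem_product, Finset.mem_singleton]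

theorem card_cell_coordinate (k₀ : Fin 3 × ZMod r) (c : ZMod q) :
    #{b : Cell r q s | b.1 k₀ = c} = q ^ (3 * r - 1) * (r * q * s) := by
  rw [card_cell_box (Function.update (fun _ => Finset.univ) k₀ {c}) Finset.univ fun b => ?_,
    prod_eq_mul_pow (a := q) k₀ fun k hk => ?_, card_labels, card_coordinates]
  · simp
  · simp [hk, ZMod.card]
  · rw [Function.forall_update_iff _ fun k A => b.1 k ∈ A]
    simp

open Classical in
theorem card_cell_agreeExactlyAt (x : Fin 3 × ZMod r → ZMod q) (k₀ : Fin 3 × ZMod r) :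
    #{b : Cell r q s | AgreeExactlyAt b.1 x k₀} = (q - 1) ^ (3 * r - 1) * (r * q * s) := by
  rw [card_cell_box (Function.update (fun k => {x k}ᶜ) k₀ {x k₀}) Finset.univ fun b => ?_,
    prod_eq_mul_pow (a := q - 1) k₀ fun k hk => ?_, card_labels, card_coordinates]
  · simp
  · rw [Function.update_of_ne hk, card_compl_singleton_zmod]
  · rw [Function.forall_update_iff _ fun k A => b.1 k ∈ A, agreeExactlyAt_iff]
    simp

theorem card_cell_value_of_agree {k₀ k₁ : Fin 3 × ZMod r} (h01 : k₁ ≠ k₀)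
    (x : Fin 3 × ZMod r → ZMod q) (c : ZMod q) :
    #{b : Cell r q s | b.1 k₀ = c ∧ b.1 k₁ = x k₁ ∧ ∀ k, k ≠ k₀ → k ≠ k₁ → b.1 k ≠ x k} =
      (q - 1) ^ (3 * r - 2) * (r * q * s) := by
  rw [card_cell_box (Function.update (Function.update (fun k => {x k}ᶜ) k₁ {x k₁}) k₀ {c})
      Finset.univ fun b => ?_,
    prod_eq_mul_mul_pow (a := q - 1) h01 fun k hk hk' => ?_, card_labels, card_coordinates]
  · simp [h01]
  · rw [Function.update_of_ne hk', Function.update_of_ne hk, card_compl_singleton_zmod]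
  · rw [Function.forall_update_iff _ fun k A => b.1 k ∈ A]
    refine ⟨fun ⟨hb₀, hb₁, hb⟩ => ⟨⟨by simpa using hb₀, fun k hk => ?_⟩, Finset.mem_univ _⟩,
      fun h => ⟨by simpa using h.1.1, by simpa using h.1.2 k₁ h01, fun k hk hk' => ?_⟩⟩
    · obtain rfl | hk' := eq_or_ne k k₁
      · simpa using hb₁
      · simpa [hk'] using hb k hk hk'
    · simpa [hk'] using h.1.2 k hk

theorem card_cell_disagree {x : Fin 3 × ZMod r → ZMod q} {k₀ : Fin 3 × ZMod r} {c : ZMod q}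
    (hc : x k₀ ≠ c) (g : (ZMod r × ZMod q) × ZMod s) :
    #{b : Cell r q s | b.1 k₀ ≠ c ∧ (∀ k, b.1 k ≠ x k) ∧ b.2 = g} =
      (q - 2) * (q - 1) ^ (3 * r - 1) := by
  rw [card_cell_box (Function.update (fun k => {x k}ᶜ) k₀ {x k₀, c}ᶜ) {g} fun b => ?_,
    prod_eq_mul_pow (a := q - 1) k₀ fun k hk => ?_, card_coordinates]
  · rw [Function.update_self, Finset.card_compl, ZMod.card, Finset.card_pair hc,
      Finset.card_singleton, mul_one]
  · rw [Function.update_of_ne hk, card_compl_singleton_zmod]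
  · rw [Function.forall_update_iff _ fun k A => b.1 k ∈ A]
    simp only [Finset.mem_compl, Finset.mem_insert, Finset.mem_singleton]
    grind

end Cells

section Labelling

variable {V : Type*}

section Equidistribution

variable {J : Type*} {χ : V → J} {A B : Finset V} {lo hi : ℝ} {S : Finset J}

open Classical in
/-- Every label occurs about equally often in `A`: for each set `S` of labels, the number of
elements of `A` with a label in `S` is between `lo * #S` and `hi * #S`. -/
def IsEquidistributed (χ : V → J) (A : Finset V) (lo hi : ℝ) : Prop :=
  ∀ S : Finset J, lo * #S ≤ #{w ∈ A | χ w ∈ S} ∧ (#{w ∈ A | χ w ∈ S} : ℝ) ≤ hi * #S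

theorem IsEquidistributed.le_card (h : IsEquidistributed χ A lo hi)
    (hB : ∀ w ∈ A, χ w ∈ S → w ∈ B) : lo * #S ≤ #B := by
  classical
  refine (h S).1.trans (Nat.cast_le.2 (Finset.card_le_card fun w hw => ?_))
  exact hB w (Finset.mem_filter.1 hw).1 (Finset.mem_filter.1 hw).2

theorem IsEquidistributed.card_le (h : IsEquidistributed χ A lo hi)
    (hB : ∀ w ∈ B, w ∈ A ∧ χ w ∈ S) : (#B : ℝ) ≤ hi * #S := by
  classical
  exact (Nat.cast_le.2 (Finset.card_le_card fun w hw => Finset.mem_filter.2 (hB w hw))).trans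
    (h S).2

end Equidistribution

variable [Fintype V] {G : V → V → Prop}

open Classical in
/-- A labelling with all labels about equally frequent in the vertex set, and in all out- and
in-neighbourhoods. The number `p` is the average size of the label classes, and each of the
neighbourhoods contains about half of each label class. -/
structure IsEquitableLabelling {J : Type*} [Fintype J] (G : V → V → Prop) (χ : V → J)
    (η p : ℝ) : Prop where
  out : ∀ v, IsEquidistributed χ {w | G v w} ((1 / 2 - η) * p) ((1 / 2 + η) * p)
  into : ∀ v, IsEquidistributed χ {w | G w v} ((1 / 2 - η) * p) ((1 / 2 + η) * p)
  all : IsEquidistributed χ Finset.univ ((1 - η) * p) ((1 + η) * p)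
  card_eq : (Fintype.card V : ℝ) = p * Fintype.card J

/-- Sizes for which an equitable labelling by cells is a packing frame: `δ` and `Δ` bound the
degrees of the free edges, `d` is the irregularity of the cores, `κ` bounds the number of paths to
be closed up, and `m` is the number of vertices which may be deleted from a core. -/
structure PackingSizes (n : ℕ) (η p : ℝ) (r q s δ Δ d κ m : ℕ) : Prop where
  le_free : δ ≤ (1 / 2 - η) * p * ((q - 2) * (q - 1) ^ (3 * r - 1) : ℕ)
  free_le : (1 / 2 + η) * p * ((q - 2) * (q - 1) ^ (3 * r - 1) : ℕ) ≤ Δ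
  le_paths : 3 * n ≤ s * κ
  core_le : (1 + η) * p * (q ^ (3 * r - 1) * (r * q * s) : ℕ) ≤
    2 * ((1 / 2 - η) * p * ((q - 1) ^ (3 * r - 1) * (r * q * s) : ℕ)) + d
  le_pool : ((2 * κ + (Δ + s * (Δ - δ)) : ℕ) : ℝ) ≤
    (1 / 2 - η) * p * ((q - 1) ^ (3 * r - 2) * (r * q * s) : ℕ)
  le_deleted : 200 * (1 + κ + (d + 2 * (s * Δ))) ≤ m
  le_core : ((10 ^ 9 * m : ℕ) : ℝ) ≤ (1 - η) * p * (q ^ (3 * r - 1) * (r * q * s) : ℕ)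

variable {r q s : ℕ} {χ : V → Cell r q s} {η p : ℝ}

open Classical in
/-- The vertices whose cells belong to the core of the group `l`. -/
noncomputable def core (χ : V → Cell r q s) (l : ZMod r × ZMod q) : Finset V :=
  {v | IsCore l (χ v)}

theorem mem_core {l : ZMod r × ZMod q} {v : V} : v ∈ core χ l ↔ IsCore l (χ v) := by
  simp only [core, Finset.mem_filter_univ]

variable [NeZero r] [NeZero q] {δ Δ d κ m : ℕ}

section Frame

variable [NeZero s]

theorem IsEquitableLabelling.card_core (h : IsEquitableLabelling G χ η p)
    (l : ZMod r × ZMod q) :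
    (1 - η) * p * (q ^ (3 * r - 1) * (r * q * s) : ℕ) ≤ #(core χ l) ∧
      (#(core χ l) : ℝ) ≤ (1 + η) * p * (q ^ (3 * r - 1) * (r * q * s) : ℕ) := by
  rw [← card_cell_coordinate (0, l.1) l.2]
  constructor
  · refine h.all.le_card fun w _ hw => ?_
    exact mem_core.2 (Finset.mem_filter.1 hw).2
  · refine h.all.card_le fun w hw => ⟨Finset.mem_univ _, ?_⟩
    exact Finset.mem_filter.2 ⟨Finset.mem_univ _, mem_core.1 hw⟩

theorem IsEquitableLabelling.mul_card_level_le (h : IsEquitableLabelling G χ η p) (hη : η ≤ 1)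
    (e : ZMod s) : s * #{v | (χ v).2.2 = e} ≤ 2 * Fintype.card V := by
  have hlevel : (#{v | (χ v).2.2 = e} : ℝ) ≤ (1 + η) * p * (q ^ (3 * r) * (r * q) : ℕ) := by
    rw [← card_cell_level e]
    exact h.all.card_le fun w hw => by simpa using hw
  have hcard := h.card_eq
  rw [card_cell] at hcard
  have hV : (0 : ℝ) ≤ Fintype.card V := Nat.cast_nonneg _
  suffices (s * #{v | (χ v).2.2 = e} : ℝ) ≤ 2 * Fintype.card V by exact_mod_cast this
  calc (s * #{v | (χ v).2.2 = e} : ℝ)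
      ≤ s * ((1 + η) * p * (q ^ (3 * r) * (r * q) : ℕ)) := by gcongr
    _ = (1 + η) * Fintype.card V := by
      rw [hcard]
      push_cast
      ring
    _ ≤ 2 * Fintype.card V := mul_le_mul_of_nonneg_right (by linarith) hV

theorem IsEquidistributed.le_card_and_card_le_of_disagree {A B : Finset V}
    (hA : IsEquidistributed χ A ((1 / 2 - η) * p) ((1 / 2 + η) * p))
    (hsz : PackingSizes (Fintype.card V) η p r q s δ Δ d κ m) {l : ZMod r × ZMod q} {v : V}
    (hv : ¬ IsCore l (χ v)) (g : (ZMod r × ZMod q) × ZMod s)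
    (hB : ∀ w, w ∈ B ↔
      w ∈ A ∧ ¬ IsCore l (χ w) ∧ (∀ k, (χ w).1 k ≠ (χ v).1 k) ∧ (χ w).2 = g) :
    δ ≤ #B ∧ #B ≤ Δ := by
  have hcard := card_cell_disagree hv g
  have hlow := hsz.le_free
  have hupp := hsz.free_le
  rw [← hcard] at hlow hupp
  refine ⟨Nat.cast_le.1 (hlow.trans (hA.le_card fun w hw hw' => ?_)),
    Nat.cast_le.1 ((hA.card_le fun w hw => ?_).trans hupp)⟩
  · exact (hB w).2 ⟨hw, (Finset.mem_filter.1 hw').2⟩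
  · exact ⟨((hB w).1 hw).1, Finset.mem_filter.2 ⟨Finset.mem_univ _, ((hB w).1 hw).2⟩⟩

open Classical in
theorem IsEquitableLabelling.hasDegreesBetween (h : IsEquitableLabelling G χ η p)
    (hsz : PackingSizes (Fintype.card V) η p r q s δ Δ d κ m) (l : ZMod r × ZMod q)
    (e : ZMod s) :
    HasDegreesBetween (fun v w => (G v w ∧ CellFree l (χ v) (χ w)) ∧ (χ w).2.2 = (χ v).2.2 + e)
      (core χ l)ᶜ δ Δ := by
  have hcompl {v : V} : v ∈ (core χ l)ᶜ ↔ ¬ IsCore l (χ v) := by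
    rw [Finset.mem_compl, mem_core]
  have out (v) (hv : v ∈ (core χ l)ᶜ) :=
    (h.out v).le_card_and_card_le_of_disagree hsz (hcompl.1 hv) (l - (χ v).2.1, (χ v).2.2 + e)
      (B := {w | (G v w ∧ CellFree l (χ v) (χ w)) ∧ (χ w).2.2 = (χ v).2.2 + e}) fun w => by
        rw [hcompl] at hv
        simp only [Finset.mem_filter_univ, CellFree, Prod.ext_iff (x := (χ w).2),
          eq_sub_iff_add_eq', ne_comm (a := (χ v).1 _)]
        tauto
  have into (w) (hw : w ∈ (core χ l)ᶜ) :=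
    (h.into w).le_card_and_card_le_of_disagree hsz (hcompl.1 hw) (l - (χ w).2.1, (χ w).2.2 - e)
      (B := {v | (G v w ∧ CellFree l (χ v) (χ w)) ∧ (χ w).2.2 = (χ v).2.2 + e}) fun v => by
        rw [hcompl] at hw
        simp only [Finset.mem_filter_univ, CellFree, Prod.ext_iff (x := (χ v).2),
          eq_sub_iff_add_eq, eq_comm (a := (χ w).2.2)]
        tauto
  exact ⟨fun v w hvw => ⟨hcompl.2 hvw.1.2.1, hcompl.2 hvw.1.2.2.1⟩,
    fun v hv => by convert (out v hv).1, fun v hv => by convert (out v hv).2,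
    fun w hw => by convert (into w hw).1, fun w hw => by convert (into w hw).2⟩

theorem IsEquitableLabelling.isAlmostRegularOn_core (h : IsEquitableLabelling G χ η p)
    (hsz : PackingSizes (Fintype.card V) η p r q s δ Δ d κ m) (l : ZMod r × ZMod q) :
    IsAlmostRegularOn (fun v w => G v w ∧ CellLinked l (χ v) (χ w)) (core χ l) d := by
  classical
  have core_le {A B : Finset V} {hi : ℝ} (hA : IsEquidistributed χ A ((1 / 2 - η) * p) hi) {v : V}
      (hB : ∀ w ∈ A, AgreeExactlyAt (χ w).1 (χ v).1 (0, l.1) → w ∈ B) :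
      #(core χ l) ≤ 2 * #B + d := by
    have hle := hA.le_card (S := {b | AgreeExactlyAt b.1 (χ v).1 (0, l.1)}) fun w hw hw' =>
      hB w hw (Finset.mem_filter.1 hw').2
    rw [card_cell_agreeExactlyAt] at hle
    have hcore := (h.card_core l).2.trans hsz.core_le
    suffices (#(core χ l) : ℝ) ≤ 2 * #B + d by exact_mod_cast this
    linarith
  have core_of_agree {v w : V} (hv : v ∈ core χ l)
      (hvw : AgreeExactlyAt (χ w).1 (χ v).1 (0, l.1)) : w ∈ core χ l :=
    mem_core.2 (hvw.eq.trans (mem_core.1 hv))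
  constructor <;> intro v hv
  · refine core_le (v := v) (h.out v) fun w hw hvw => ?_
    have hwcore := core_of_agree hv hvw
    rw [Finset.mem_filter_univ] at hw
    simp only [Finset.mem_filter]
    exact ⟨hwcore, hw, Or.inl ⟨mem_core.1 hv, mem_core.1 hwcore, hvw.symm⟩⟩
  · refine core_le (v := v) (h.into v) fun w hw hvw => ?_
    have hwcore := core_of_agree hv hvw
    rw [Finset.mem_filter_univ] at hw
    simp only [Finset.mem_filter]
    exact ⟨hwcore, hw, Or.inl ⟨mem_core.1 hwcore, mem_core.1 hv, hvw⟩⟩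

theorem IsEquidistributed.le_card_of_core {A B : Finset V} {hi : ℝ}
    (hA : IsEquidistributed χ A ((1 / 2 - η) * p) hi)
    (hsz : PackingSizes (Fintype.card V) η p r q s δ Δ d κ m) {l : ZMod r × ZMod q} {v : V}
    (hv : v ∉ core χ l) {i : Fin 3} (hi : i ≠ 0)
    (hB : ∀ w ∈ A, w ∈ core χ l → AgreeExactlyAt (χ w).1 (χ v).1 (i, l.1) → w ∈ B) :
    2 * κ + (Δ + s * (Δ - δ)) ≤ #B := by
  have hne : ((i, l.1) : Fin 3 × ZMod r) ≠ (0, l.1) := fun h => hi (congrArg Prod.fst h)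
  have hpool := hsz.le_pool
  rw [← card_cell_value_of_agree hne (χ v).1 l.2] at hpool
  refine Nat.cast_le.1 (hpool.trans (hA.le_card fun w hw hw' => ?_))
  obtain ⟨hcore, hagree, hdisagree⟩ := (Finset.mem_filter.1 hw').2
  refine hB w hw (mem_core.2 hcore) (agreeExactlyAt_iff.2 ⟨hagree, fun k hk => ?_⟩)
  obtain rfl | hk₀ := eq_or_ne k (0, l.1)
  · exact fun h => hv (mem_core.2 (h.symm.trans hcore))
  · exact hdisagree k hk₀ hk

open Classical in
theorem IsEquitableLabelling.isPackingFrame (h : IsEquitableLabelling G χ η p)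
    (hsz : PackingSizes (Fintype.card V) η p r q s δ Δ d κ m) :
    IsPackingFrame G (fun v => (χ v).2.2) (core χ)
      (fun l v w => G v w ∧ CellFree l (χ v) (χ w))
      (fun l v w => G v w ∧ CellLinked l (χ v) (χ w)) δ Δ d κ where
  adj_of_forest _ _ _ hB := hB.1
  adj_of_connecting _ _ _ hC := hC.1
  eq_of_forest _ _ _ _ hB hB' := hB.2.2.2.2.symm.trans hB'.2.2.2.2
  eq_of_connecting _ _ _ _ hC hC' := hC.2.unique hC'.2
  not_connecting _ _ _ _ hB hC := hC.2.not_cellFree hB.2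
  degrees l e _ := h.hasDegreesBetween hsz l e
  regular := h.isAlmostRegularOn_core hsz
  le_out l v hv := (h.out v).le_card_of_core hsz hv (i := 1) (by decide)
    fun w hw hcore hagree => by
      rw [Finset.mem_filter_univ] at hw
      simp only [Finset.mem_filter]
      exact ⟨hcore, hw, Or.inr (Or.inl ⟨mem_core.not.1 hv, mem_core.1 hcore, hagree.symm⟩)⟩
  le_into l v hv := (h.into v).le_card_of_core hsz hv (i := 2) (by decide)
    fun w hw hcore hagree => by
      rw [Finset.mem_filter_univ] at hw
      simp only [Finset.mem_filter]
      exact ⟨hcore, hw, Or.inr (Or.inr ⟨mem_core.1 hcore, mem_core.not.1 hv, hagree⟩)⟩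

end Frame

theorem IsEquitableLabelling.exists_isHamPacking [Fact s.Prime] [Nonempty V] (hs : s ≠ 2)
    (h : IsEquitableLabelling G χ η p) (hη : η ≤ 1) (hG : IsOriented G)
    (hsz : PackingSizes (Fintype.card V) η p r q s δ Δ d κ m)
    (hm : (Fintype.card V : ℝ) ^ 2 * (995 / 1000) ^ m < 1) :
    ∃ (N : ℕ) (f : Fin N → ZMod (Fintype.card V) → V),
      r * q * ((s - 1) * (Δ - s * (Δ - δ))) ≤ N ∧
      IsHamPacking (fun _ => G) Finset.univ f := by
  have hpack := (h.isPackingFrame hsz).exists_isHamPacking hs hG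
    (fun e => by convert h.mul_card_level_le hη e) hsz.le_paths hsz.le_deleted
    (fun l => Nat.cast_le.1 (hsz.le_core.trans (h.card_core l).1)) fun l => by
      refine lt_of_le_of_lt (mul_le_mul_of_nonneg_right ?_ (by positivity)) hm
      have : (#(core χ l) : ℝ) ≤ Fintype.card V := Nat.cast_le.2 (Finset.card_le_univ _)
      gcongr
  simpa only [Fintype.card_prod, ZMod.card] using hpack

end Labelling

section Parameters

theorem one_sub_div_mul_pow_le_pred_pow {q : ℕ} (hq : 1 ≤ q) (k : ℕ) :
    (1 - k / q : ℝ) * q ^ k ≤ ((q - 1) ^ k : ℕ) := by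
  have hq' : (1 : ℝ) ≤ q := Nat.one_le_cast.2 hq
  have hinv : (1 : ℝ) / q ≤ 1 := (div_le_one (by linarith)).2 hq'
  calc (1 - k / q : ℝ) * q ^ k = (1 + k * -(1 / q : ℝ)) * q ^ k := by ring
    _ ≤ (1 + -(1 / q : ℝ)) ^ k * q ^ k := by
      gcongr
      exact one_add_mul_le_pow (by linarith) k
    _ = ((q - 1) ^ k : ℕ) := by
      rw [← mul_pow]
      push_cast [Nat.cast_sub hq]
      congr 1
      field_simp
      ring

theorem one_sub_div_mul_pow_le_sub_two_mul {q k : ℕ} (hq : 2 ≤ q) (hk : k ≤ q) :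
    (1 - (k + 2) / q : ℝ) * q ^ (k + 1) ≤ ((q - 2) * (q - 1) ^ k : ℕ) := by
  have hq' : (2 : ℝ) ≤ q := by exact_mod_cast hq
  have hq0 : (0 : ℝ) < q := by linarith
  have : (k : ℝ) / q ≤ 1 := (div_le_one hq0).2 (Nat.cast_le.2 hk)
  have hprod : (1 - (k + 2) / q : ℝ) ≤ (1 - 2 / q) * (1 - k / q) := by
    have : (0 : ℝ) ≤ 2 / q * (k / q) := by positivity
    rw [add_div]
    linarith
  calc (1 - (k + 2) / q : ℝ) * q ^ (k + 1) ≤ (1 - 2 / q) * (1 - k / q) * q ^ (k + 1) := by gcongr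
    _ = (q - 2) * ((1 - k / q) * q ^ k) := by
      field_simp
      ring
    _ ≤ (q - 2) * ((q - 1) ^ k : ℕ) := by
      refine mul_le_mul_of_nonneg_left ?_ (by linarith)
      exact one_sub_div_mul_pow_le_pred_pow (by omega) k
    _ = ((q - 2) * (q - 1) ^ k : ℕ) := by push_cast [Nat.cast_sub hq]; rfl

section CellClasses

variable {r q s n : ℕ} {p : ℝ}

theorem mul_card_core_eq (hr : r ≠ 0) (hq : q ≠ 0)
    (hp : (n : ℝ) = p * (q ^ (3 * r) * (r * q * s) : ℕ)) :
    p * (q ^ (3 * r - 1) * (r * q * s) : ℕ) = n / q := by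
  rw [eq_div_iff (Nat.cast_ne_zero.2 hq), hp, ← pow_sub_one_mul (n := 3 * r) (by omega) q]
  push_cast
  ring

theorem le_mul_card_agree (hr : r ≠ 0) (hq : q ≠ 0) (hp0 : 0 ≤ p)
    (hp : (n : ℝ) = p * (q ^ (3 * r) * (r * q * s) : ℕ)) :
    (1 - 3 * r / q : ℝ) * (n / q) ≤ p * ((q - 1) ^ (3 * r - 1) * (r * q * s) : ℕ) := by
  have hk : ((3 * r - 1 : ℕ) : ℝ) ≤ 3 * r := by exact_mod_cast Nat.sub_le (3 * r) 1
  calc (1 - 3 * r / q : ℝ) * (n / q)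
      ≤ (1 - ((3 * r - 1 : ℕ) : ℝ) / q) * (n / q) := by gcongr
    _ = p * ((1 - ((3 * r - 1 : ℕ) : ℝ) / q) * q ^ (3 * r - 1) * (r * q * s : ℕ)) := by
      rw [← mul_card_core_eq hr hq hp]
      push_cast
      ring
    _ ≤ p * (((q - 1) ^ (3 * r - 1) : ℕ) * (r * q * s : ℕ)) := by
      gcongr
      exact one_sub_div_mul_pow_le_pred_pow (Nat.one_le_iff_ne_zero.2 hq) _
    _ = p * ((q - 1) ^ (3 * r - 1) * (r * q * s) : ℕ) := by push_cast; rfl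

theorem le_mul_card_pool (hr : r ≠ 0) (hq : 6 * r ≤ q) (hp0 : 0 ≤ p)
    (hp : (n : ℝ) = p * (q ^ (3 * r) * (r * q * s) : ℕ)) :
    n / q / (2 * q) ≤ p * ((q - 1) ^ (3 * r - 2) * (r * q * s) : ℕ) := by
  have hq0 : (0 : ℝ) < q := Nat.cast_pos.2 (by omega)
  have hhalf : (1 / 2 : ℝ) ≤ 1 - (3 * r - 2 : ℕ) / q := by
    rw [le_sub_comm, div_le_iff₀ hq0]
    have : ((2 * (3 * r - 2) : ℕ) : ℝ) ≤ q := Nat.cast_le.2 (by omega)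
    push_cast at this
    linarith
  calc (n : ℝ) / q / (2 * q) = p * (1 / 2 * q ^ (3 * r - 2) * (r * q * s : ℕ)) := by
        rw [← mul_card_core_eq hr (by omega) hp,
          (by omega : 3 * r - 1 = 3 * r - 2 + 1), pow_succ]
        push_cast
        field_simp
    _ ≤ p * ((1 - (3 * r - 2 : ℕ) / q) * q ^ (3 * r - 2) * (r * q * s : ℕ)) := by gcongr
    _ ≤ p * (((q - 1) ^ (3 * r - 2) : ℕ) * (r * q * s : ℕ)) := by
      gcongr
      exact one_sub_div_mul_pow_le_pred_pow (by omega) _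
    _ = p * ((q - 1) ^ (3 * r - 2) * (r * q * s) : ℕ) := by push_cast; rfl

theorem le_mul_card_disagree (hr : r ≠ 0) (hq : 3 * r ≤ q) (hp0 : 0 ≤ p)
    (hp : (n : ℝ) = p * (q ^ (3 * r) * (r * q * s) : ℕ)) :
    (1 - (3 * r + 1) / q) * n ≤ p * ((q - 2) * (q - 1) ^ (3 * r - 1) : ℕ) * (r * q * s) := by
  have hk : ((3 * r - 1 : ℕ) : ℝ) + 2 = 3 * r + 1 := by
    exact_mod_cast (by omega : 3 * r - 1 + 2 = 3 * r + 1)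
  have hpow := one_sub_div_mul_pow_le_sub_two_mul (q := q) (k := 3 * r - 1) (by omega) (by omega)
  rw [hk, Nat.sub_add_cancel (by omega)] at hpow
  calc (1 - (3 * r + 1) / q) * (n : ℝ)
      = p * ((1 - (3 * r + 1) / q) * q ^ (3 * r)) * (r * q * s) := by
        rw [hp]
        push_cast
        ring
    _ ≤ p * ((q - 2) * (q - 1) ^ (3 * r - 1) : ℕ) * (r * q * s) := by gcongr

theorem mul_card_disagree_le (hr : r ≠ 0) (hp0 : 0 ≤ p)
    (hp : (n : ℝ) = p * (q ^ (3 * r) * (r * q * s) : ℕ)) :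
    p * ((q - 2) * (q - 1) ^ (3 * r - 1) : ℕ) * (r * q * s) ≤ n := by
  have hpow : (q - 2) * (q - 1) ^ (3 * r - 1) ≤ q ^ (3 * r) := by
    rw [← mul_pow_sub_one (n := 3 * r) (by omega) q]
    exact Nat.mul_le_mul (Nat.sub_le _ _) (Nat.pow_le_pow_left (Nat.sub_le _ _) _)
  calc p * ((q - 2) * (q - 1) ^ (3 * r - 1) : ℕ) * (r * q * s)
      ≤ p * (q ^ (3 * r) : ℕ) * (r * q * s) := by gcongr
    _ = n := by
      rw [hp]
      push_cast
      ring

end CellClasses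

/-- The hierarchy `1 / n ≪ η ≪ 1 / s ≪ 1 / q ≪ 1 / r ≪ 1` of parameters. The conditions on `η₁`
make sure that the Hamilton cycles cover all but a proportion `η₁` of the edges, `linear_lt_exp`
allows an equitable labelling by cells, and `sq_mul_pow_lt_one` allows a greedy choice of matchings
which serve all pairs of vertices. -/
structure ParameterHierarchy (η₁ η : ℝ) (r q s n : ℕ) : Prop where
  r_large : 10 ^ 13 ≤ (r : ℝ)
  q_large : 10 ^ 14 * r ≤ (q : ℝ)
  s_large : 1000 * q ^ 2 ≤ (s : ℝ)
  eta_pos : 0 < η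
  eta_small : η * s ≤ 1 / 1000
  n_large : 10 ^ 13 * q ^ 2 * s ≤ (n : ℝ)
  le_mul_s : 10 ≤ η₁ * s
  le_mul_q : 10 * (3 * r + 1) ≤ η₁ * q
  mul_eta_le : 10 * (η * s) ≤ η₁
  le_mul_n : 10 * (r * q * s ^ 2) ≤ η₁ * n
  linear_lt_exp : 2 * (2 * n + 1) * ((q ^ (3 * r) * (r * q * s) : ℕ) : ℝ) <
    Real.exp ((η / (2 * (q ^ (3 * r) * (r * q * s) : ℕ))) ^ 2 / 4 * n)
  sq_mul_pow_lt_one : (n : ℝ) ^ 2 * (995 / 1000) ^ (n / (2 * 10 ^ 9 * q)) < 1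

namespace ParameterHierarchy

variable {η₁ η : ℝ} {r q s n : ℕ}

theorem pow_le_q (h : ParameterHierarchy η₁ η r q s n) : 10 ^ 27 ≤ (q : ℝ) := by
  linarith [h.r_large, h.q_large]

theorem pow_le_s (h : ParameterHierarchy η₁ η r q s n) : 10 ^ 27 ≤ (s : ℝ) := by
  have : (q : ℝ) ≤ q ^ 2 := le_self_pow₀ (by linarith [h.pow_le_q]) two_ne_zero
  linarith [h.s_large, h.pow_le_q]

theorem r_pos (h : ParameterHierarchy η₁ η r q s n) : 0 < r :=
  Nat.cast_pos.1 ((by norm_num : (0 : ℝ) < 10 ^ 13).trans_le h.r_large)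

theorem q_pos (h : ParameterHierarchy η₁ η r q s n) : 0 < q :=
  Nat.cast_pos.1 ((by norm_num : (0 : ℝ) < 10 ^ 27).trans_le h.pow_le_q)

theorem s_pos (h : ParameterHierarchy η₁ η r q s n) : 0 < s :=
  Nat.cast_pos.1 ((by norm_num : (0 : ℝ) < 10 ^ 27).trans_le h.pow_le_s)

theorem six_mul_r_le_q (h : ParameterHierarchy η₁ η r q s n) : 6 * r ≤ q := by
  have : (0 : ℝ) ≤ r := Nat.cast_nonneg r
  have : ((6 * r : ℕ) : ℝ) ≤ q := by
    push_cast
    linarith [h.q_large]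
  exact Nat.cast_le.1 this

theorem eta_le (h : ParameterHierarchy η₁ η r q s n) : η ≤ 1 / 10 ^ 14 := by
  have := mul_le_mul_of_nonneg_left h.pow_le_s h.eta_pos.le
  linarith [h.eta_small]

theorem div_s_le (h : ParameterHierarchy η₁ η r q s n) : (n : ℝ) / s ≤ n / q / q / 1000 := by
  have hq : (0 : ℝ) < q := Nat.cast_pos.2 h.q_pos
  rw [div_div, div_div]
  refine div_le_div_of_nonneg_left (Nat.cast_nonneg n) (by positivity) ?_
  linarith [h.s_large]

theorem div_q_div_q_le (h : ParameterHierarchy η₁ η r q s n) :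
    (n : ℝ) / q / q ≤ n / q / 10 ^ 27 := by
  have := h.pow_le_q
  gcongr

theorem mul_s_le (h : ParameterHierarchy η₁ η r q s n) : 10 ^ 13 * (s : ℝ) ≤ n / q / q := by
  have hq : (0 : ℝ) < q := Nat.cast_pos.2 h.q_pos
  rw [le_div_iff₀ hq, le_div_iff₀ hq]
  linarith [h.n_large]

theorem le_div_s (h : ParameterHierarchy η₁ η r q s n) {t : ℝ} (ht0 : 0 ≤ t)
    (ht : t * (r * q * s) ≤ n) : t ≤ n / s := by
  have hs : (0 : ℝ) < s := Nat.cast_pos.2 h.s_pos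
  have hrq : (1 : ℝ) ≤ r * q :=
    one_le_mul_of_one_le_of_one_le (by linarith [h.r_large]) (by linarith [h.pow_le_q])
  rw [le_div_iff₀ hs]
  calc t * s = 1 * (t * s) := (one_mul _).symm
    _ ≤ r * q * (t * s) := by gcongr
    _ ≤ n := by linarith

theorem s_mul_le (h : ParameterHierarchy η₁ η r q s n) {t : ℝ} (ht : t * (r * q * s) ≤ n) :
    s * t ≤ n / q / 10 ^ 13 := by
  have hr : (0 : ℝ) < r := Nat.cast_pos.2 h.r_pos
  have hq : (0 : ℝ) < q := Nat.cast_pos.2 h.q_pos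
  have hr' := h.r_large
  calc s * t ≤ n / q / r := by
        rw [le_div_iff₀ hr, le_div_iff₀ hq]
        linarith
    _ ≤ n / q / 10 ^ 13 := by gcongr

theorem s_mul_eta_mul_le (h : ParameterHierarchy η₁ η r q s n) {t : ℝ} (ht0 : 0 ≤ t) :
    s * (2 * η * t + 2) ≤ t + 2 * s := by
  have := mul_le_mul_of_nonneg_right h.eta_small ht0
  linarith

variable {δ Δ d κ : ℕ} {t w : ℝ}

theorem le_pool (h : ParameterHierarchy η₁ η r q s n) (ht0 : 0 ≤ t) (ht : t * (r * q * s) ≤ n)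
    (hκ : κ ≤ 3 * (n / s : ℝ) + 1) (hΔ : Δ ≤ (1 / 2 + η) * t + 1)
    (hδΔ : ((Δ - δ : ℕ) : ℝ) ≤ 2 * η * t + 2) (hw : n / q / (2 * q) ≤ w) :
    ((2 * κ + (Δ + s * (Δ - δ)) : ℕ) : ℝ) ≤ (1 / 2 - η) * w := by
  have hη := h.eta_le
  have htu := h.le_div_s ht0 ht
  have hηt : η * t ≤ 1 * t := by gcongr; linarith
  have hspread : (s * (Δ - δ : ℕ) : ℝ) ≤ t + 2 * s := by
    refine le_trans ?_ (h.s_mul_eta_mul_le ht0)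
    gcongr
  have hs := h.pow_le_s
  have hsmall : 20 * (n / s : ℝ) + 5 * s ≤ n / q / q / 8 := by
    linarith [h.div_s_le, h.mul_s_le]
  calc ((2 * κ + (Δ + s * (Δ - δ)) : ℕ) : ℝ) ≤ 20 * (n / s : ℝ) + 5 * s := by
        push_cast
        linarith
    _ ≤ n / q / q / 8 := hsmall
    _ = 1 / 4 * (n / q / (2 * q)) := by ring
    _ ≤ (1 / 2 - η) * w := by
      gcongr
      · linarith
      · linarith

theorem le_deleted (h : ParameterHierarchy η₁ η r q s n) (ht0 : 0 ≤ t) (ht : t * (r * q * s) ≤ n)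
    (hκ : κ ≤ 3 * (n / s : ℝ) + 1) (hΔ : Δ ≤ (1 / 2 + η) * t + 1)
    (hd : d ≤ (n / q / 10 ^ 13 : ℝ) + 1) :
    200 * (1 + κ + (d + 2 * (s * Δ))) ≤ n / (2 * 10 ^ 9 * q) := by
  have hsΔ : (s : ℝ) * Δ ≤ n / q / 10 ^ 13 + s := by
    have hη : (1 / 2 + η) * t ≤ 1 * t := by gcongr; linarith [h.eta_le]
    calc (s : ℝ) * Δ ≤ s * (t + 1) := by gcongr; linarith
      _ ≤ n / q / 10 ^ 13 + s := by linarith [h.s_mul_le ht]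
  have hfloor : (n : ℝ) / q / (2 * 10 ^ 9) - 1 ≤ (n / (2 * 10 ^ 9 * q) : ℕ) := by
    rw [← Nat.floor_div_eq_div (K := ℝ), div_div, mul_comm (q : ℝ)]
    exact_mod_cast (Nat.sub_one_lt_floor (n / (2 * 10 ^ 9 * q : ℕ) : ℝ)).le
  refine Nat.cast_le.1 (le_trans ?_ hfloor)
  push_cast
  linarith [h.div_s_le, h.div_q_div_q_le, h.mul_s_le, h.pow_le_s]

theorem deleted_le (h : ParameterHierarchy η₁ η r q s n) :
    ((10 ^ 9 * (n / (2 * 10 ^ 9 * q)) : ℕ) : ℝ) ≤ (1 - η) * (n / q) := by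
  have hη : (1 / 2 : ℝ) ≤ 1 - η := by linarith [h.eta_le]
  calc ((10 ^ 9 * (n / (2 * 10 ^ 9 * q)) : ℕ) : ℝ) ≤ 10 ^ 9 * (n / (2 * 10 ^ 9 * q : ℕ)) := by
        rw [Nat.cast_mul, Nat.cast_pow, Nat.cast_ofNat]
        exact mul_le_mul_of_nonneg_left Nat.cast_div_le (by positivity)
    _ = 1 / 2 * (n / q : ℝ) := by
        push_cast
        ring
    _ ≤ (1 - η) * (n / q) := by gcongr

theorem exists_irregularity (h : ParameterHierarchy η₁ η r q s n)
    (hw : (1 - 3 * r / q) * (n / q) ≤ w) :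
    ∃ d : ℕ, (1 + η) * (n / q : ℝ) ≤ 2 * ((1 / 2 - η) * w) + d ∧
      d ≤ (n / q / 10 ^ 13 : ℝ) + 1 := by
  have hη := h.eta_le
  have hrq : 3 * r / q ≤ (3 / 10 ^ 14 : ℝ) := by
    rw [div_le_iff₀ (Nat.cast_pos.2 h.q_pos)]
    linarith [h.q_large]
  have hgap : (1 + η) * (n / q : ℝ) - 2 * ((1 / 2 - η) * w) ≤ n / q / 10 ^ 13 := by
    have hw' : (1 - 2 / 10 ^ 14 : ℝ) * ((1 - 3 / 10 ^ 14) * (n / q)) ≤ (1 - 2 * η) * w := by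
      refine le_trans ?_ (mul_le_mul_of_nonneg_left hw (by linarith))
      gcongr <;> linarith
    have hη' : η * (n / q : ℝ) ≤ 1 / 10 ^ 14 * (n / q) := by gcongr
    have : (0 : ℝ) ≤ n / q := by positivity
    linarith
  refine ⟨⌈(1 + η) * (n / q : ℝ) - 2 * ((1 / 2 - η) * w)⌉₊, ?_, ?_⟩
  · linarith [Nat.le_ceil ((1 + η) * (n / q : ℝ) - 2 * ((1 / 2 - η) * w))]
  · exact (Nat.cast_le.2 (Nat.ceil_mono hgap)).trans (Nat.ceil_lt_add_one (by positivity)).le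

theorem le_packing_count (h : ParameterHierarchy η₁ η r q s n) (ht0 : 0 ≤ t)
    (ht : t * (r * q * s) ≤ n) (hle : (1 - (3 * r + 1) / q) * n ≤ t * (r * q * s))
    (hΔ : (1 / 2 + η) * t ≤ Δ) (hδΔ : ((Δ - δ : ℕ) : ℝ) ≤ 2 * η * t + 2) :
    (1 / 2 - η₁) * n ≤ (r * q * ((s - 1) * (Δ - s * (Δ - δ))) : ℕ) := by
  have hq : (0 : ℝ) < q := Nat.cast_pos.2 h.q_pos
  have hs : (1 : ℝ) ≤ s := by linarith [h.pow_le_s]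
  have hη := h.eta_pos
  have hn : (0 : ℝ) ≤ n := Nat.cast_nonneg n
  have hη₁ : 0 ≤ η₁ := by linarith [h.mul_eta_le, mul_pos hη (zero_lt_one.trans_le hs)]
  have hX : (1 / 2 - 2 * (η * s)) * t - 2 * s ≤ (Δ - s * (Δ - δ) : ℕ) := by
    have hsub : (Δ : ℝ) ≤ (Δ - s * (Δ - δ) : ℕ) + s * (Δ - δ : ℕ) := by exact_mod_cast le_tsub_add
    have hmul : (s * (Δ - δ : ℕ) : ℝ) ≤ s * (2 * η * t + 2) := by gcongr
    have hηt : 0 ≤ η * t := mul_nonneg hη.le ht0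
    linarith
  have hlevel : t * (r * q) ≤ η₁ / 10 * n := by
    calc t * (r * q) = t * (r * q) * 1 := (mul_one _).symm
      _ ≤ t * (r * q) * (η₁ / 10 * s) := by gcongr; linarith [h.le_mul_s]
      _ = η₁ / 10 * (t * (r * q * s)) := by ring
      _ ≤ η₁ / 10 * n := by gcongr
  have hoverlap : (3 * r + 1 : ℝ) / q * n ≤ η₁ / 10 * n := by
    refine mul_le_mul_of_nonneg_right ?_ hn
    rw [div_le_iff₀ hq]
    linarith [h.le_mul_q]
  have hdeviation : η * s * n ≤ η₁ / 10 * n := by gcongr; linarith [h.mul_eta_le]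
  calc (1 / 2 - η₁) * n ≤ (1 / 2 - 2 * (η * s)) * (n - η₁ / 5 * n) - 2 * (r * q * s ^ 2) := by
        have : 0 ≤ η * s * (η₁ / 5 * n) := by positivity
        linarith [h.le_mul_n]
    _ ≤ (1 / 2 - 2 * (η * s)) * (t * (r * q * s) - t * (r * q)) - 2 * (r * q * s * (s - 1)) := by
        have hc := h.eta_small
        have hrqs : (0 : ℝ) ≤ r * q * s := by positivity
        have := mul_le_mul_of_nonneg_left
          (by linarith : n - η₁ / 5 * n ≤ t * (r * q * s) - t * (r * q))
          (by linarith : 0 ≤ 1 / 2 - 2 * (η * s))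
        linarith
    _ = r * q * ((s - 1) * ((1 / 2 - 2 * (η * s)) * t - 2 * s)) := by ring
    _ ≤ r * q * ((s - 1) * (Δ - s * (Δ - δ) : ℕ)) := by gcongr
    _ = (r * q * ((s - 1) * (Δ - s * (Δ - δ))) : ℕ) := by push_cast [Nat.cast_sub h.s_pos]; rfl

end ParameterHierarchy

theorem exists_degree_window {η t : ℝ} (hη0 : 0 ≤ η) (hη : η ≤ 1 / 2) (ht : 0 ≤ t) :
    ∃ δ Δ : ℕ, δ ≤ (1 / 2 - η) * t ∧ (1 / 2 + η) * t ≤ Δ ∧ Δ ≤ (1 / 2 + η) * t + 1 ∧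
      ((Δ - δ : ℕ) : ℝ) ≤ 2 * η * t + 2 := by
  have hδ : (⌊(1 / 2 - η) * t⌋₊ : ℝ) ≤ (1 / 2 - η) * t :=
    Nat.floor_le (mul_nonneg (by linarith) ht)
  have hδ' : (1 / 2 - η) * t < ⌊(1 / 2 - η) * t⌋₊ + 1 := Nat.lt_floor_add_one _
  have hΔ : (1 / 2 + η) * t ≤ ⌈(1 / 2 + η) * t⌉₊ := Nat.le_ceil _
  have hΔ' : (⌈(1 / 2 + η) * t⌉₊ : ℝ) < (1 / 2 + η) * t + 1 := Nat.ceil_lt_add_one (by positivity)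
  have hηt : 0 ≤ η * t := mul_nonneg hη0 ht
  refine ⟨_, _, hδ, hΔ, hΔ'.le, ?_⟩
  rw [Nat.cast_sub (Nat.cast_le.1 (by linarith : (_ : ℝ) ≤ _))]
  linarith

theorem ParameterHierarchy.exists_packingSizes {η₁ η p : ℝ} {r q s n : ℕ}
    (h : ParameterHierarchy η₁ η r q s n)
    (hp : (n : ℝ) = p * (q ^ (3 * r) * (r * q * s) : ℕ)) :
    ∃ δ Δ d κ : ℕ, PackingSizes n η p r q s δ Δ d κ (n / (2 * 10 ^ 9 * q)) ∧
      (1 / 2 - η₁) * n ≤ (r * q * ((s - 1) * (Δ - s * (Δ - δ))) : ℕ) := by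
  obtain ⟨hr0, hq0, hs0⟩ := And.intro h.r_pos (And.intro h.q_pos h.s_pos)
  have hp0 : 0 ≤ p := by
    have : (0 : ℝ) < (q ^ (3 * r) * (r * q * s) : ℕ) := by positivity
    exact nonneg_of_mul_nonneg_left (hp ▸ Nat.cast_nonneg n) this
  have hq := h.six_mul_r_le_q
  have ht := mul_card_disagree_le hr0.ne' hp0 hp
  have hle := le_mul_card_disagree hr0.ne' (by omega) hp0 hp
  have ht0 : 0 ≤ p * ((q - 2) * (q - 1) ^ (3 * r - 1) : ℕ) := by positivity
  obtain ⟨δ, Δ, hδ, hΔ, hΔ', hδΔ⟩ :=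
    exists_degree_window h.eta_pos.le (h.eta_le.trans (by norm_num)) ht0
  obtain ⟨d, hd, hd'⟩ := h.exists_irregularity (le_mul_card_agree hr0.ne' hq0.ne' hp0 hp)
  have hs : (0 : ℝ) < s := Nat.cast_pos.2 hs0
  have hκ : (3 * n : ℝ) ≤ s * ⌈3 * (n / s : ℝ)⌉₊ := by
    rw [← div_le_iff₀' hs, mul_div_assoc]
    exact Nat.le_ceil _
  have hκ' : (⌈3 * (n / s : ℝ)⌉₊ : ℝ) ≤ 3 * (n / s : ℝ) + 1 :=
    (Nat.ceil_lt_add_one (by positivity)).le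
  refine ⟨δ, Δ, d, ⌈3 * (n / s : ℝ)⌉₊, ⟨?_, ?_, by exact_mod_cast hκ, ?_, ?_,
    h.le_deleted ht0 ht hκ' hΔ' hd', ?_⟩, h.le_packing_count ht0 ht hle hΔ hδΔ⟩
  · rwa [mul_assoc]
  · rwa [mul_assoc]
  · rwa [mul_assoc, mul_card_core_eq hr0.ne' hq0.ne' hp, mul_assoc]
  · rw [mul_assoc]
    exact h.le_pool ht0 ht hκ' hΔ' hδΔ (le_mul_card_pool hr0.ne' hq hp0 hp)
  · rw [mul_assoc (1 - η), mul_card_core_eq hr0.ne' hq0.ne' hp]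
    exact h.deleted_le

end Parameters

section Main

open Filter

variable {V J : Type*} {G : V → V → Prop} {η p : ℝ}

theorem IsEquidistributed.of_deviation [Fintype J] {χ : V → J} {A : Finset V} {b : ℝ}
    (hχ : ∀ j, |deviation χ A j| ≤ η / 2 * p)
    (hA : |(#A : ℝ) / Fintype.card J - b * p| ≤ η / 2 * p) :
    IsEquidistributed χ A ((b - η) * p) ((b + η) * p) := by
  classical
  have hclass : ∀ j, (b - η) * p ≤ #{w ∈ A | χ w = j} ∧
      (#{w ∈ A | χ w = j} : ℝ) ≤ (b + η) * p := fun j => by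
    have hj := abs_le.1 (hχ j)
    rw [deviation] at hj
    rw [abs_le] at hA
    constructor <;> linarith
  intro S
  rw [← Finset.sum_card_fiberwise_eq_card_filter, Nat.cast_sum, mul_comm _ (#S : ℝ),
    mul_comm _ (#S : ℝ), ← nsmul_eq_mul, ← nsmul_eq_mul]
  exact ⟨Finset.card_nsmul_le_sum _ _ _ fun j _ => (hclass j).1,
    Finset.sum_le_card_nsmul _ _ _ fun j _ => (hclass j).2⟩

theorem exists_isEquidistributed {ι : Type*} [Fintype V] [Fintype J] [Nonempty J] [Fintype ι]
    (hη0 : 0 < η) (hη1 : η ≤ 1) (hp : (Fintype.card V : ℝ) = p * Fintype.card J)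
    (A : ι → Finset V) (b : ι → ℝ)
    (hA : ∀ t, |(#(A t) : ℝ) - b t * Fintype.card V| ≤ η / 2 * Fintype.card V)
    (hn : 2 * Fintype.card ι * (Fintype.card J : ℝ) <
      Real.exp ((η / (2 * Fintype.card J)) ^ 2 / 4 * Fintype.card V)) :
    ∃ χ : V → J, ∀ t, IsEquidistributed χ (A t) ((b t - η) * p) ((b t + η) * p) := by
  have hJ : (1 : ℝ) ≤ Fintype.card J := Nat.one_le_cast.2 Fintype.card_pos
  have hJ0 : (0 : ℝ) < Fintype.card J := by linarith
  obtain ⟨χ, hχ⟩ := exists_even_partition (J := J) A (by positivity : 0 < η / (2 * Fintype.card J))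
    ((div_le_one (by positivity)).2 (by linarith)) hn
  have hε : η / (2 * Fintype.card J) * Fintype.card V = η / 2 * p := by
    rw [hp]
    field_simp
  refine ⟨χ, fun t => .of_deviation (fun j => hε ▸ hχ t j) ?_⟩
  have hmean : (#(A t) : ℝ) - b t * Fintype.card V =
      (#(A t) / Fintype.card J - b t * p) * Fintype.card J := by
    rw [hp]
    field_simp
  have hAt := hA t
  rw [hmean, abs_mul, abs_of_pos hJ0, hp, ← mul_assoc] at hAt
  exact le_of_mul_le_mul_right hAt hJ0

open Classical in
theorem exists_isEquitableLabelling [Fintype V] [Fintype J] [Nonempty J] (hη0 : 0 < η) (hη1 : η ≤ 1)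
    (hp : (Fintype.card V : ℝ) = p * Fintype.card J)
    (hout : ∀ x, |(#{w | G x w} : ℝ) - 1 / 2 * Fintype.card V| ≤ η / 2 * Fintype.card V)
    (hinto : ∀ x, |(#{w | G w x} : ℝ) - 1 / 2 * Fintype.card V| ≤ η / 2 * Fintype.card V)
    (hn : 2 * (2 * Fintype.card V + 1) * (Fintype.card J : ℝ) <
      Real.exp ((η / (2 * Fintype.card J)) ^ 2 / 4 * Fintype.card V)) :
    ∃ χ : V → J, IsEquitableLabelling G χ η p := by
  let A : Option (V ⊕ V) → Finset V :=
    fun t => t.elim Finset.univ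
      (Sum.elim (fun x => Finset.univ.filter (G x)) fun x => Finset.univ.filter (G · x))
  let b : Option (V ⊕ V) → ℝ := fun t => t.elim 1 fun _ => 1 / 2
  obtain ⟨χ, hχ⟩ := exists_isEquidistributed (J := J) hη0 hη1 hp A b
    (by
      rintro (_ | x | x)
      · change |(#(Finset.univ : Finset V) : ℝ) - 1 * Fintype.card V| ≤ _
        rw [Finset.card_univ, one_mul, sub_self, abs_zero]
        positivity
      · exact hout x
      · exact hinto x)
    (by
      rw [Fintype.card_option, Fintype.card_sum, ← two_mul]
      exact_mod_cast hn)
  exact ⟨χ, fun v => hχ (some (Sum.inl v)), fun v => hχ (some (Sum.inr v)), hχ none, hp⟩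

open Classical in
theorem IsOriented.abs_card_sub_half_le [Fintype V] (hG : IsOriented G) {x : V}
    (hout : (1 / 2 - η) * (Fintype.card V : ℝ) ≤ outDeg G x)
    (hinto : (1 / 2 - η) * (Fintype.card V : ℝ) ≤ inDeg G x) :
    |(#{w | G x w} : ℝ) - 1 / 2 * Fintype.card V| ≤ η * Fintype.card V ∧
      |(#{w | G w x} : ℝ) - 1 / 2 * Fintype.card V| ≤ η * Fintype.card V := by
  rw [outDeg, Nat.card_eq_fintype_card, Fintype.card_subtype] at hout
  rw [inDeg, Nat.card_eq_fintype_card, Fintype.card_subtype] at hinto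
  have hsum : (#{w | G x w} : ℝ) + #{w | G w x} ≤ Fintype.card V := by
    have := Finset.card_le_univ (({w | G x w} : Finset V) ∪ ({w | G w x} : Finset V))
    rw [Finset.card_union_of_disjoint (Finset.disjoint_filter.2 fun w _ => hG x w)] at this
    exact_mod_cast this
  constructor <;> rw [abs_le] <;> constructor <;> linarith

theorem eventually_sq_mul_pow_div_lt_one {c : ℝ} (hc0 : 0 ≤ c) (hc1 : c < 1) {Q : ℕ} (hQ : 0 < Q) :
    ∀ᶠ n : ℕ in atTop, (n : ℝ) ^ 2 * c ^ (n / Q) < 1 := by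
  have hlim := ((tendsto_pow_const_mul_const_pow_of_lt_one 2 hc0 hc1).const_mul
    (4 * (Q : ℝ) ^ 2)).comp (Nat.tendsto_div_const_atTop hQ.ne')
  rw [mul_zero] at hlim
  filter_upwards [hlim.eventually_lt_const one_pos, eventually_ge_atTop Q] with n hn hnQ
  have hle : n ≤ 2 * Q * (n / Q) := by
    have hlt := Nat.lt_mul_div_succ n hQ
    have := Nat.mul_le_mul_left Q ((Nat.one_le_div_iff hQ).2 hnQ)
    rw [mul_add] at hlt
    linarith
  have hle' : (n : ℝ) ≤ 2 * Q * (n / Q : ℕ) := by exact_mod_cast hle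
  calc (n : ℝ) ^ 2 * c ^ (n / Q) ≤ (2 * Q * (n / Q : ℕ)) ^ 2 * c ^ (n / Q) := by gcongr
    _ = 4 * Q ^ 2 * ((n / Q : ℕ) ^ 2 * c ^ (n / Q)) := by ring
    _ < 1 := hn

theorem eventually_linear_lt_exp {c : ℝ} (hc : 0 < c) (a b : ℝ) :
    ∀ᶠ n : ℕ in atTop, a * n + b < Real.exp (c * n) := by
  have hlittle := ((isLittleO_pow_exp_pos_mul_atTop 1 hc).const_mul_left a).add
    ((isLittleO_pow_exp_pos_mul_atTop 0 hc).const_mul_left b)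
  filter_upwards [tendsto_natCast_atTop_atTop.eventually (hlittle.bound one_half_pos)] with n hn
  rw [pow_one, pow_zero, mul_one, Real.norm_eq_abs, Real.norm_eq_abs, Real.abs_exp] at hn
  linarith [le_abs_self (a * n + b), Real.exp_pos (c * n)]

theorem exists_parameterHierarchy {η₁ : ℝ} (hη₁ : 0 < η₁) :
    ∃ (η : ℝ) (r q s : ℕ), 0 < η ∧ s.Prime ∧
      ∀ᶠ n in atTop, ParameterHierarchy η₁ η r q s n := by
  obtain ⟨r, hr⟩ := exists_nat_ge (10 ^ 13 : ℝ)
  obtain ⟨q, hq⟩ := exists_nat_ge (max (10 ^ 14 * r : ℝ) (10 * (3 * r + 1) / η₁))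
  obtain ⟨b, hb⟩ := exists_nat_ge (max (1000 * q ^ 2 : ℝ) (10 / η₁))
  obtain ⟨s, hbs, hs⟩ := Nat.exists_infinite_primes b
  have hs' := max_le_iff.1 (hb.trans (Nat.cast_le.2 hbs))
  have hs0 : (0 : ℝ) < s := Nat.cast_pos.2 hs.pos
  obtain ⟨η, hη0, hη⟩ : ∃ η : ℝ, 0 < η ∧ η * s = min (1 / 1000) (η₁ / 10) :=
    ⟨min (1 / 1000) (η₁ / 10) / s, by positivity, div_mul_cancel₀ _ hs0.ne'⟩
  have hr0 : 0 < r := Nat.cast_pos.1 ((by norm_num : (0 : ℝ) < 10 ^ 13).trans_le hr)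
  have hq0 : 0 < q := Nat.cast_pos.1 (lt_of_lt_of_le (by positivity) (max_le_iff.1 hq).1)
  have hg : (0 : ℝ) < (q ^ (3 * r) * (r * q * s) : ℕ) := by
    have := hs.pos
    positivity
  refine ⟨η, r, q, s, hη0, hs, ?_⟩
  set g := q ^ (3 * r) * (r * q * s)
  filter_upwards [tendsto_natCast_atTop_atTop.eventually_ge_atTop (10 ^ 13 * q ^ 2 * s : ℝ),
    tendsto_natCast_atTop_atTop.eventually_ge_atTop (10 * (r * q * s ^ 2) / η₁),
    eventually_linear_lt_exp (by positivity : 0 < (η / (2 * g)) ^ 2 / 4) (4 * g) (2 * g),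
    eventually_sq_mul_pow_div_lt_one (by norm_num : (0 : ℝ) ≤ 995 / 1000) (by norm_num)
      (by positivity : 0 < 2 * 10 ^ 9 * q)] with n hn hn' hexp hpow
  exact
    { r_large := hr
      q_large := (max_le_iff.1 hq).1
      s_large := hs'.1
      eta_pos := hη0
      eta_small := hη.trans_le (min_le_left _ _)
      n_large := hn
      le_mul_s := (div_le_iff₀' hη₁).1 hs'.2
      le_mul_q := (div_le_iff₀' hη₁).1 (max_le_iff.1 hq).2
      mul_eta_le := by linarith [hη.trans_le (min_le_right _ _)]
      le_mul_n := (div_le_iff₀' hη₁).1 hn'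
      linear_lt_exp := by linarith
      sq_mul_pow_lt_one := hpow }

theorem ParameterHierarchy.exists_isHamPacking [Fintype V] {η₁ : ℝ} {r q s : ℕ}
    (h : ParameterHierarchy η₁ η r q s (Fintype.card V)) (hs : s.Prime) (hG : IsOriented G)
    (hdeg : ∀ x, (1 / 2 - η / 2) * (Fintype.card V : ℝ) ≤ outDeg G x ∧
      (1 / 2 - η / 2) * (Fintype.card V : ℝ) ≤ inDeg G x) :
    ∃ (N : ℕ) (f : Fin N → ZMod (Fintype.card V) → V),
      (1 / 2 - η₁) * (Fintype.card V : ℝ) ≤ N ∧ IsHamPacking (fun _ => G) Finset.univ f := by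
  classical
  have : NeZero r := ⟨h.r_pos.ne'⟩
  have : NeZero q := ⟨h.q_pos.ne'⟩
  have : NeZero s := ⟨h.s_pos.ne'⟩
  have : Fact s.Prime := ⟨hs⟩
  have hη : η ≤ 1 := h.eta_le.trans (by norm_num)
  have hs2 : s ≠ 2 := by
    rintro rfl
    exact absurd h.pow_le_s (by norm_num)
  have : Nonempty V := by
    rw [← Fintype.card_pos_iff, ← Nat.cast_pos (α := ℝ)]
    have := h.q_pos
    have := h.s_pos
    exact lt_of_lt_of_le (by positivity) h.n_large
  obtain ⟨p, hp⟩ : ∃ p : ℝ, (Fintype.card V : ℝ) = p * Fintype.card (Cell r q s) :=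
    ⟨_, (div_mul_cancel₀ _ (Nat.cast_ne_zero.2 Fintype.card_ne_zero)).symm⟩
  have hnbr := fun x => hG.abs_card_sub_half_le (hdeg x).1 (hdeg x).2
  obtain ⟨χ, hχ⟩ := exists_isEquitableLabelling (J := Cell r q s) h.eta_pos hη hp
    (fun x => (hnbr x).1) (fun x => (hnbr x).2) (by
      rw [card_cell]
      exact h.linear_lt_exp)
  rw [card_cell] at hp
  obtain ⟨δ, Δ, d, κ, hsizes, hcount⟩ := h.exists_packingSizes hp
  obtain ⟨N, f, hN, hf⟩ := hχ.exists_isHamPacking hs2 hη hG hsizes h.sq_mul_pow_lt_one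
  exact ⟨N, f, hcount.trans (Nat.cast_le.2 hN), hf⟩

end Main

/-- For every η₁ > 0 there exist n₀ and η₂ > 0 such that every oriented graph on n ≥ n₀
vertices with minimum semidegree at least (1/2 − η₂)n contains at least (1/2 − η₁)n
pairwise edge-disjoint Hamilton cycles. -/
theorem oriented_edge_disjoint_hamilton (η₁ : ℝ) (hη₁ : 0 < η₁) :
    ∃ (n₀ : ℕ) (η₂ : ℝ), 0 < η₂ ∧
      ∀ (V : Type) [Fintype V] (G : V → V → Prop),
        IsOriented G →
        n₀ ≤ Fintype.card V →
        (∀ x : V, (1 / 2 - η₂) * (Fintype.card V : ℝ) ≤ (outDeg G x : ℝ) ∧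
          (1 / 2 - η₂) * (Fintype.card V : ℝ) ≤ (inDeg G x : ℝ)) →
        ∃ (m : ℕ) (C : Fin m → ZMod (Fintype.card V) → V),
          (1 / 2 - η₁) * (Fintype.card V : ℝ) ≤ (m : ℝ) ∧
          (∀ j, IsHamCycle G (C j)) ∧
          ∀ j k : Fin m, j ≠ k → ∀ x y : V,
            (∃ i, C j i = x ∧ C j (i + 1) = y) →
            ¬ ∃ i, C k i = x ∧ C k (i + 1) = y := by
  obtain ⟨η, r, q, s, hη, hs, hparameters⟩ := exists_parameterHierarchy hη₁
  obtain ⟨n₀, hn₀⟩ := Filter.eventually_atTop.1 hparameters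
  refine ⟨n₀, η / 2, half_pos hη, fun V _ G hG hV hdeg => ?_⟩
  obtain ⟨m, C, hm, hC⟩ := (hn₀ _ hV).exists_isHamPacking hs hG hdeg
  exact ⟨m, C, hm, fun j => hC.isHamCycle j (Finset.mem_univ j),
    fun j k => hC.disjoint j (Finset.mem_univ j) k (Finset.mem_univ k)⟩
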